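/- Let X be a tree and f : X → X a continuous map. Then f has zero topological entropy, h(f) = 0, if and only if the restriction f|_{CR(f)} has equicontinuous powers at every periodic point of f; that is, for every periodic point p of f and every ε > 0 there is δ > 0 such that every y ∈ CR(f) with d(y,p) < δ satisfies d(f^n(y), f^n(p)) < ε for all n ≥ 0. -/

import Mathlib

open Set Filter Topology Function
open scoped ENNReal

/-- A subset of a topological space is an *arc* if it is homeomorphic to `[0,1]`. -/
def IsArc {X : Type*} [TopologicalSpace X] (A : Set X) : Prop :=
  Nonempty (A ≃ₜ Set.Icc (0 : ℝ) 1)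

/-- A point `p` is an *endpoint* of the arc `A` if `p ∈ A` and `A \ {p}` is connected. -/
def IsArcEndpoint {X : Type*} [TopologicalSpace X] (A : Set X) (p : X) : Prop :=
  p ∈ A ∧ IsConnected (A \ {p})

/-- A subset is a *simple closed curve* if it is homeomorphic to the unit circle. -/
def IsSimpleClosedCurve {X : Type*} [TopologicalSpace X] (S : Set X) : Prop :=
  Nonempty (S ≃ₜ Metric.sphere (0 : ℂ) 1)

/-- A *tree* is a compact connected metric space which is a union of finitely many arcs,
any two of which are disjoint or intersect only in (one or both of) their endpoints,
and which contains no simple closed curve. -/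
def IsTree (X : Type*) [MetricSpace X] : Prop :=
  CompactSpace X ∧ ConnectedSpace X ∧
    (∃ 𝒜 : Finset (Set X), (∀ A ∈ 𝒜, IsArc A) ∧ ⋃₀ (𝒜 : Set (Set X)) = Set.univ ∧
      ∀ A ∈ 𝒜, ∀ B ∈ 𝒜, A ≠ B → ∀ p ∈ A ∩ B, IsArcEndpoint A p ∧ IsArcEndpoint B p) ∧
    ∀ S : Set X, ¬ IsSimpleClosedCurve S

/-- A *dendrite* is a locally connected continuum containing no simple closed curve. -/
def IsDendrite (X : Type*) [MetricSpace X] : Prop :=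
  CompactSpace X ∧ ConnectedSpace X ∧ LocallyConnectedSpace X ∧
    ∀ S : Set X, ¬ IsSimpleClosedCurve S

/-- `𝒰` is a finite open cover of the subset `Y`. -/
def IsOpenCoverOn {X : Type*} [TopologicalSpace X] (Y : Set X) (𝒰 : Finset (Set X)) : Prop :=
  (∀ U ∈ 𝒰, IsOpen U) ∧ Y ⊆ ⋃₀ (𝒰 : Set (Set X))

/-- `N(⋁_{i=1}^n f^{-a_i}(𝒰))`, relative to the subset `Y`: the minimal number `m` of elements
of the join cover `⋁_{i=1}^n f^{-a_i}(𝒰)` needed to cover `Y`. -/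
noncomputable def seqCoverCountOn {X : Type*} (f : X → X) (Y : Set X) (a : ℕ → ℕ)
    (𝒰 : Finset (Set X)) (n : ℕ) : ℕ :=
  sInf { m | ∃ c : Fin m → Fin n → Set X, (∀ j i, c j i ∈ 𝒰) ∧
    Y ⊆ ⋃ j, ⋂ i, f^[a i.1] ⁻¹' c j i }

/-- Topological sequence entropy of `f` restricted to the (invariant) subset `Y`,
with respect to the sequence `a`. -/
noncomputable def seqEntropyOn {X : Type*} [TopologicalSpace X] (f : X → X) (Y : Set X)
    (a : ℕ → ℕ) : ℝ≥0∞ :=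
  ⨆ (𝒰 : Finset (Set X)) (_ : IsOpenCoverOn Y 𝒰),
    Filter.limsup
      (fun n : ℕ => ENNReal.ofReal (Real.log (seqCoverCountOn f Y a 𝒰 n) / n)) Filter.atTop

/-- Topological sequence entropy of `f : X → X` with respect to the sequence `a`. -/
noncomputable def seqEntropy {X : Type*} [TopologicalSpace X] (f : X → X) (a : ℕ → ℕ) : ℝ≥0∞ :=
  seqEntropyOn f Set.univ a

/-- The ordinary topological entropy `h(f)`, i.e. the sequence entropy for `A = (0,1,2,…)`. -/
noncomputable def topEntropy {X : Type*} [TopologicalSpace X] (f : X → X) : ℝ≥0∞ :=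
  seqEntropy f id

/-- `h_∞(f|_Y)`: the supremum over all strictly increasing sequences of positive integers of
the topological sequence entropies of `f` restricted to `Y`. -/
noncomputable def supSeqEntropyOn {X : Type*} [TopologicalSpace X] (f : X → X) (Y : Set X) :
    ℝ≥0∞ :=
  ⨆ (a : ℕ → ℕ) (_ : StrictMono a) (_ : 1 ≤ a 0), seqEntropyOn f Y a

/-- `h_∞(f)`: the supremum of the topological sequence entropies of `f`. -/
noncomputable def supSeqEntropy {X : Type*} [TopologicalSpace X] (f : X → X) : ℝ≥0∞ :=
  supSeqEntropyOn f Set.univ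

/-- The ω-limit set `ω_f(x) = ⋂_n closure {f^k(x) : k ≥ n}`. -/
def omegaLimitSet {X : Type*} [TopologicalSpace X] (f : X → X) (x : X) : Set X :=
  ⋂ n : ℕ, closure ((fun k => f^[k] x) '' Set.Ici n)

/-- `ω(f) = ⋃_x ω_f(x)`. -/
def omegaSet {X : Type*} [TopologicalSpace X] (f : X → X) : Set X :=
  ⋃ x : X, omegaLimitSet f x

/-- The non-wandering set `Ω(f)`. -/
def nonWanderingSet {X : Type*} [TopologicalSpace X] (f : X → X) : Set X :=
  { x | ∀ U : Set X, IsOpen U → x ∈ U → ∃ n, 1 ≤ n ∧ (f^[n] ⁻¹' U ∩ U).Nonempty }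

/-- There is an ε-chain from `x` to `y` under `f`. -/
def EpsChain {X : Type*} [MetricSpace X] (f : X → X) (ε : ℝ) (x y : X) : Prop :=
  ∃ n, 1 ≤ n ∧ ∃ c : ℕ → X, c 0 = x ∧ c n = y ∧ ∀ i < n, dist (f (c i)) (c (i + 1)) < ε

/-- The chain recurrent set `CR(f)`. -/
def chainRecurrentSet {X : Type*} [MetricSpace X] (f : X → X) : Set X :=
  { x | ∀ ε > 0, EpsChain f ε x x }

/-- The chain recurrent set of the restriction `f|_Y`: chain recurrence witnessed by
ε-chains lying entirely inside `Y`. -/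
def chainRecurrentSetOn {X : Type*} [MetricSpace X] (f : X → X) (Y : Set X) : Set X :=
  { x ∈ Y | ∀ ε > 0, ∃ n, 1 ≤ n ∧ ∃ c : ℕ → X, c 0 = x ∧ c n = x ∧
      (∀ i ≤ n, c i ∈ Y) ∧ ∀ i < n, dist (f (c i)) (c (i + 1)) < ε }

/-- `I` is a periodic arc of `f` of period `s`: an arc with `f^s(I) ⊆ I` whose iterates
`I, f(I), …, f^{s-1}(I)` are pairwise disjoint. -/
def IsPeriodicArc {X : Type*} [TopologicalSpace X] (f : X → X) (I : Set X) (s : ℕ) : Prop :=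
  IsArc I ∧ 1 ≤ s ∧ Set.MapsTo f^[s] I I ∧
    ∀ i j, i < j → j < s → Disjoint (f^[i] '' I) (f^[j] '' I)

/-- `Orb_f(I) = I ∪ f(I) ∪ … ∪ f^{s-1}(I)`. -/
def arcOrbit {X : Type*} (f : X → X) (I : Set X) (s : ℕ) : Set X :=
  ⋃ i ∈ Finset.range s, f^[i] '' I

/-- `I` is an independence set for the pair `(U, V)` under `f`. -/
def IsIndepSetPair {X : Type*} (f : X → X) (U V : Set X) (I : Finset ℕ) : Prop :=
  ∀ J ⊆ I, J.Nonempty → ∀ s : ℕ → Bool,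
    (⋂ j ∈ J, f^[j] ⁻¹' (if s j then U else V)).Nonempty

/-- `(x, y)` is an IN-pair of `(X, f)`. -/
def INPair {X : Type*} [TopologicalSpace X] (f : X → X) (x y : X) : Prop :=
  ∀ U ∈ nhds x, ∀ V ∈ nhds y, ∀ m : ℕ, ∃ I : Finset ℕ, m ≤ I.card ∧ IsIndepSetPair f U V I

/-- The set `IN(X, f)` of IN-pairs of `(X, f)`. -/
def INPairs {X : Type*} [TopologicalSpace X] (f : X → X) : Set (X × X) :=
  { p | INPair f p.1 p.2 }

/-- `(x, y)` is an IN-pair of the restricted (sub)system `(Y, f|_Y)`, for `Y` invariant. -/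
def INPairOn {X : Type*} [TopologicalSpace X] (f : X → X) (Y : Set X) (x y : X) : Prop :=
  x ∈ Y ∧ y ∈ Y ∧ ∀ U ∈ nhds x, ∀ V ∈ nhds y, ∀ m : ℕ, ∃ I : Finset ℕ, m ≤ I.card ∧
    ∀ J ⊆ I, J.Nonempty → ∀ s : ℕ → Bool,
      (Y ∩ ⋂ j ∈ J, f^[j] ⁻¹' (if s j then U else V)).Nonempty

/-- `(x, y)` is a Li–Yorke pair for `f`. -/
def LiYorkePair {X : Type*} [MetricSpace X] (f : X → X) (x y : X) : Prop :=
  Filter.liminf (fun n : ℕ => dist (f^[n] x) (f^[n] y)) Filter.atTop = 0 ∧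
    0 < Filter.limsup (fun n : ℕ => dist (f^[n] x) (f^[n] y)) Filter.atTop

/-!
A tree carries a metric in which it is a finite `ℝ`-tree: glue its arcs one at a time as wedges.
In this metric betweenness makes sense, and connected sets meet in connected sets.

Suppose that the powers of `f` are not equicontinuous on `CR(f)` at a periodic point, and pass to a
power `g` fixing this point `p`. Let `Z` be the subtree of the points that `ε`-chains from `p` reach
for every `ε`. If some point of `Z` other than `p` is mapped to `p`, then a maximal invariant
subtree missing such a point is left by an arc that returns to it, and `g` has a horseshoe.
Otherwise `g` acts on the finitely many branches of `Z` at `p`, and a power of `g` maps some branch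
into itself. Points near `p` that escape push this branch outwards, while chain recurrence pulls it
back to `p`; both together give a horseshoe again. So `h(f) > 0`.

Conversely, cut every edge of the tree into `N` cells and code the orbits of `f^[m]` by the cells
they visit. Two different return words of a cell with the same length would give an iterate of `f`
an interval horseshoe, whose homoclinic orbits yield cycles that start arbitrarily near a periodic
point and move a fixed distance away from it; equicontinuity forbids this. Unique return words leave
only polynomially many choices in an itinerary of length `n`, apart from a factor `c ^ (n / m)` for
the visits in which a cell is covered only partially, where `c` depends on the number of edges
alone. Letting `m → ∞` gives `h(f) = 0`.
-/

namespace TreeEntropy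

/-! ### Segments in ℝ-trees -/

section RTree

variable {X : Type*} [MetricSpace X]

/-- The metric segment between `x` and `y`: the points at which the triangle inequality for
`x` and `y` is an equality. In an ℝ-tree it is the arc joining `x` to `y`. -/
def metricSeg (x y : X) : Set X := {z | dist x z + dist z y = dist x y}

/-- An ℝ-tree: metric segments are connected, and every connected set contains the metric segment
between any two of its points. -/
structure IsRTree (X : Type*) [MetricSpace X] : Prop where
  isPreconnected_metricSeg : ∀ x y : X, IsPreconnected (metricSeg x y)
  metricSeg_subset : ∀ S : Set X, IsPreconnected S → ∀ x ∈ S, ∀ y ∈ S, metricSeg x y ⊆ S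

/-- An ℝ-tree with finitely many ends: from any base point `p`, every point is passed on the way
to one of finitely many points, which do not depend on `p`. -/
structure IsFiniteRTree (X : Type*) [MetricSpace X] : Prop extends IsRTree X where
  exists_ends : ∃ V : Finset X, ∀ p x : X, ∃ v ∈ V, x ∈ metricSeg p v

variable {x y z w p : X}

lemma mem_metricSeg : z ∈ metricSeg x y ↔ dist x z + dist z y = dist x y := Iff.rfl

lemma metricSeg_comm (x y : X) : metricSeg x y = metricSeg y x := by
  ext z
  rw [mem_metricSeg, mem_metricSeg, dist_comm x z, dist_comm z y, dist_comm x y, add_comm]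

lemma left_mem_metricSeg (x y : X) : x ∈ metricSeg x y := by simp [mem_metricSeg]

lemma right_mem_metricSeg (x y : X) : y ∈ metricSeg x y := by simp [mem_metricSeg]

lemma isClosed_metricSeg (x y : X) : IsClosed (metricSeg x y) :=
  isClosed_eq (by fun_prop) (by fun_prop)

lemma eq_of_mem_metricSeg_self (h : z ∈ metricSeg x x) : z = x := by
  rw [mem_metricSeg, dist_self, dist_comm z x] at h
  have := @dist_nonneg _ _ x z
  exact (dist_eq_zero.mp (by linarith)).symm

lemma metricSeg_left_subset (h : z ∈ metricSeg x y) : metricSeg x z ⊆ metricSeg x y := by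
  intro w hw
  rw [mem_metricSeg] at *
  have := dist_triangle w z y
  have := dist_triangle x w y
  linarith

lemma metricSeg_right_subset (h : z ∈ metricSeg x y) : metricSeg z y ⊆ metricSeg x y := by
  rw [metricSeg_comm z y, metricSeg_comm x y]
  exact metricSeg_left_subset (metricSeg_comm x y ▸ h)

lemma mem_metricSeg_of_mem_left (h : z ∈ metricSeg x y) (hw : w ∈ metricSeg x z) :
    z ∈ metricSeg w y := by
  rw [mem_metricSeg] at *
  have := dist_triangle w z y
  have := dist_triangle x w y
  linarith

lemma dist_le_of_mem_metricSeg (h : z ∈ metricSeg x y) : dist x z ≤ dist x y := by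
  rw [mem_metricSeg] at h
  have := @dist_nonneg _ _ z y
  linarith

namespace IsRTree

variable (hX : IsRTree X)
include hX

lemma metricSeg_subset_image {Y : Type*} [TopologicalSpace Y] {g : Y → X} {S : Set Y}
    (hS : IsPreconnected S) (hg : ContinuousOn g S) {x y : Y} (hx : x ∈ S) (hy : y ∈ S) :
    metricSeg (g x) (g y) ⊆ g '' S :=
  hX.metricSeg_subset _ (hS.image g hg) _ (mem_image_of_mem g hx) _ (mem_image_of_mem g hy)

lemma metricSeg_subset_image_metricSeg {g : X → X} (hg : Continuous g) (x y : X) :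
    metricSeg (g x) (g y) ⊆ g '' metricSeg x y :=
  hX.metricSeg_subset_image (hX.isPreconnected_metricSeg x y) hg.continuousOn
    (left_mem_metricSeg _ _) (right_mem_metricSeg _ _)

lemma exists_mem_metricSeg_dist_eq {t : ℝ} (h0 : 0 ≤ t) (h1 : t ≤ dist x y) :
    ∃ z ∈ metricSeg x y, dist x z = t :=
  (hX.isPreconnected_metricSeg x y).intermediate_value (left_mem_metricSeg x y)
    (right_mem_metricSeg x y) (f := fun z => dist x z) (by fun_prop)
    (show t ∈ Icc (dist x x) (dist x y) by simp [h0, h1])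

lemma metricSeg_subset_union (x y z : X) : metricSeg x y ⊆ metricSeg x z ∪ metricSeg z y :=
  hX.metricSeg_subset _
    (IsPreconnected.union z (right_mem_metricSeg _ _) (left_mem_metricSeg _ _)
      (hX.isPreconnected_metricSeg _ _) (hX.isPreconnected_metricSeg _ _))
    _ (Or.inl (left_mem_metricSeg _ _)) _ (Or.inr (right_mem_metricSeg _ _))

lemma mem_metricSeg_of_dist_le (hz : z ∈ metricSeg x y) (hw : w ∈ metricSeg x y)
    (h : dist x z ≤ dist x w) : z ∈ metricSeg x w := by
  rcases hX.metricSeg_subset_union x y w hz with hzw | hzw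
  · exact hzw
  · rw [mem_metricSeg] at *
    linarith [dist_comm z w, @dist_nonneg _ _ w z]

lemma dist_eq_abs_sub (hz : z ∈ metricSeg x y) (hw : w ∈ metricSeg x y) :
    dist z w = |dist x z - dist x w| := by
  wlog h : dist x z ≤ dist x w generalizing z w
  · rw [dist_comm, abs_sub_comm]
    exact this hw hz (le_of_not_ge h)
  have := mem_metricSeg.mp (hX.mem_metricSeg_of_dist_le hz hw h)
  rw [abs_sub_comm, abs_of_nonneg (by linarith)]
  linarith

lemma eq_of_dist_eq (hz : z ∈ metricSeg x y) (hw : w ∈ metricSeg x y)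
    (h : dist x z = dist x w) : z = w := by
  rw [← dist_eq_zero, hX.dist_eq_abs_sub hz hw, h, sub_self, abs_zero]

lemma isCompact_metricSeg (x y : X) : IsCompact (metricSeg x y) := by
  let φ : metricSeg x y → ℝ := fun z => dist x z
  have hφ : Isometry φ := Isometry.of_dist_eq fun z w => by
    rw [Subtype.dist_eq, hX.dist_eq_abs_sub z.2 w.2, Real.dist_eq]
  have hrange : φ '' univ = Icc 0 (dist x y) := by
    rw [image_univ]
    refine Subset.antisymm ?_ fun t ht => ?_
    · rintro _ ⟨z, rfl⟩
      exact ⟨dist_nonneg, dist_le_of_mem_metricSeg z.2⟩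
    · obtain ⟨z, hz, hzt⟩ := hX.exists_mem_metricSeg_dist_eq ht.1 ht.2
      exact ⟨⟨z, hz⟩, hzt⟩
  rw [isCompact_iff_isCompact_univ, hφ.isUniformInducing.isInducing.isCompact_iff, hrange]
  exact isCompact_Icc

lemma isPreconnected_iff {S : Set X} :
    IsPreconnected S ↔ ∀ x ∈ S, ∀ y ∈ S, metricSeg x y ⊆ S :=
  ⟨hX.metricSeg_subset S, fun h => isPreconnected_of_forall_pair fun x hx y hy =>
    ⟨metricSeg x y, h x hx y hy, left_mem_metricSeg _ _, right_mem_metricSeg _ _,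
      hX.isPreconnected_metricSeg x y⟩⟩

lemma isPreconnected_inter {S T : Set X} (hS : IsPreconnected S) (hT : IsPreconnected T) :
    IsPreconnected (S ∩ T) := by
  rw [hX.isPreconnected_iff] at *
  exact fun x hx y hy => subset_inter (hS x hx.1 y hy.1) (hT x hx.2 y hy.2)

lemma mem_of_mem_metricSeg_of_mem_closure {O : Set X} (hO : IsPreconnected O) (hp : p ∈ O)
    (hx : x ∈ closure O) (hy : y ∈ metricSeg p x) (hyx : y ≠ x) : y ∈ O := by
  obtain ⟨o, ho, hxo⟩ := Metric.mem_closure_iff.mp hx (dist y x) (dist_pos.mpr hyx)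
  rcases hX.metricSeg_subset_union p x o hy with h | h
  · exact hX.metricSeg_subset O hO p hp o ho h
  · rw [mem_metricSeg] at h
    rw [dist_comm] at hxo
    have := @dist_nonneg _ _ o y
    linarith

/-- The point `a` is the gate of `Z` towards `v`: its nearest-point projection. -/
lemma exists_gate {Z : Set X} (hZ : IsClosed Z) (hc : IsPreconnected Z) (hne : Z.Nonempty)
    (v : X) : ∃ a ∈ Z, ∀ x ∈ Z, a ∈ metricSeg x v := by
  obtain ⟨x₀, hx₀⟩ := hne
  obtain ⟨a, ⟨ha, hav⟩, hmax⟩ :=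
    ((hX.isCompact_metricSeg x₀ v).inter_left hZ).exists_isMaxOn
      ⟨x₀, hx₀, left_mem_metricSeg _ _⟩ (f := fun z => dist x₀ z) (by fun_prop)
  have hout : ∀ b ∈ metricSeg a v, b ≠ a → b ∉ Z := fun b hb hba hbZ => by
    have hb' := metricSeg_right_subset hav hb
    refine hba (hX.eq_of_dist_eq hb' hav (le_antisymm (hmax ⟨hbZ, hb'⟩) ?_))
    rw [mem_metricSeg] at *
    linarith [@dist_nonneg _ _ a b]
  refine ⟨a, ha, fun x hx => ?_⟩
  have hxv : ∀ b ∈ metricSeg a v, b ≠ a → b ∈ metricSeg x v := fun b hb hba =>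
    (hX.metricSeg_subset_union x₀ v x (metricSeg_right_subset hav hb)).resolve_left fun h =>
      hout b hb hba (hX.metricSeg_subset Z hc x₀ hx₀ x hx h)
  obtain ⟨m, ⟨hma, hmv⟩, hmin⟩ :=
    ((hX.isCompact_metricSeg a v).inter_right (isClosed_metricSeg x v)).exists_isMinOn
      ⟨v, right_mem_metricSeg _ _, right_mem_metricSeg _ _⟩ (f := fun z => dist a z) (by fun_prop)
  suffices m = a from this ▸ hmv
  by_contra hne
  have hpos : 0 < dist a m := dist_pos.mpr (Ne.symm hne)
  obtain ⟨b, hb, hbm⟩ := hX.exists_mem_metricSeg_dist_eq (x := a) (y := m) (half_pos hpos).le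
    (half_le_self hpos.le)
  have hba : b ≠ a := by
    rintro rfl
    rw [dist_self] at hbm
    linarith
  have hbv := metricSeg_left_subset hma hb
  have : dist a m ≤ dist a b := hmin ⟨hbv, hxv b hbv hba⟩
  linarith

lemma exists_median (x y z : X) :
    ∃ m, m ∈ metricSeg x y ∧ m ∈ metricSeg x z ∧ m ∈ metricSeg y z := by
  obtain ⟨a, ha, hgate⟩ := hX.exists_gate (isClosed_metricSeg x y)
    (hX.isPreconnected_metricSeg x y) ⟨x, left_mem_metricSeg _ _⟩ z
  exact ⟨a, ha, hgate x (left_mem_metricSeg _ _), hgate y (right_mem_metricSeg _ _)⟩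

lemma image_val_metricSeg {T : Set X} (hc : IsPreconnected T) (x y : T) :
    Subtype.val '' metricSeg x y = metricSeg x.1 y.1 := by
  ext z
  constructor
  · rintro ⟨w, hw, rfl⟩
    exact hw
  · exact fun hz => ⟨⟨z, hX.metricSeg_subset T hc _ x.2 _ y.2 hz⟩, hz, rfl⟩

protected lemma subtype {T : Set X} (hc : IsPreconnected T) : IsRTree T where
  isPreconnected_metricSeg x y := by
    rw [← Topology.IsInducing.subtypeVal.isPreconnected_image, hX.image_val_metricSeg hc]
    exact hX.isPreconnected_metricSeg _ _
  metricSeg_subset S hS x hx y hy := by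
    rw [← image_subset_image_iff Subtype.val_injective, hX.image_val_metricSeg hc]
    exact hX.metricSeg_subset_image hS continuous_subtype_val.continuousOn hx hy

end IsRTree

protected lemma IsFiniteRTree.subtype (hX : IsFiniteRTree X) {T : Set X} (hT : IsClosed T)
    (hc : IsPreconnected T) : IsFiniteRTree T where
  toIsRTree := hX.toIsRTree.subtype hc
  exists_ends := by
    obtain ⟨V, hV⟩ := hX.exists_ends
    rcases T.eq_empty_or_nonempty with rfl | hne
    · exact ⟨∅, fun p => p.2.elim⟩
    choose a ha hgate using hX.exists_gate hT hc hne
    classical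
    refine ⟨V.image fun v => ⟨a v, ha v⟩, fun p x => ?_⟩
    obtain ⟨v, hv, hx⟩ := hV p x
    refine ⟨⟨a v, ha v⟩, Finset.mem_image_of_mem _ hv, ?_⟩
    have hxa := hgate v x x.2
    have hpa := hgate v p p.2
    rw [mem_metricSeg] at *
    change dist p.1 x.1 + dist x.1 (a v) = dist p.1 (a v)
    linarith

end RTree

/-! ### Chain reachability -/

section Chains

variable {X : Type*} [MetricSpace X]

/-- There is an ε-chain with exactly `n` steps from the first to the second point. Unlike in
`EpsChain`, the length is recorded and may be `0`. -/
def EpsChainOfLength (f : X → X) (ε : ℝ) : ℕ → X → X → Prop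
  | 0, x, y => x = y
  | n + 1, x, y => ∃ z, EpsChainOfLength f ε n x z ∧ dist (f z) y < ε

/-- The second point can be reached from the first by ε-chains for every `ε > 0`; the chain
recurrent points are those that reach themselves. -/
def ChainReaches (f : X → X) (x y : X) : Prop := ∀ ε > 0, EpsChain f ε x y

/-- The set of points reached from `p` by ε-chains for every `ε > 0`. -/
def chainReachableSet (f : X → X) (p : X) : Set X := {x | ChainReaches f p x}

variable {f : X → X} {ε ε' δ : ℝ} {k m n : ℕ} {x x' y z w p : X}

namespace EpsChainOfLength

lemma trans (h : EpsChainOfLength f ε m x y) (h' : EpsChainOfLength f ε n y z) :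
    EpsChainOfLength f ε (m + n) x z := by
  induction n generalizing z with
  | zero => cases h'; exact h
  | succ n ih => obtain ⟨w, hw, hwz⟩ := h'; exact ⟨w, ih hw, hwz⟩

lemma exists_of_add (h : EpsChainOfLength f ε (m + n) x z) :
    ∃ y, EpsChainOfLength f ε m x y ∧ EpsChainOfLength f ε n y z := by
  induction n generalizing z with
  | zero => exact ⟨z, h, rfl⟩
  | succ n ih =>
    obtain ⟨w, hw, hwz⟩ := h
    obtain ⟨y, hxy, hyw⟩ := ih hw
    exact ⟨y, hxy, w, hyw, hwz⟩

lemma mono (hε : ε ≤ ε') (h : EpsChainOfLength f ε n x z) : EpsChainOfLength f ε' n x z := by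
  induction n generalizing z with
  | zero => exact h
  | succ n ih => obtain ⟨w, hw, hwz⟩ := h; exact ⟨w, ih hw, hwz.trans_le hε⟩

lemma mul_self (h : EpsChainOfLength f ε n x x) (q : ℕ) : EpsChainOfLength f ε (q * n) x x := by
  induction q with
  | zero => rw [Nat.zero_mul]; rfl
  | succ q ih => rw [Nat.succ_mul]; exact ih.trans h

lemma mem_of_mem {S : Set X} (hS : ∀ x ∈ S, ∀ y, dist (f x) y < ε → y ∈ S)
    (h : EpsChainOfLength f ε n x y) (hx : x ∈ S) : y ∈ S := by
  induction n generalizing y with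
  | zero => cases h; exact hx
  | succ n ih => obtain ⟨w, hw, hwy⟩ := h; exact hS w (ih hw) _ hwy

lemma perturb_right (h : EpsChainOfLength f (ε / 2) (n + 1) x y) (hz : dist y z < ε / 2) :
    EpsChainOfLength f ε (n + 1) x z := by
  obtain ⟨w, hw, hwy⟩ := h
  have : 0 < ε / 2 := dist_nonneg.trans_lt hz
  exact ⟨w, hw.mono (by linarith), by linarith [dist_triangle (f w) y z]⟩

lemma perturb_left (h : EpsChainOfLength f (ε / 2) (n + 1) x y)
    (hx : dist (f x') (f x) < ε / 2) : EpsChainOfLength f ε (n + 1) x' y := by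
  rw [add_comm] at h ⊢
  obtain ⟨w, ⟨_, rfl, hw⟩, hwy⟩ := h.exists_of_add
  have : 0 < ε / 2 := dist_nonneg.trans_lt hx
  refine EpsChainOfLength.trans (m := 1) (y := w) ⟨x', rfl, ?_⟩ (hwy.mono (by linarith))
  linarith [dist_triangle (f x') (f x) w]

end EpsChainOfLength

lemma epsChainOfLength_iterate (hε : 0 < ε) (n : ℕ) (x : X) :
    EpsChainOfLength f ε n x (f^[n] x) := by
  induction n with
  | zero => rfl
  | succ n ih => exact ⟨_, ih, by rwa [iterate_succ_apply', dist_self]⟩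

lemma epsChainOfLength_of_isFixedPt (hp : IsFixedPt f p) (hε : 0 < ε) (n : ℕ) :
    EpsChainOfLength f ε n p p := by
  simpa only [(hp.iterate n).eq] using epsChainOfLength_iterate (f := f) hε n p

lemma epsChain_iff_exists : EpsChain f ε x y ↔ ∃ n, EpsChainOfLength f ε (n + 1) x y := by
  constructor
  · rintro ⟨n, hn, c, rfl, rfl, h⟩
    have hc : ∀ i ≤ n, EpsChainOfLength f ε i (c 0) (c i) := by
      intro i
      induction i with
      | zero => exact fun _ => rfl
      | succ i ih => exact fun hi => ⟨c i, ih (by omega), h i (by omega)⟩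
    exact ⟨n - 1, by rw [Nat.sub_add_cancel hn]; exact hc n le_rfl⟩
  · rintro ⟨n, h⟩
    refine ⟨n + 1, by omega, ?_⟩
    generalize n + 1 = n at h
    induction n generalizing y with
    | zero => exact ⟨fun _ => x, rfl, h, by simp⟩
    | succ n ih =>
      obtain ⟨z, hz, hzy⟩ := h
      obtain ⟨c, h0, hc, h⟩ := ih hz
      refine ⟨fun i => if i ≤ n then c i else y, by simp [h0], by simp, fun i hi => ?_⟩
      rcases Nat.lt_succ_iff_lt_or_eq.mp hi with hlt | rfl
      · simpa [hlt.le, Nat.succ_le_of_lt hlt] using h i hlt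
      · simpa [hc] using hzy

lemma mem_of_epsChain {S : Set X} (hS : ∀ x ∈ S, ∀ y, dist (f x) y < ε → y ∈ S)
    (h : EpsChain f ε x y) (hx : x ∈ S) : y ∈ S :=
  let ⟨_, h⟩ := epsChain_iff_exists.mp h
  h.mem_of_mem hS hx

lemma exists_forall_epsChainOfLength_dist_iterate_lt (hf : UniformContinuous f) (k : ℕ)
    (hε : 0 < ε) : ∃ δ > 0, ∀ x y, EpsChainOfLength f δ k x y → dist (f^[k] x) y < ε := by
  induction k generalizing ε with
  | zero => exact ⟨1, one_pos, fun x y h => by cases h; simpa⟩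
  | succ k ih =>
    obtain ⟨η, hη, hfη⟩ := Metric.uniformContinuous_iff.mp hf (ε / 2) (by linarith)
    obtain ⟨δ, hδ, hclose⟩ := ih hη
    refine ⟨min δ (ε / 2), by positivity, ?_⟩
    rintro x y ⟨z, hz, hzy⟩
    have := hfη (hclose x z (hz.mono (min_le_left _ _)))
    rw [iterate_succ_apply']
    linarith [dist_triangle (f (f^[k] x)) (f z) y, min_le_right δ (ε / 2)]

lemma exists_forall_epsChainOfLength_iterate (hf : UniformContinuous f) (k : ℕ) (hε : 0 < ε) :
    ∃ δ > 0, ∀ q x y, EpsChainOfLength f δ (k * q) x y → EpsChainOfLength f^[k] ε q x y := by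
  obtain ⟨δ, hδ, hclose⟩ := exists_forall_epsChainOfLength_dist_iterate_lt hf k hε
  refine ⟨δ, hδ, fun q => ?_⟩
  induction q with
  | zero => exact fun x y h => h
  | succ q ih =>
    intro x y h
    obtain ⟨z, hxz, hzy⟩ := (Nat.mul_succ k q ▸ h).exists_of_add
    exact ⟨z, ih _ _ hxz, hclose _ _ hzy⟩

lemma ChainReaches.iterate_of_isFixedPt_left (h : ChainReaches f p x) (hf : UniformContinuous f)
    (hp : IsFixedPt f p) (hk : 1 ≤ k) : ChainReaches f^[k] p x := by
  intro ε hε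
  obtain ⟨δ, hδ, hblock⟩ := exists_forall_epsChainOfLength_iterate hf k hε
  obtain ⟨n, hn⟩ := epsChain_iff_exists.mp (h δ hδ)
  have hpad := (epsChainOfLength_of_isFixedPt hp hδ (k * (n + 1) - (n + 1))).trans hn
  rw [Nat.sub_add_cancel (Nat.le_mul_of_pos_left _ hk)] at hpad
  exact epsChain_iff_exists.mpr ⟨n, hblock _ _ _ hpad⟩

lemma ChainReaches.of_iterate (h : ChainReaches f^[k] x y) (hk : 1 ≤ k) : ChainReaches f x y := by
  obtain ⟨k, rfl⟩ := Nat.exists_eq_add_of_le' hk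
  have key : ∀ ε > 0, ∀ n y, EpsChainOfLength f^[k + 1] ε n x y →
      EpsChainOfLength f ε ((k + 1) * n) x y := by
    intro ε hε n
    induction n with
    | zero => exact fun y h => h
    | succ n ih =>
      rintro y ⟨z, hz, hzy⟩
      rw [iterate_succ_apply'] at hzy
      exact ⟨_, (ih z hz).trans (epsChainOfLength_iterate hε k z), hzy⟩
  intro ε hε
  obtain ⟨n, hn⟩ := epsChain_iff_exists.mp (h ε hε)
  exact epsChain_iff_exists.mpr ⟨_, key ε hε _ _ hn⟩

lemma mem_chainRecurrentSet_iterate (hf : UniformContinuous f) (h : x ∈ chainRecurrentSet f)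
    (k : ℕ) : x ∈ chainRecurrentSet f^[k] := by
  intro ε hε
  obtain ⟨δ, hδ, hblock⟩ := exists_forall_epsChainOfLength_iterate hf k hε
  obtain ⟨n, hn⟩ := epsChain_iff_exists.mp (h δ hδ)
  exact epsChain_iff_exists.mpr ⟨n, hblock _ _ _ (hn.mul_self k)⟩

lemma surjective_of_forall_chainReaches [CompactSpace X] (hf : Continuous f)
    (h : ∀ x, ChainReaches f p x) : Surjective f := by
  intro y
  have hcl : IsClosed (range f) := (isCompact_range hf).isClosed
  rw [← mem_range, ← hcl.closure_eq, Metric.mem_closure_iff]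
  intro ε hε
  obtain ⟨n, z, -, hz⟩ := epsChain_iff_exists.mp (h y ε hε)
  exact ⟨f z, mem_range_self z, by rwa [dist_comm]⟩

lemma isClosed_chainReachableSet : IsClosed (chainReachableSet f p) := by
  rw [← closure_subset_iff_isClosed]
  intro x hx ε hε
  obtain ⟨y, hy, hxy⟩ := Metric.mem_closure_iff.mp hx (ε / 2) (by linarith)
  obtain ⟨n, hn⟩ := epsChain_iff_exists.mp (hy (ε / 2) (by linarith))
  exact epsChain_iff_exists.mpr ⟨n, hn.perturb_right (by rwa [dist_comm])⟩

lemma mapsTo_chainReachableSet : MapsTo f (chainReachableSet f p) (chainReachableSet f p) := by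
  intro x hx ε hε
  obtain ⟨n, hn⟩ := epsChain_iff_exists.mp (hx ε hε)
  exact epsChain_iff_exists.mpr ⟨n + 1, x, hn, by simpa⟩

lemma self_mem_chainReachableSet (hp : IsFixedPt f p) : p ∈ chainReachableSet f p :=
  fun _ hε => epsChain_iff_exists.mpr ⟨0, epsChainOfLength_of_isFixedPt hp hε 1⟩

lemma ChainReaches.of_iterates_near (hp : IsFixedPt f p)
    (h : ∀ δ > 0, ∃ y, dist y p < δ ∧ ∃ j, dist (f^[j] y) w < δ) : ChainReaches f p w := by
  intro ε hε
  obtain ⟨y, hy, j, hj⟩ := h (ε / 2) (by linarith)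
  have hpy : EpsChainOfLength f (ε / 2) 1 p y := ⟨p, rfl, by rwa [hp.eq, dist_comm]⟩
  have hpj := hpy.trans (epsChainOfLength_iterate (half_pos hε) j y)
  rw [add_comm] at hpj
  exact epsChain_iff_exists.mpr ⟨j, hpj.perturb_right hj⟩

lemma ChainReaches.of_recurrent_iterates_near (hf : UniformContinuous f)
    (h : ∀ δ > 0, ∃ y ∈ chainRecurrentSet f, dist y p < δ ∧ ∃ j, dist (f^[j] y) w < δ) :
    ChainReaches f w p := by
  intro ε hε
  obtain ⟨η, hη, hfη⟩ := Metric.uniformContinuous_iff.mp hf (ε / 2 / 2) (by linarith)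
  obtain ⟨y, hy, hyp, j, hj⟩ := h (min (η / 2) (ε / 2)) (by positivity)
  obtain ⟨δ, hδ, hclose⟩ := exists_forall_epsChainOfLength_dist_iterate_lt hf j (half_pos hη)
  obtain ⟨n, hn⟩ := epsChain_iff_exists.mp (hy (min δ (ε / 2 / 2)) (by positivity))
  have hloop := hn.mul_self (j + 1)
  rw [show (j + 1) * (n + 1) = j + ((j + 1) * n + 1) by ring] at hloop
  obtain ⟨v, hyv, hvy⟩ := hloop.exists_of_add
  have hwv : dist w v < η := by
    have := hclose y v (hyv.mono (min_le_left _ _))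
    linarith [dist_triangle_left w v (f^[j] y), min_le_left (η / 2) (ε / 2)]
  exact epsChain_iff_exists.mpr ⟨_, ((hvy.mono (min_le_right _ _)).perturb_left
    (hfη hwv)).perturb_right (hyp.trans_le (min_le_right _ _))⟩

lemma exists_forall_epsChainOfLength_near_chainReachableSet [CompactSpace X] (hp : IsFixedPt f p)
    {η : ℝ} (hη : 0 < η) : ∃ ε > 0, ∀ n w, EpsChainOfLength f ε n p w →
      ∃ t ∈ chainReachableSet f p, dist w t < η := by
  by_contra! hcon
  choose n w hw hfar using fun m : ℕ => hcon (1 / ((m : ℝ) + 1)) (by positivity)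
  obtain ⟨w₀, φ, hφ, hlim⟩ := CompactSpace.tendsto_subseq w
  have hw₀ : w₀ ∈ chainReachableSet f p := by
    intro ε hε
    have hnear : ∀ᶠ m in atTop, dist (w (φ m)) w₀ < ε / 2 :=
      (Metric.tendsto_nhds.mp hlim) _ (half_pos hε)
    have hsmall : ∀ᶠ m : ℕ in atTop, 1 / ((φ m : ℝ) + 1) < ε / 2 :=
      (tendsto_one_div_add_atTop_nhds_zero_nat.comp hφ.tendsto_atTop).eventually
        (gt_mem_nhds (half_pos hε))
    obtain ⟨m, hm, hmε⟩ := (hnear.and hsmall).exists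
    have hchain := (hw (φ m)).mono hmε.le
    have hpos : n (φ m) ≠ 0 := fun h0 => by
      have hwp := hw (φ m)
      rw [h0] at hwp
      have hge := hfar (φ m) p (self_mem_chainReachableSet hp)
      rw [← show p = w (φ m) from hwp, dist_self] at hge
      linarith
    rw [← Nat.succ_pred_eq_of_ne_zero hpos] at hchain
    exact epsChain_iff_exists.mpr ⟨_, hchain.perturb_right hm⟩
  obtain ⟨m, hm⟩ := ((Metric.tendsto_nhds.mp hlim) _ hη).exists
  exact absurd hm (not_lt.mpr (hfar (φ m) w₀ hw₀))

/-- A chain issued from a point reached from `p` stays near `chainReachableSet f p`, and so can be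
pushed into it. -/
lemma ChainReaches.restrict [CompactSpace X] (hf : Continuous f) (hp : IsFixedPt f p)
    {x y : chainReachableSet f p} (h : ChainReaches f x y) :
    ChainReaches (mapsTo_chainReachableSet.restrict f (chainReachableSet f p) _) x y := by
  intro ε hε
  obtain ⟨δ, hδ, hfδ⟩ := Metric.uniformContinuous_iff.mp
    (CompactSpace.uniformContinuous_of_continuous hf) (ε / 3) (by linarith)
  obtain ⟨η, hη, hnear⟩ := exists_forall_epsChainOfLength_near_chainReachableSet (f := f) hp
    (η := min δ (ε / 3)) (by positivity)
  have hpos : 0 < min η (ε / 3) := by positivity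
  have hstep : ∀ z t y : X, dist z t < min δ (ε / 3) → dist (f z) y < min η (ε / 3) →
      dist (f t) y < ε / 3 + ε / 3 := fun z t y hzt hzy => by
    have := hfδ (hzt.trans_le (min_le_left _ _))
    linarith [dist_triangle_left (f t) y (f z), min_le_right η (ε / 3)]
  have hpush : ∀ n w, EpsChainOfLength f (min η (ε / 3)) n x w →
      ∃ t : chainReachableSet f p, dist w t < min δ (ε / 3) ∧
        EpsChainOfLength (mapsTo_chainReachableSet.restrict f (chainReachableSet f p) _) ε n x t
        := by
    intro n
    induction n with
    | zero =>
      rintro w rfl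
      exact ⟨x, by rw [dist_self]; positivity, rfl⟩
    | succ n ih =>
      intro w hw
      obtain ⟨k, hk⟩ := epsChain_iff_exists.mp (x.2 _ hpos)
      obtain ⟨t, ht, hwt⟩ := hnear _ w ((hk.trans hw).mono (min_le_left _ _))
      obtain ⟨z, hz, hzw⟩ := hw
      obtain ⟨t', hzt', hchain⟩ := ih z hz
      refine ⟨⟨t, ht⟩, hwt, t', hchain, ?_⟩
      change dist (f t') t < ε
      linarith [hstep _ _ _ hzt' hzw, dist_triangle (f t') w t, min_le_right δ (ε / 3)]
  obtain ⟨n, z, hz, hzy⟩ := epsChain_iff_exists.mp (h _ hpos)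
  obtain ⟨t, hzt, hchain⟩ := hpush n z hz
  refine epsChain_iff_exists.mpr ⟨n, t, hchain, ?_⟩
  change dist (f t) y < ε
  linarith [hstep _ _ _ hzt hzy]

lemma metricSeg_subset_chainReachableSet (hX : IsRTree X) (hf : Continuous f)
    (hp : IsFixedPt f p) (hx : x ∈ chainReachableSet f p) :
    metricSeg p x ⊆ chainReachableSet f p := by
  have key : ∀ ε > 0, ∀ n x, EpsChainOfLength f ε n p x → ∀ y ∈ metricSeg p x,
      EpsChain f ε p y := by
    intro ε hε n
    induction n with
    | zero =>
      rintro x rfl y hy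
      rw [eq_of_mem_metricSeg_self hy]
      exact self_mem_chainReachableSet hp ε hε
    | succ n ih =>
      rintro x ⟨z, hz, hzx⟩ y hy
      rcases hX.metricSeg_subset_union p x (f z) hy with h | h
      · have himage := hX.metricSeg_subset_image_metricSeg hf p z
        rw [hp.eq] at himage
        obtain ⟨w, hw, rfl⟩ := himage h
        obtain ⟨m, hm⟩ := epsChain_iff_exists.mp (ih z hz w hw)
        exact epsChain_iff_exists.mpr ⟨m + 1, w, hm, by simpa⟩
      · exact epsChain_iff_exists.mpr ⟨n, z, hz, (dist_le_of_mem_metricSeg h).trans_lt hzx⟩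
  intro y hy ε hε
  obtain ⟨n, hn⟩ := epsChain_iff_exists.mp (hx ε hε)
  exact key ε hε _ _ hn y hy

lemma isPreconnected_chainReachableSet (hX : IsRTree X) (hf : Continuous f)
    (hp : IsFixedPt f p) : IsPreconnected (chainReachableSet f p) :=
  isPreconnected_of_forall p fun x hx =>
    ⟨metricSeg p x, metricSeg_subset_chainReachableSet hX hf hp hx, left_mem_metricSeg _ _,
      right_mem_metricSeg _ _, hX.isPreconnected_metricSeg _ _⟩

end Chains

/-! ### Horseshoes from preimages of a fixed point -/

section ArcHorseshoe

variable {X : Type*} [MetricSpace X] {g : X → X} {Z O : Set X} {a p s u x : X} {k n : ℕ}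

/-- Some iterate of `g` stretches each of the two subarcs into which an arc is divided by an
interior point over the whole arc. -/
def HasArcHorseshoe (g : X → X) : Prop :=
  ∃ n, 1 ≤ n ∧ ∃ a u x : X, u ∈ metricSeg a x ∧ u ≠ a ∧ u ≠ x ∧
    metricSeg a x ⊆ g^[n] '' metricSeg a u ∧ metricSeg a x ⊆ g^[n] '' metricSeg u x

lemma HasArcHorseshoe.of_iterate (h : HasArcHorseshoe g^[k]) (hk : 1 ≤ k) :
    HasArcHorseshoe g := by
  obtain ⟨n, hn, a, u, x, h⟩ := h
  rw [← iterate_mul] at h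
  exact ⟨k * n, Nat.mul_pos hk hn, a, u, x, h⟩

lemma HasArcHorseshoe.of_restrict (hX : IsRTree X) (hZ : IsPreconnected Z) (hmaps : MapsTo g Z Z)
    (h : HasArcHorseshoe (hmaps.restrict g Z Z)) : HasArcHorseshoe g := by
  obtain ⟨n, hn, a, u, x, hu, hua, hux, hleft, hright⟩ := h
  have himage : ∀ {x y x' y' : Z}, metricSeg x y ⊆ (hmaps.restrict g Z Z)^[n] '' metricSeg x' y' →
      metricSeg x.1 y.1 ⊆ g^[n] '' metricSeg x'.1 y'.1 := by
    intro x y x' y' h z hz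
    rw [← hX.image_val_metricSeg hZ] at hz
    obtain ⟨_, hw, rfl⟩ := hz
    obtain ⟨v, hv, rfl⟩ := h hw
    exact ⟨v, hv, by rw [hmaps.iterate_restrict]; rfl⟩
  exact ⟨n, hn, a, u, x, hu, fun h => hua (Subtype.ext h), fun h => hux (Subtype.ext h),
    himage hleft, himage hright⟩

/-- `Z` is a closed connected forward invariant set containing `p`, and `x` is a point outside `Z`
which is mapped into `Z`. -/
structure IsLeak (g : X → X) (p : X) (Z : Set X) (x : X) : Prop where
  isClosed : IsClosed Z
  isPreconnected : IsPreconnected Z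
  mem : p ∈ Z
  mapsTo : MapsTo g Z Z
  notMem : x ∉ Z
  map_mem : g x ∈ Z

lemma IsLeak.iterate_map_mem (h : IsLeak g p Z x) (hn : n ≠ 0) : g^[n] x ∈ Z := by
  obtain ⟨n, rfl⟩ := Nat.exists_eq_succ_of_ne_zero hn
  exact h.mapsTo.iterate n h.map_mem

lemma IsLeak.hasArcHorseshoe (h : IsLeak g p Z x) (hX : IsRTree X) (hg : Continuous g)
    (hu : u ∈ metricSeg p x) (hux : u ≠ x) (hgu : g^[n] u = x) : HasArcHorseshoe g := by
  have hn : n ≠ 0 := by rintro rfl; exact hux hgu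
  have huZ : u ∉ Z := fun huZ => h.notMem (hgu ▸ h.mapsTo.iterate n huZ)
  obtain ⟨a, haZ, hgate⟩ := hX.exists_gate h.isClosed h.isPreconnected ⟨p, h.mem⟩ x
  have hua : u ∈ metricSeg a x :=
    ((hX.metricSeg_subset_union p x a hu).resolve_left fun hpa =>
      huZ (hX.metricSeg_subset Z h.isPreconnected p h.mem a haZ hpa))
  have hstretch : ∀ {z}, z ∈ Z → metricSeg a x ⊆ metricSeg z x := fun hz =>
    metricSeg_right_subset (hgate _ hz)
  refine ⟨n, Nat.one_le_iff_ne_zero.mpr hn, a, u, x, hua, fun hua => huZ (hua ▸ haZ), hux, ?_, ?_⟩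
  · have himage := hX.metricSeg_subset_image_metricSeg (hg.iterate n) a u
    rw [hgu] at himage
    exact (hstretch (h.mapsTo.iterate n haZ)).trans himage
  · have himage := hX.metricSeg_subset_image_metricSeg (hg.iterate n) u x
    rw [hgu, metricSeg_comm x] at himage
    exact (hstretch (h.iterate_map_mem hn)).trans himage

lemma exists_mem_metricSeg_map [CompactSpace X] (hX : IsRTree X) (hg : Continuous g) (hs : s ≠ p)
    (hch : ChainReaches g p s) : ∃ v, (s ∉ metricSeg p v ∨ v = s) ∧ s ∈ metricSeg p (g v) := by
  by_contra! hcon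
  set B : Set X := {x | s ∉ metricSeg p x}
  have hBo : IsOpen B :=
    (isClosed_eq (f := fun x => dist p s + dist s x) (by fun_prop) (by fun_prop)).isOpen_compl
  have hBcl : ∀ v ∈ closure B, s ∉ metricSeg p v ∨ v = s := by
    intro v hv
    by_contra! h
    obtain ⟨y, hy, hyv⟩ := Metric.mem_closure_iff.mp hv (dist s v) (dist_pos.mpr h.2.symm)
    rcases hX.metricSeg_subset_union p v y h.1 with hsy | hsy
    · exact hy hsy
    · rw [mem_metricSeg] at hsy
      linarith [dist_nonneg (x := y) (y := s), dist_comm v y]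
  obtain ⟨ε, hε, hsub⟩ := (isClosed_closure (s := B)).isCompact.image hg
    |>.exists_thickening_subset_open hBo (by
      rintro _ ⟨v, hv, rfl⟩
      exact hcon v (hBcl v hv))
  have hsB : s ∈ B := by
    refine mem_of_epsChain (fun x hx y hxy => hsub ?_) (hch ε hε)
      fun h => hs (eq_of_mem_metricSeg_self h)
    rw [Metric.mem_thickening_iff]
    exact ⟨g x, mem_image_of_mem _ (subset_closure hx), by rwa [dist_comm]⟩
  exact hsB (right_mem_metricSeg _ _)

lemma IsLeak.exists_iterate_eq [CompactSpace X] (h : IsLeak g p Z x) (hX : IsRTree X)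
    (hg : Continuous g) (hp : IsFixedPt g p) (hch : ChainReaches g p x) (hk : 1 ≤ k) :
    ∃ u, g^[k] u = x ∧ x ∉ metricSeg p u := by
  have hgc := CompactSpace.uniformContinuous_of_continuous hg
  obtain ⟨v, hvx, hxv⟩ := exists_mem_metricSeg_map hX (hg.iterate k) (s := x)
    (fun hxp => h.notMem (hxp ▸ h.mem)) (hch.iterate_of_isFixedPt_left hgc hp hk)
  have hnot : x ∉ metricSeg p v := hvx.resolve_right fun hvx => h.notMem <|
    hX.metricSeg_subset Z h.isPreconnected p h.mem _ (hvx ▸ h.iterate_map_mem (by omega)) hxv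
  have himage := hX.metricSeg_subset_image_metricSeg (hg.iterate k) p v
  rw [(hp.iterate k).eq] at himage
  obtain ⟨u, hu, hux⟩ := himage hxv
  exact ⟨u, hux, fun hxu => hnot (metricSeg_left_subset hu hxu)⟩

end ArcHorseshoe

section Boundary

lemma mapsTo_of_surjOn_of_finite {α : Type*} {g : α → α} {S : Set α} (hS : S.Finite)
    (h : SurjOn g S S) : MapsTo g S S :=
  mapsTo_iff_image_subset.mpr
    (eq_of_subset_of_ncard_le h (ncard_image_le hS) (hS.image g)).symm.subset

lemma exists_iterate_eq_self_of_surjOn {α : Type*} {g : α → α} {S : Set α} (hS : S.Finite)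
    (h : SurjOn g S S) : ∃ k, 1 ≤ k ∧ ∀ s ∈ S, g^[k] s = s := by
  have hmaps := mapsTo_of_surjOn_of_finite hS h
  have := hS.to_subtype
  have hbij : Bijective (hmaps.restrict g S S) :=
    Finite.surjective_iff_bijective.mp (hmaps.restrict_surjective_iff.mpr h)
  let σ : Equiv.Perm S := Equiv.ofBijective _ hbij
  refine ⟨orderOf σ, orderOf_pos σ, fun s hs => ?_⟩
  have hσ : (hmaps.restrict g S S)^[orderOf σ] ⟨s, hs⟩ = ⟨s, hs⟩ := by
    change σ^[orderOf σ] _ = _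
    rw [← Equiv.Perm.coe_pow, pow_orderOf_eq_one, Equiv.Perm.one_apply]
  rw [hmaps.iterate_restrict] at hσ
  exact congrArg Subtype.val hσ

variable {X : Type*} [MetricSpace X] {g : X → X} {Z O : Set X} {p x : X}

lemma exists_pos_forall_le_dist {S : Set X} (hS : S.Finite) :
    ∃ η > 0, ∀ a ∈ S, ∀ b ∈ S, a ≠ b → η ≤ dist a b := by
  rcases S.subsingleton_or_nontrivial with h | h
  · exact ⟨1, one_pos, fun a ha b hb hab => absurd (h ha hb) hab⟩
  · exact ⟨S.infsep, hS.infsep_pos_iff_nontrivial.mpr h, fun a ha b hb =>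
      infsep_le_dist_of_mem ha hb⟩

lemma mapsTo_compl_closure (hg : Continuous g) (hO : IsPreconnected O) (hp : p ∈ O)
    (hmaps : MapsTo g O O) (h : ∀ x, ¬ IsLeak g p (closure O) x) :
    MapsTo g (closure O)ᶜ (closure O)ᶜ :=
  fun x hx hgx =>
    h x ⟨isClosed_closure, hO.closure, subset_closure hp, hmaps.closure hg, hx, hgx⟩

lemma surjOn_closure_diff (hsurj : Surjective g) (hmaps : MapsTo g O O)
    (hcompl : MapsTo g (closure O)ᶜ (closure O)ᶜ) :
    SurjOn g (closure O \ O) (closure O \ O) := by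
  intro s hs
  obtain ⟨x, rfl⟩ := hsurj s
  exact ⟨x, ⟨by_contra fun hx => hcompl hx hs.1, fun hx => hs.2 (hmaps hx)⟩, rfl⟩

lemma IsFiniteRTree.finite_closure_diff (hX : IsFiniteRTree X) (hO : IsPreconnected O)
    (hp : p ∈ O) : (closure O \ O).Finite := by
  obtain ⟨V, hV⟩ := hX.exists_ends
  have hcover : closure O \ O ⊆ ⋃ v ∈ V, (closure O \ O) ∩ metricSeg p v := by
    intro s hs
    obtain ⟨v, hv, hsv⟩ := hV p s
    exact mem_biUnion hv ⟨hs, hsv⟩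
  refine (V.finite_toSet.biUnion fun v _ => Set.Subsingleton.finite ?_).subset hcover
  have hle : ∀ {s s'}, s ∈ closure O \ O ∩ metricSeg p v → s' ∈ closure O \ O ∩ metricSeg p v →
      dist p s ≤ dist p s' → s = s' := by
    intro s s' hs hs' h
    by_contra hne
    exact hs.1.2 (hX.mem_of_mem_metricSeg_of_mem_closure hO hp hs'.1.1
      (hX.mem_metricSeg_of_dist_le hs.2 hs'.2 h) hne)
  intro s hs s' hs'
  rcases le_total (dist p s) (dist p s') with h | h
  exacts [hle hs hs' h, (hle hs' hs h).symm]

lemma IsRTree.exists_mem_metricSeg_or_near (hX : IsRTree X) (hO : IsPreconnected O) (hp : p ∈ O)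
    {η : ℝ} (hη : 0 < η) (v : X) : ∃ o ∈ O, ∀ x ∈ closure O ∩ metricSeg p v,
      x ∈ metricSeg p o ∨ ∃ l ∈ closure O \ O, x ∈ metricSeg p l ∧ dist x l < η := by
  obtain ⟨e, ⟨heO, hev⟩, hmax⟩ := ((hX.isCompact_metricSeg p v).inter_left
    (isClosed_closure (s := O))).exists_isMaxOn ⟨p, subset_closure hp, left_mem_metricSeg _ _⟩
    (f := fun x => dist p x) (by fun_prop)
  have hmem : ∀ x ∈ closure O ∩ metricSeg p v, x ∈ metricSeg p e := fun x hx =>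
    hX.mem_metricSeg_of_dist_le hx.2 hev (hmax hx)
  by_cases he : e ∈ O
  · exact ⟨e, he, fun x hx => Or.inl (hmem x hx)⟩
  have hpe : 0 < dist p e := dist_pos.mpr fun h => he (h ▸ hp)
  obtain ⟨o, ho, hod⟩ := hX.exists_mem_metricSeg_dist_eq (x := p) (y := e)
    (t := max 0 (dist p e - η / 2)) (le_max_left _ _) (max_le hpe.le (by linarith))
  have hoe : o ≠ e := by
    rintro rfl
    exact (max_lt hpe (by linarith)).ne' hod
  refine ⟨o, hX.mem_of_mem_metricSeg_of_mem_closure hO hp heO ho hoe, fun x hx => ?_⟩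
  refine (hX.metricSeg_subset_union p e o (hmem x hx)).imp_right fun hxo =>
    ⟨e, ⟨heO, he⟩, hmem x hx, ?_⟩
  rw [mem_metricSeg] at hxo ho
  linarith [dist_nonneg (x := o) (y := x), le_max_right 0 (dist p e - η / 2)]

lemma IsFiniteRTree.exists_finite_subset (hX : IsFiniteRTree X) (hO : IsPreconnected O)
    (hp : p ∈ O) {η : ℝ} (hη : 0 < η) : ∃ F ⊆ O, F.Finite ∧ ∀ x ∈ closure O,
      (∃ o ∈ F, x ∈ metricSeg p o) ∨
        ∃ l ∈ closure O \ O, x ∈ metricSeg p l ∧ dist x l < η := by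
  obtain ⟨V, hV⟩ := hX.exists_ends
  choose o hoO ho using hX.exists_mem_metricSeg_or_near hO hp hη
  refine ⟨o '' V, image_subset_iff.mpr fun v _ => hoO v, V.finite_toSet.image o, fun x hx => ?_⟩
  obtain ⟨v, hv, hxv⟩ := hV p x
  exact (ho v x ⟨hx, hxv⟩).imp_left fun h => ⟨o v, mem_image_of_mem o hv, h⟩

end Boundary

section FixedPointPreimages

variable {X : Type*} [MetricSpace X] {g : X → X} {Z : Set X} {p x : X}

/-- The orbit of a subarc leaving `Z` in the direction of the leak `x` is so large by maximality
that it contains `x`. -/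
lemma hasArcHorseshoe_of_maximal (hX : IsFiniteRTree X) (hg : Continuous g) (hsurj : Surjective g)
    (hmax : Maximal (fun Z => ∃ x, IsLeak g p Z x) Z) : HasArcHorseshoe g := by
  obtain ⟨x, hZ⟩ := hmax.prop
  obtain ⟨a, haZ, hgate⟩ := hX.exists_gate hZ.isClosed hZ.isPreconnected ⟨p, hZ.mem⟩ x
  have hax : 0 < dist a x := dist_pos.mpr fun h => hZ.notMem (h ▸ haZ)
  obtain ⟨t, ht, htd⟩ := hX.exists_mem_metricSeg_dist_eq (x := a) (y := x) (t := dist a x / 2)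
    (by linarith) (by linarith)
  have htZ : t ∉ Z := by
    intro htZ
    have hat := hgate t htZ
    rw [mem_metricSeg] at hat ht
    linarith [dist_comm t a]
  set O : Set X := ⋃ n : ℕ, Z ∪ g^[n] '' metricSeg a t
  have hOc : IsPreconnected O :=
    isPreconnected_iUnion ⟨p, mem_iInter.mpr fun n => Or.inl hZ.mem⟩ fun n =>
      IsPreconnected.union (g^[n] a) (hZ.mapsTo.iterate n haZ)
        (mem_image_of_mem _ (left_mem_metricSeg _ _)) hZ.isPreconnected
        ((hX.isPreconnected_metricSeg a t).image _ (hg.iterate n).continuousOn)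
  have hZO : Z ⊆ O := fun z hz => mem_iUnion.mpr ⟨0, Or.inl hz⟩
  have hOmaps : MapsTo g O O := by
    intro y hy
    obtain ⟨n, hy | ⟨w, hw, rfl⟩⟩ := mem_iUnion.mp hy
    · exact hZO (hZ.mapsTo hy)
    · exact mem_iUnion.mpr ⟨n + 1, Or.inr ⟨w, hw, iterate_succ_apply' _ _ _⟩⟩
  have htO : t ∈ O := mem_iUnion.mpr ⟨0, Or.inr ⟨t, right_mem_metricSeg _ _, rfl⟩⟩
  have hcompl : MapsTo g (closure O)ᶜ (closure O)ᶜ :=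
    mapsTo_compl_closure hg hOc (hZO hZ.mem) hOmaps fun y hy =>
      htZ (hmax.le_of_ge ⟨y, hy⟩ (hZO.trans subset_closure) (subset_closure htO))
  have hxO : x ∈ O := by
    by_contra hxO
    have hbdry := mapsTo_of_surjOn_of_finite (hX.finite_closure_diff hOc (hZO hZ.mem))
      (surjOn_closure_diff hsurj hOmaps hcompl)
    have hxcl : x ∈ closure O :=
      by_contra fun hxcl => hcompl hxcl (subset_closure (hZO hZ.map_mem))
    exact (hbdry ⟨hxcl, hxO⟩).2 (hZO hZ.map_mem)
  obtain ⟨n, hxZ | ⟨u, hu, hgu⟩⟩ := mem_iUnion.mp hxO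
  · exact absurd hxZ hZ.notMem
  · refine hZ.hasArcHorseshoe hX.toIsRTree hg
      (metricSeg_right_subset (hgate p hZ.mem) (metricSeg_left_subset ht hu)) ?_ hgu
    rintro rfl
    linarith [dist_le_of_mem_metricSeg hu]

variable [CompactSpace X]

/-- If two points near `closure O \ O`, one a preimage of the other, are not in `Z`, then they are
near the same point and hence comparable as seen from `p`. -/
lemma hasArcHorseshoe_of_isChain (hX : IsFiniteRTree X) (hg : Continuous g) (hp : IsFixedPt g p)
    (hch : ∀ x, ChainReaches g p x) {C : Set (Set X)} (hC : ∀ Z ∈ C, ∃ x, IsLeak g p Z x)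
    (hchain : IsChain (· ⊆ ·) C) (hne : C.Nonempty)
    (hnot : ∀ x, ¬ IsLeak g p (closure (⋃₀ C)) x) : HasArcHorseshoe g := by
  have : Nonempty X := ⟨p⟩
  choose! leak hleak using hC
  set O := ⋃₀ C
  have hOc : IsPreconnected O :=
    isPreconnected_sUnion p C (fun Z hZ => (hleak Z hZ).mem) fun Z hZ => (hleak Z hZ).isPreconnected
  have hpO : p ∈ O := hne.elim fun Z hZ => ⟨Z, hZ, (hleak Z hZ).mem⟩
  have hOmaps : MapsTo g O O := fun x ⟨Z, hZ, hx⟩ => ⟨Z, hZ, (hleak Z hZ).mapsTo hx⟩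
  have hcompl := mapsTo_compl_closure hg hOc hpO hOmaps hnot
  have hfin := hX.finite_closure_diff hOc hpO
  obtain ⟨k, hk, hfix⟩ := exists_iterate_eq_self_of_surjOn hfin
    (surjOn_closure_diff (surjective_of_forall_chainReaches hg hch) hOmaps hcompl)
  obtain ⟨η₀, hη₀, hsep⟩ := exists_pos_forall_le_dist hfin
  obtain ⟨η₁, hη₁, hunif⟩ := Metric.uniformContinuous_iff.mp
    (CompactSpace.uniformContinuous_of_continuous (hg.iterate k)) (η₀ / 2) (half_pos hη₀)
  obtain ⟨F, hFO, hF, hcover⟩ := hX.exists_finite_subset hOc hpO (lt_min (half_pos hη₀) hη₁)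
  obtain ⟨Z, hZC, hFZ⟩ := hchain.directedOn.exists_mem_subset_of_finite_of_subset_sUnion hne hF hFO
  have hZ := hleak Z hZC
  set x := leak Z
  have hnear : ∀ y ∈ closure O, y ∉ Z → ∃ l ∈ closure O \ O, y ∈ metricSeg p l ∧
      dist y l < min (η₀ / 2) η₁ := fun y hy hyZ =>
    (hcover y hy).resolve_left fun ⟨o, ho, hyo⟩ =>
      hyZ (hX.metricSeg_subset Z hZ.isPreconnected p hZ.mem o (hFZ ho) hyo)
  have hback : ∀ n y, g^[n] y ∈ closure O → y ∈ closure O := fun n y hy =>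
    by_contra fun hyO => hcompl.iterate n hyO hy
  have hxO : x ∈ closure O := hback 1 x (subset_closure ⟨Z, hZC, hZ.map_mem⟩)
  obtain ⟨u, hgu, hxu⟩ := hZ.exists_iterate_eq hX.toIsRTree hg hp (hch x) hk
  obtain ⟨l, hl, hxl, hxld⟩ := hnear x hxO hZ.notMem
  obtain ⟨l', hl', hul', huld⟩ := hnear u (hback k u (hgu ▸ hxO))
    fun hu => hZ.notMem (hgu ▸ hZ.mapsTo.iterate k hu)
  obtain rfl : l = l' := by
    by_contra hll'
    have := hunif (huld.trans_le (min_le_right _ _))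
    rw [hgu, hfix l' hl'] at this
    linarith [hsep l hl l' hl' hll', dist_triangle_left l l' x, min_le_left (η₀ / 2) η₁]
  have hux : u ∈ metricSeg p x :=
    hX.mem_metricSeg_of_dist_le hul' hxl <| le_of_not_ge fun h =>
      hxu (hX.mem_metricSeg_of_dist_le hxl hul' h)
  exact hZ.hasArcHorseshoe hX.toIsRTree hg hux
    (fun h => hxu (h ▸ right_mem_metricSeg _ _)) hgu

lemma hasArcHorseshoe_of_map_eq_fixedPt (hX : IsFiniteRTree X) (hg : Continuous g)
    (hp : IsFixedPt g p) (hch : ∀ x, ChainReaches g p x) (hx : x ≠ p) (hgx : g x = p) :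
    HasArcHorseshoe g := by
  by_cases hlim : ∃ C : Set (Set X), (∀ Z ∈ C, ∃ x, IsLeak g p Z x) ∧ IsChain (· ⊆ ·) C ∧
      C.Nonempty ∧ ∀ x, ¬ IsLeak g p (closure (⋃₀ C)) x
  · obtain ⟨C, hC, hchain, hne, hnot⟩ := hlim
    exact hasArcHorseshoe_of_isChain hX hg hp hch hC hchain hne hnot
  push Not at hlim
  have hpx : IsLeak g p {p} x := ⟨isClosed_singleton, isPreconnected_singleton, mem_singleton p,
    mapsTo_singleton.mpr hp, hx, hgx⟩
  obtain ⟨Z, -, hZ⟩ := zorn_subset_nonempty {Z | ∃ x, IsLeak g p Z x}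
    (fun C hC hchain hne => ⟨closure (⋃₀ C), hlim C hC hchain hne,
      fun s hs => (subset_sUnion_of_mem hs).trans subset_closure⟩) {p} ⟨x, hpx⟩
  exact hasArcHorseshoe_of_maximal hX hg (surjective_of_forall_chainReaches hg hch) hZ

lemma eq_of_map_eq_of_mem_chainReachableSet (hX : IsFiniteRTree X) (hg : Continuous g)
    (hp : IsFixedPt g p) (hno : ¬ HasArcHorseshoe g) (hx : x ∈ chainReachableSet g p)
    (hgx : g x = p) : x = p := by
  by_contra hne
  have hpre := isPreconnected_chainReachableSet hX.toIsRTree hg hp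
  have := isCompact_iff_compactSpace.mp (isClosed_chainReachableSet (f := g) (p := p)).isCompact
  refine hno (HasArcHorseshoe.of_restrict hX.toIsRTree hpre mapsTo_chainReachableSet ?_)
  refine hasArcHorseshoe_of_map_eq_fixedPt (hX.subtype isClosed_chainReachableSet hpre)
    (hg.restrict _) (p := ⟨p, self_mem_chainReachableSet hp⟩) (x := ⟨x, hx⟩) (Subtype.ext hp)
    (fun y => ?_) (fun h => hne (congrArg Subtype.val h)) (Subtype.ext hgx)
  exact ChainReaches.restrict hg hp y.2

lemma eq_of_iterate_eq_of_mem_chainReachableSet (hX : IsFiniteRTree X) (hg : Continuous g)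
    (hp : IsFixedPt g p) (hno : ¬ HasArcHorseshoe g) {n : ℕ} (hx : x ∈ chainReachableSet g p)
    (hgx : g^[n] x = p) : x = p := by
  induction n generalizing x with
  | zero => exact hgx
  | succ n ih =>
    exact eq_of_map_eq_of_mem_chainReachableSet hX hg hp hno hx
      (ih (mapsTo_chainReachableSet hx) hgx)

end FixedPointPreimages

/-! ### Branches at a fixed point -/

section Branches

variable {X : Type*} [MetricSpace X] {p w x y z : X}

/-- The connected component of `z` in the complement of `p`, described by metric segments. It is
empty for `z = p`. -/
def branch (p z : X) : Set X := {x | p ∉ metricSeg x z}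

lemma mem_branch_comm : x ∈ branch p z ↔ z ∈ branch p x := by
  rw [branch, mem_ofPred_eq, metricSeg_comm]; rfl

lemma self_mem_branch (h : x ≠ p) : x ∈ branch p x :=
  fun hp => h (eq_of_mem_metricSeg_self hp).symm

lemma ne_of_mem_branch (h : x ∈ branch p z) : x ≠ p := by
  rintro rfl
  exact h (left_mem_metricSeg _ _)

lemma mem_branch_of_mem_metricSeg (h : x ∈ metricSeg p z) (hx : x ≠ p) : x ∈ branch p z := by
  intro hp
  rw [mem_metricSeg] at *
  exact hx (dist_eq_zero.mp (by linarith [dist_comm p x]))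

lemma isOpen_branch (p z : X) : IsOpen (branch p z) :=
  (isClosed_eq (f := fun x => dist x p + dist p z) (by fun_prop) (by fun_prop)).isOpen_compl

/-- The branch at `p` containing `z` begins with the segment from `p` to `w`. -/
structure IsStem (p z w : X) : Prop where
  mem : w ∈ metricSeg p z
  ne : w ≠ p
  mem_or_mem : ∀ x ∈ branch p z, x ∈ metricSeg p w ∨ w ∈ metricSeg p x

namespace IsStem

lemma zero_lt_dist (hw : IsStem p z w) : 0 < dist p w := dist_pos.mpr hw.ne.symm

lemma ne_right (hw : IsStem p z w) : z ≠ p := fun h =>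
  hw.ne (eq_of_mem_metricSeg_self (h ▸ hw.mem))

lemma mem_branch (hw : IsStem p z w) (hx : x ∈ metricSeg p w) (hxp : x ≠ p) : x ∈ branch p z :=
  mem_branch_of_mem_metricSeg (metricSeg_left_subset hw.mem hx) hxp

lemma mem_of_dist_le (hw : IsStem p z w) (hx : x ∈ branch p z) (h : dist p x ≤ dist p w) :
    x ∈ metricSeg p w := by
  refine (hw.mem_or_mem x hx).elim id fun hwx => ?_
  rw [mem_metricSeg] at hwx
  have hwx : w = x := dist_eq_zero.mp (by linarith [dist_nonneg (x := w) (y := x)])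
  exact hwx ▸ right_mem_metricSeg p w

lemma mem_metricSeg_of_dist_le (hw : IsStem p z w) (hX : IsRTree X) (hx : x ∈ metricSeg p w)
    (hy : y ∈ branch p z) (h : dist p x ≤ dist p y) : x ∈ metricSeg p y :=
  (hw.mem_or_mem y hy).elim (fun hyw => hX.mem_metricSeg_of_dist_le hx hyw h)
    fun hwy => metricSeg_left_subset hwy hx

end IsStem

lemma IsRTree.mem_branch_trans (hX : IsRTree X) (hxy : x ∈ branch p y) (hyz : y ∈ branch p z) :
    x ∈ branch p z :=
  fun h => (hX.metricSeg_subset_union x z y h).elim hxy hyz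

lemma IsRTree.isClosed_insert_branch (hX : IsRTree X) (p z : X) :
    IsClosed (insert p (branch p z)) := by
  rw [← closure_subset_iff_isClosed]
  intro x hx
  by_cases hxp : x = p
  · exact Or.inl hxp
  obtain ⟨y, hyx, rfl | hyz⟩ := mem_closure_iff.mp hx _ (isOpen_branch p x) (self_mem_branch hxp)
  · exact absurd rfl (ne_of_mem_branch hyx)
  · exact Or.inr (hX.mem_branch_trans (mem_branch_comm.mp hyx) hyz)

lemma IsRTree.isCompact_inter_branch (hX : IsRTree X) {T : Set X} (hT : IsCompact T) {s : ℝ}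
    (hs : 0 < s) (p z : X) : IsCompact {x ∈ T ∩ branch p z | s ≤ dist p x} := by
  convert (hT.inter_right (hX.isClosed_insert_branch p z)).inter_right
    (isClosed_le continuous_const (by fun_prop) : IsClosed {x | s ≤ dist p x}) using 1
  ext x
  constructor
  · exact fun ⟨⟨hxT, hx⟩, hxs⟩ => ⟨⟨hxT, Or.inr hx⟩, hxs⟩
  · rintro ⟨⟨hxT, rfl | hx⟩, hxs⟩
    · rw [mem_ofPred_eq, dist_self] at hxs
      exact absurd hxs hs.not_ge
    · exact ⟨⟨hxT, hx⟩, hxs⟩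

lemma IsFiniteRTree.exists_isStem (hX : IsFiniteRTree X) (hz : z ≠ p) : ∃ w, IsStem p z w := by
  classical
  obtain ⟨V, hV⟩ := hX.exists_ends
  choose m hmz hmv hmzv using fun v => hX.exists_median p z v
  obtain ⟨w, hw, hmin⟩ := (insert z ((V.image m).filter (· ≠ p))).exists_min_image (dist p)
    (Finset.insert_nonempty _ _)
  have hwz : w ∈ metricSeg p z ∧ w ≠ p := by
    rcases Finset.mem_insert.mp hw with rfl | hw
    · exact ⟨right_mem_metricSeg _ _, hz⟩
    · obtain ⟨hw, hwp⟩ := Finset.mem_filter.mp hw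
      obtain ⟨v, -, rfl⟩ := Finset.mem_image.mp hw
      exact ⟨hmz v, hwp⟩
  refine ⟨w, hwz.1, hwz.2, fun x hx => ?_⟩
  obtain ⟨v, hv, hxv⟩ := hV p x
  have hxv' : x ∈ branch p v := mem_branch_of_mem_metricSeg hxv (ne_of_mem_branch hx)
  have hmp : m v ≠ p := fun h =>
    hX.mem_branch_trans (mem_branch_comm.mp hx) hxv' (h ▸ hmzv v)
  have hwm : dist p w ≤ dist p (m v) := hmin _ <| Finset.mem_insert_of_mem <|
    Finset.mem_filter.mpr ⟨Finset.mem_image_of_mem m hv, hmp⟩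
  have hwv : w ∈ metricSeg p v :=
    metricSeg_left_subset (hmv v) (hX.mem_metricSeg_of_dist_le hwz.1 (hmz v) hwm)
  exact (le_total (dist p x) (dist p w)).imp (hX.mem_metricSeg_of_dist_le hxv hwv)
    (hX.mem_metricSeg_of_dist_le hwv hxv)

end Branches

section BranchDynamics

variable {X : Type*} [MetricSpace X] {g : X → X} {T : Set X} {a p u w x z : X}

lemma IsStem.hasArcHorseshoe (hw : IsStem p z w) (hX : IsRTree X) (hg : Continuous g)
    (ha : a ∈ metricSeg p w) (hu : u ∈ metricSeg p w) (hx : x ∈ metricSeg p w)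
    (hau : dist p a < dist p u) (hux : dist p u < dist p x) (hga : g a ∈ branch p z)
    (hgu : g u ∈ branch p z) (hgx : g x ∈ branch p z) (hgaa : dist p (g a) ≤ dist p a)
    (hgxa : dist p (g x) ≤ dist p a) (hgux : dist p x ≤ dist p (g u)) : HasArcHorseshoe g := by
  have haw := dist_le_of_mem_metricSeg ha
  have hax : a ∈ metricSeg p x := hX.mem_metricSeg_of_dist_le ha hx (hau.trans hux).le
  have huax : u ∈ metricSeg a x :=
    ((hX.metricSeg_subset_union p x a (hX.mem_metricSeg_of_dist_le hu hx hux.le)).resolve_left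
      fun h => (dist_le_of_mem_metricSeg h).not_gt hau)
  have hxgu : x ∈ metricSeg p (g u) := hw.mem_metricSeg_of_dist_le hX hx hgu hgux
  have hcover : ∀ b ∈ branch p z, dist p b ≤ dist p a → metricSeg a x ⊆ metricSeg b (g u) := by
    intro b hb hba
    have hbw := hw.mem_of_dist_le hb (hba.trans haw)
    have hagu : a ∈ metricSeg b (g u) := mem_metricSeg_of_mem_left (metricSeg_left_subset hxgu hax)
      (hX.mem_metricSeg_of_dist_le hbw ha hba)
    exact (metricSeg_left_subset (mem_metricSeg_of_mem_left hxgu hax)).trans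
      (metricSeg_right_subset hagu)
  refine ⟨1, le_rfl, a, u, x, huax, ?_, ?_, ?_, ?_⟩
  · rintro rfl; exact hau.false
  · rintro rfl; exact hux.false
  · exact (hcover _ hga hgaa).trans (hX.metricSeg_subset_image_metricSeg hg a u)
  · rw [metricSeg_comm u x]
    exact (hcover _ hgx hgxa).trans (hX.metricSeg_subset_image_metricSeg hg x u)

lemma IsStem.exists_dist_map_lt (hw : IsStem p z w) (hX : IsRTree X) (hg : Continuous g)
    (hpull : ∀ s > 0, s ≤ dist p w → ∃ x ∈ T ∩ branch p z, s ≤ dist p x ∧ dist p (g x) ≤ s)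
    (hu : u ∈ metricSeg p w) (hup : u ≠ p) (hgu : dist p u < dist p (g u)) :
    ∃ x ∈ T ∩ branch p z, dist p u ≤ dist p x ∧ dist p (g x) < dist p u := by
  by_contra! hcon
  have hs : 0 < dist p u := dist_pos.mpr hup.symm
  obtain ⟨δ, hδ, hball⟩ := Metric.isOpen_iff.mp
    (isOpen_lt continuous_const (by fun_prop) : IsOpen {x | dist p u < dist p (g x)}) u hgu
  set s := max (dist p u / 2) (dist p u - δ / 2)
  have hsu : s < dist p u := max_lt (by linarith) (by linarith)
  obtain ⟨x, hx, hsx, hgx⟩ := hpull s (lt_max_of_lt_left (by linarith))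
    (hsu.le.trans (dist_le_of_mem_metricSeg hu))
  rcases le_or_gt (dist p u) (dist p x) with hux | hxu
  · exact (hsu.trans_le (hcon x hx hux)).not_ge hgx
  · have hxw := hw.mem_of_dist_le hx.2 (hxu.le.trans (dist_le_of_mem_metricSeg hu))
    have hxu' := hX.mem_metricSeg_of_dist_le hxw hu hxu.le
    rw [mem_metricSeg] at hxu'
    have hlt : dist p u < dist p (g x) := hball (Metric.mem_ball.mpr (by
      linarith [le_max_right (dist p u / 2) (dist p u - δ / 2)]))
    linarith

lemma IsStem.exists_isMinOn_dist_map (hw : IsStem p z w) (hX : IsRTree X) (hg : Continuous g)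
    (hT : IsCompact T)
    (hpull : ∀ s > 0, s ≤ dist p w → ∃ x ∈ T ∩ branch p z, s ≤ dist p x ∧ dist p (g x) ≤ s)
    (hu : u ∈ metricSeg p w) (hup : u ≠ p) (hgu : dist p u < dist p (g u)) :
    ∃ x ∈ {x ∈ T ∩ branch p z | dist p u ≤ dist p x}, dist p (g x) < dist p u ∧
      IsMinOn (fun x => dist p (g x)) {x ∈ T ∩ branch p z | dist p u ≤ dist p x} x := by
  obtain ⟨y, hy, huy, hgy⟩ := hw.exists_dist_map_lt hX hg hpull hu hup hgu
  obtain ⟨x, hx, hmin⟩ := (hX.isCompact_inter_branch hT (dist_pos.mpr hup.symm) p z).exists_isMinOn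
    ⟨y, hy, huy⟩ (f := fun x => dist p (g x)) (by fun_prop)
  exact ⟨x, hx, (hmin ⟨hy, huy⟩).trans_lt hgy, hmin⟩

lemma IsStem.exists_forall_dist_lt (hw : IsStem p z w) (hX : IsRTree X) (hg : Continuous g)
    (hT : IsCompact T) (hwT : w ∈ T) (hmaps : MapsTo g (T ∩ branch p z) (branch p z)) :
    ∃ δ > 0, ∀ x ∈ T ∩ branch p z, dist p (g x) < δ → dist p x < dist p w := by
  obtain ⟨x, hx, hmin⟩ := (hX.isCompact_inter_branch hT hw.zero_lt_dist p z).exists_isMinOn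
    ⟨w, ⟨hwT, hw.mem_branch (right_mem_metricSeg _ _) hw.ne⟩, le_rfl⟩
    (f := fun x => dist p (g x)) (by fun_prop)
  refine ⟨dist p (g x), dist_pos.mpr (ne_of_mem_branch (hmaps hx.1)).symm, fun y hy hlt => ?_⟩
  by_contra! hle
  exact (hmin ⟨hy, hle⟩ : dist p (g x) ≤ dist p (g y)).not_gt hlt

lemma IsStem.exists_pushed_past_pulled (hw : IsStem p z w) (hX : IsRTree X) (hg : Continuous g)
    (hp : IsFixedPt g p) (hT : IsCompact T) (hwT : w ∈ T)
    (hmaps : MapsTo g (T ∩ branch p z) (branch p z))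
    (hpull : ∀ s > 0, s ≤ dist p w → ∃ x ∈ T ∩ branch p z, s ≤ dist p x ∧ dist p (g x) ≤ s)
    (hpush : ∀ s > 0, s < dist p w → ∃ u ∈ metricSeg p w, dist p u ≤ s ∧ s < dist p (g u)) :
    ∃ u ∈ metricSeg p w, u ≠ p ∧ ∃ x ∈ {x ∈ T ∩ branch p z | dist p u ≤ dist p x},
      dist p (g x) < dist p u ∧ dist p x < dist p w ∧ dist p x < dist p (g u) ∧
      IsMinOn (fun x => dist p (g x)) {x ∈ T ∩ branch p z | dist p u ≤ dist p x} x := by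
  have hne : ∀ {s u}, 0 < s → s < dist p (g u) → u ≠ p := by
    rintro s u hs hsu rfl
    rw [hp.eq, dist_self] at hsu
    exact hs.not_gt hsu
  have hw0 := hw.zero_lt_dist
  obtain ⟨δ, hδ, hfar⟩ := hw.exists_forall_dist_lt hX hg hT hwT hmaps
  obtain ⟨u, hu, hus, hsu⟩ := hpush (min δ (dist p w) / 2) (by positivity)
    (by linarith [min_le_right δ (dist p w)])
  have hup := hne (by positivity) hsu
  obtain ⟨x, hx, hgx, hxmin⟩ := hw.exists_isMinOn_dist_map hX hg hT hpull hu hup (by linarith)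
  have hxw : dist p x < dist p w := hfar x hx.1 (by linarith [min_le_left δ (dist p w)])
  have hx0 : 0 < dist p x := dist_pos.mpr (ne_of_mem_branch hx.1.2).symm
  obtain ⟨u', hu', hu'x, hxu'⟩ := hpush (dist p x) hx0 hxw
  have hup' := hne hx0 hxu'
  obtain ⟨x', hx', hgx', hx'min⟩ :=
    hw.exists_isMinOn_dist_map hX hg hT hpull hu' hup' (by linarith)
  refine ⟨u', hu', hup', ?_⟩
  rcases le_or_gt (dist p x') (dist p x) with hle | hlt
  · exact ⟨x', hx', hgx', by linarith, by linarith, hx'min⟩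
  · have hxx' : dist p (g x) ≤ dist p (g x') := hxmin ⟨hx'.1, hx.2.trans hlt.le⟩
    exact ⟨x, ⟨hx.1, hu'x⟩, hxx'.trans_lt hgx', hxw, hxu', fun y hy => hxx'.trans (hx'min hy)⟩

theorem IsStem.hasArcHorseshoe_of_pull_of_push (hw : IsStem p z w) (hX : IsRTree X)
    (hg : Continuous g) (hp : IsFixedPt g p) (hT : IsCompact T) (hwT : metricSeg p w ⊆ T)
    (hmaps : MapsTo g (T ∩ branch p z) (branch p z))
    (hpull : ∀ s > 0, s ≤ dist p w → ∃ x ∈ T ∩ branch p z, s ≤ dist p x ∧ dist p (g x) ≤ s)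
    (hpush : ∀ s > 0, s < dist p w → ∃ u ∈ metricSeg p w, dist p u ≤ s ∧ s < dist p (g u)) :
    HasArcHorseshoe g := by
  obtain ⟨u, hu, hup, x, ⟨hx, hux⟩, hgxu, hxw, hxgu, hmin⟩ := hw.exists_pushed_past_pulled hX hg hp
    hT (hwT (right_mem_metricSeg _ _)) hmaps hpull hpush
  have hxseg := hw.mem_of_dist_le hx.2 hxw.le
  have hux : dist p u < dist p x := lt_of_le_of_ne hux fun h => by
    rw [hX.eq_of_dist_eq hu hxseg h] at hgxu hxgu
    exact hgxu.not_gt hxgu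
  have hgx := hmaps hx
  have hgxseg : g x ∈ metricSeg p w := hw.mem_of_dist_le hgx (by linarith)
  obtain ⟨a, ha, hgxa, hau, hgaa⟩ : ∃ a ∈ branch p z, dist p (g x) ≤ dist p a ∧
      dist p a < dist p u ∧ dist p (g a) ≤ dist p a := by
    rcases le_or_gt (dist p (g (g x))) (dist p (g x)) with hle | hlt
    · exact ⟨g x, hgx, le_rfl, hgxu, hle⟩
    · obtain ⟨y, hy, hgxy, hgy⟩ :=
        hw.exists_dist_map_lt hX hg hpull hgxseg (ne_of_mem_branch hgx) hlt
      refine ⟨y, hy.2, hgxy, lt_of_not_ge fun huy => ?_, by linarith⟩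
      exact (hmin ⟨hy, huy⟩ : dist p (g x) ≤ dist p (g y)).not_gt hgy
  have haseg := hw.mem_of_dist_le ha (by linarith)
  exact hw.hasArcHorseshoe hX hg haseg hu hxseg hau hux (hmaps ⟨hwT haseg, ha⟩)
    (hmaps ⟨hwT hu, hw.mem_branch hu hup⟩) hgx hgaa hgxa hxgu.le

end BranchDynamics

section Iteration

variable {α β : Type*} {g : α → α}

lemma exists_iterate_add_self_eq [Finite α] (g : α → α) : ∃ K, 1 ≤ K ∧ g^[K + K] = g^[K] := by
  obtain ⟨i, j, hij, hg⟩ : ∃ i j, i < j ∧ g^[i] = g^[j] := by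
    obtain ⟨i, j, hne, hg⟩ := Finite.exists_ne_map_eq_of_infinite (fun n : ℕ => g^[n])
    rcases hne.lt_or_gt with h | h
    exacts [⟨i, j, h, hg⟩, ⟨j, i, h, hg.symm⟩]
  have hperiod : ∀ n, i ≤ n → g^[n + (j - i)] = g^[n] := by
    intro n hn
    rw [show n + (j - i) = n - i + j by omega, iterate_add, ← hg, ← iterate_add,
      Nat.sub_add_cancel hn]
  have hperiods : ∀ q n, i ≤ n → g^[n + (j - i) * q] = g^[n] := by
    intro q
    induction q with
    | zero => exact fun _ _ => rfl
    | succ q ih =>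
      intro n hn
      rw [Nat.mul_succ, ← add_assoc, hperiod _ (by omega), ih n hn]
  have hpos : 0 < j - i := by omega
  exact ⟨(j - i) * (i + 1), Nat.mul_pos hpos i.succ_pos,
    hperiods _ _ (i.le_succ.trans (Nat.le_mul_of_pos_left _ hpos))⟩

lemma exists_iterate_rel [Finite β] (r : Setoid α) (c : α → β) (hc : ∀ x y, c x = c y → r x y)
    (hg : ∀ x y, r x y → r (g x) (g y)) :
    ∃ K, 1 ≤ K ∧ ∀ x, r (g^[K] (g^[K] x)) (g^[K] x) := by
  have : Finite (Quotient r) := by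
    refine Finite.of_injective (fun q : Quotient r => c q.out) fun q q' h => ?_
    rw [← q.out_eq, ← q'.out_eq]
    exact Quotient.sound (hc _ _ h)
  have hsemi : Semiconj (Quotient.mk r) g (Quotient.map g hg) := fun _ => rfl
  obtain ⟨K, hK, hidem⟩ := exists_iterate_add_self_eq (Quotient.map g hg)
  refine ⟨K, hK, fun x => Quotient.exact ?_⟩
  rw [← iterate_add_apply, (hsemi.iterate_right _).eq, (hsemi.iterate_right _).eq, hidem]

lemma exists_forall_dist_iterate_div {X : Type*} [MetricSpace X] {f : X → X} (hf : Continuous f)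
    {N : ℕ} {p : X} (hN : 0 < N) (hp : IsPeriodicPt f N p) {ε : ℝ} (hε : 0 < ε) :
    ∃ ε' > 0, ∀ y n, dist ((f^[N])^[n / N] y) p < ε' → dist (f^[n] y) (f^[n] p) < ε := by
  have hnear : ∀ᶠ u in 𝓝 p, ∀ r ∈ Finset.range N, dist (f^[r] u) (f^[r] p) < ε :=
    (eventually_all_finset _).mpr fun r _ => Metric.tendsto_nhds.mp ((hf.iterate r).tendsto p) ε hε
  obtain ⟨ε', hε', hclose⟩ := Metric.eventually_nhds_iff.mp hnear
  have hsplit : ∀ n x, f^[n % N] ((f^[N])^[n / N] x) = f^[n] x := fun n x => by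
    rw [← iterate_mul, ← iterate_add_apply, Nat.mod_add_div]
  refine ⟨ε', hε', fun y n hy => ?_⟩
  have := hclose hy (n % N) (Finset.mem_range.mpr (n.mod_lt hN))
  rwa [hsplit, ← (hp.isFixedPt.iterate (n / N)).eq, hsplit] at this

end Iteration

section Branches

variable {X : Type*} [MetricSpace X] [CompactSpace X] {g : X → X} {p x y : X}

lemma iterate_mem_branch (hX : IsFiniteRTree X) (hg : Continuous g) (hp : IsFixedPt g p)
    (hno : ¬ HasArcHorseshoe g) (hx : x ∈ chainReachableSet g p) (hy : y ∈ chainReachableSet g p)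
    (h : x ∈ branch p y) (k : ℕ) : g^[k] x ∈ branch p (g^[k] y) := by
  intro hpk
  obtain ⟨u, hu, hup⟩ := hX.metricSeg_subset_image_metricSeg (hg.iterate k) x y hpk
  have hu' := hX.metricSeg_subset _
    (isPreconnected_chainReachableSet hX.toIsRTree hg hp) x hx y hy hu
  rw [eq_of_iterate_eq_of_mem_chainReachableSet hX hg hp hno hu' hup] at hu
  exact h hu

/-- Only finitely many branches issue from `p`, so some power of the action of `g` on those meeting
the chain reachable set is idempotent. -/
lemma exists_iterate_mem_branch (hX : IsFiniteRTree X) (hg : Continuous g) (hp : IsFixedPt g p)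
    (hno : ¬ HasArcHorseshoe g) : ∃ K, 1 ≤ K ∧ ∀ x ∈ chainReachableSet g p, x ≠ p →
      g^[K] (g^[K] x) ∈ branch p (g^[K] x) := by
  let D := chainReachableSet g p \ {p}
  have hmaps : MapsTo g D D := fun x hx => ⟨mapsTo_chainReachableSet hx.1, fun h =>
    hx.2 (eq_of_iterate_eq_of_mem_chainReachableSet hX hg hp hno (n := 1) hx.1 h)⟩
  let r : Setoid D :=
    { r := fun x y => x.1 ∈ branch p y
      iseqv := ⟨fun x => self_mem_branch x.2.2, fun h => mem_branch_comm.mp h,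
        fun h h' => hX.mem_branch_trans h h'⟩ }
  obtain ⟨V, hV⟩ := hX.exists_ends
  choose v hvV hv using hV p
  have hend : ∀ x : D, x.1 ∈ branch p (v x) := fun x => mem_branch_of_mem_metricSeg (hv x) x.2.2
  obtain ⟨K, hK, hrel⟩ := exists_iterate_rel r (fun x : D => (⟨v x, hvV x⟩ : V))
    (g := hmaps.restrict g D D) (fun x y h => hX.mem_branch_trans (hend x)
      (by rw [show v x = v y from Subtype.ext_iff.mp h]; exact mem_branch_comm.mp (hend y)))
    (fun x y h => iterate_mem_branch hX hg hp hno x.2.1 y.2.1 h 1)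
  refine ⟨K, hK, fun x hx hxp => ?_⟩
  have := hrel ⟨x, hx, hxp⟩
  rw [MapsTo.iterate_restrict] at this
  exact this

end Branches

section Instability

variable {X : Type*} [MetricSpace X] {g : X → X} {S T A : Set X} {p w x z : X} {s : ℝ}

lemma exists_mem_closure_iterates_near [CompactSpace X]
    (h : ∀ δ > 0, ∃ y ∈ S, dist y p < δ ∧ ∃ j, g^[j] y ∈ A) :
    ∃ w ∈ closure A, ∀ δ > 0, ∃ y ∈ S, dist y p < δ ∧ ∃ j, dist (g^[j] y) w < δ := by
  choose y hyS hyp j hj using fun m : ℕ => h (1 / ((m : ℝ) + 1)) (by positivity)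
  obtain ⟨w, φ, hφ, hw⟩ := CompactSpace.tendsto_subseq fun m => g^[j m] (y m)
  refine ⟨w, mem_closure_of_tendsto hw (Eventually.of_forall fun m => hj _), fun δ hδ => ?_⟩
  have hsmall : ∀ᶠ m : ℕ in atTop, 1 / ((φ m : ℝ) + 1) < δ :=
    (tendsto_one_div_add_atTop_nhds_zero_nat.comp hφ.tendsto_atTop).eventually (gt_mem_nhds hδ)
  obtain ⟨m, hm, hmw⟩ := (hsmall.and (Metric.tendsto_nhds.mp hw δ hδ)).exists
  exact ⟨_, hyS _, (hyp _).trans hm, _, hmw⟩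

/-- Otherwise the points of `branch p z` at distance at least `s` from `p` would be pushed
further away from `p`, and no chain would leave them. -/
lemma exists_dist_map_le_of_chainReaches (hX : IsRTree X) (hg : Continuous g) (hT : IsCompact T)
    (hTT : MapsTo g T T) (hmaps : MapsTo g (T ∩ branch p z) (branch p z)) (hp : p ∈ T)
    (hz : z ∈ T) (hzp : ChainReaches (hTT.restrict g T T) ⟨z, hz⟩ ⟨p, hp⟩) (hs : 0 < s)
    (hsz : s ≤ dist p z) : ∃ x ∈ T ∩ branch p z, s ≤ dist p x ∧ dist p (g x) ≤ s := by
  by_contra! hcon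
  have hopen : IsOpen (branch p z ∩ {x | s < dist p x}) :=
    (isOpen_branch p z).inter (isOpen_lt continuous_const (by fun_prop))
  obtain ⟨δ, hδ, hsub⟩ := ((hX.isCompact_inter_branch hT hs p z).image hg
    ).exists_thickening_subset_open hopen (by
      rintro _ ⟨x, ⟨hx, hsx⟩, rfl⟩
      exact ⟨hmaps hx, hcon x hx hsx⟩)
  have hstay : (⟨p, hp⟩ : T) ∈ {x : T | x.1 ∈ {x ∈ T ∩ branch p z | s ≤ dist p x}} := by
    refine mem_of_epsChain (fun x hx y hxy => ?_) (hzp δ hδ) ?_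
    · have hy := hsub (Metric.mem_thickening_iff.mpr ⟨g x, mem_image_of_mem g hx, by
        rw [dist_comm]; exact hxy⟩)
      exact ⟨⟨y.2, hy.1⟩, hy.2.le⟩
    · exact ⟨⟨hz, self_mem_branch fun h => by rw [h, dist_self] at hsz; linarith⟩, hsz⟩
  have hsp : s ≤ dist p p := hstay.2
  rw [dist_self] at hsp
  linarith

lemma exists_map_notMem_map_map_mem {α : Type*} {g : α → α} {U : Set α} {y : α} {n : ℕ}
    (h₀ : y ∉ U) (h₁ : g y ∉ U) (hn : g^[n] y ∈ U) :
    ∃ j, g (g^[j] y) ∉ U ∧ g (g (g^[j] y)) ∈ U := by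
  classical
  have hex : ∃ n, g^[n] y ∈ U := ⟨n, hn⟩
  have hfind := Nat.find_spec hex
  have hmin : ∀ k < Nat.find hex, g^[k] y ∉ U := fun k => Nat.find_min hex
  rcases hk : Nat.find hex with _ | _ | k
  · rw [hk] at hfind
    exact absurd hfind h₀
  · rw [hk] at hfind
    exact absurd hfind h₁
  · rw [hk] at hfind hmin
    refine ⟨k, ?_, ?_⟩
    · rw [← iterate_succ_apply' g]
      exact hmin (k + 1) (by omega)
    · rwa [← iterate_succ_apply' g, ← iterate_succ_apply' g]

/-- A limit of the points whose orbit is two steps away from entering `U` is in the chain reachable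
set, so that the idempotency of the action on branches applies to it. -/
lemma IsStem.exists_dist_lt_dist_map [CompactSpace X] (hw : IsStem p z w) (hX : IsRTree X)
    (hg : Continuous g) (hp : IsFixedPt g p)
    (hidem : ∀ x ∈ chainReachableSet g p, x ≠ p → g (g x) ∈ branch p (g x))
    (hz : ∀ δ > 0, ∃ y, dist y p < δ ∧ ∃ j, dist (g^[j] y) z < δ) (hs : 0 < s)
    (hsw : s < dist p w) : ∃ u ∈ metricSeg p w, dist p u ≤ s ∧ s < dist p (g u) := by
  let U := branch p z ∩ {x | s < dist p x}
  have hU : IsOpen U := (isOpen_branch p z).inter (isOpen_lt continuous_const (by fun_prop))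
  have hentry : ∀ δ > 0, ∃ y ∈ univ, dist y p < δ ∧ ∃ j, g^[j] y ∈ {v | g v ∉ U ∧ g (g v) ∈ U} := by
    intro δ hδ
    obtain ⟨η, hη, hgη⟩ := Metric.continuousAt_iff.mp hg.continuousAt s hs
    obtain ⟨r, hr, hball⟩ := Metric.isOpen_iff.mp hU z ⟨self_mem_branch hw.ne_right, hsw.trans_le
      (dist_le_of_mem_metricSeg hw.mem)⟩
    obtain ⟨y, hy, j, hj⟩ := hz (min (min s η) (min r δ)) (by positivity)
    simp only [lt_inf_iff] at hy hj
    have hgy := hgη hy.1.2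
    rw [hp.eq] at hgy
    obtain ⟨i, hi⟩ := exists_map_notMem_map_map_mem (g := g) (U := U) (y := y)
      (fun h => (dist_comm y p ▸ hy.1.1).not_gt h.2)
      (fun h => (dist_comm (g y) p ▸ hgy).not_gt h.2) (hball hj.2.1)
    exact ⟨y, mem_univ y, hy.2.2, i, hi⟩
  obtain ⟨r, hr, hrp⟩ := exists_mem_closure_iterates_near hentry
  have hrT : r ∈ chainReachableSet g p :=
    ChainReaches.of_iterates_near hp fun δ hδ => by simpa using hrp δ hδ
  have hsr : s ≤ dist p (g (g r)) :=
    (isClosed_le continuous_const (by fun_prop)).closure_subset_iff.mpr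
      (fun v hv => le_of_lt (show s < dist p (g (g v)) from hv.2.2)) hr
  have hggr : g (g r) ≠ p := fun h => by rw [h, dist_self] at hsr; linarith
  have hgr : g r ≠ p := fun h => hggr (by rw [h, hp.eq])
  have hrp : r ≠ p := fun h => hgr (by rw [h, hp.eq])
  obtain ⟨v, ⟨hv, hgv⟩, hvU, hvU'⟩ := mem_closure_iff.mp hr
    (g ⁻¹' branch p (g r) ∩ (g ∘ g) ⁻¹' branch p (g (g r)))
    (((isOpen_branch _ _).preimage hg).inter ((isOpen_branch _ _).preimage (hg.comp hg)))
    ⟨self_mem_branch hgr, self_mem_branch hggr⟩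
  have hvz : g v ∈ branch p z := hX.mem_branch_trans hv (hX.mem_branch_trans
    (mem_branch_comm.mp (hidem r hrT hrp)) (hX.mem_branch_trans (mem_branch_comm.mp hgv) hvU'.1))
  have hvs : dist p (g v) ≤ s := not_lt.mp fun h => hvU ⟨hvz, h⟩
  exact ⟨g v, hw.mem_of_dist_le hvz (hvs.trans hsw.le), hvs, hvU'.2⟩

variable [CompactSpace X]

lemma hasArcHorseshoe_of_mem_branch_of_escape (hX : IsFiniteRTree X) (hg : Continuous g)
    (hp : IsFixedPt g p)
    (hidem : ∀ x ∈ chainReachableSet g p, x ≠ p → g (g x) ∈ branch p (g x)) {ε : ℝ} (hε : 0 < ε)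
    (hesc : ∀ δ > 0, ∃ y ∈ chainRecurrentSet g, dist y p < δ ∧ ∃ n, ε ≤ dist (g^[n] y) p) :
    HasArcHorseshoe g := by
  by_contra hno
  obtain ⟨v, hv, hvnear⟩ := exists_mem_closure_iterates_near (A := {v | ε ≤ dist v p}) hesc
  have hvp : v ≠ p := by
    rintro rfl
    have : ε ≤ dist v v := (isClosed_le continuous_const (by fun_prop)).closure_subset hv
    rw [dist_self] at this
    linarith
  have hvT : v ∈ chainReachableSet g p := ChainReaches.of_iterates_near hp fun δ hδ =>
    let ⟨y, _, h⟩ := hvnear δ hδ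
    ⟨y, h⟩
  have hnear : ∀ δ > 0, ∃ y ∈ chainRecurrentSet g, dist y p < δ ∧
      ∃ j, dist (g^[j] y) (g v) < δ := by
    intro δ hδ
    obtain ⟨η, hη, hgη⟩ := Metric.continuousAt_iff.mp (hg.continuousAt (x := v)) δ hδ
    obtain ⟨y, hy, hyp, j, hj⟩ := hvnear (min δ η) (by positivity)
    refine ⟨y, hy, hyp.trans_le (min_le_left _ _), j + 1, ?_⟩
    rw [iterate_succ_apply']
    exact hgη (hj.trans_le (min_le_right _ _))
  have hpT := self_mem_chainReachableSet hp
  have hgvT : g v ∈ chainReachableSet g p := mapsTo_chainReachableSet hvT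
  have hgvp : ChainReaches g (g v) p := ChainReaches.of_recurrent_iterates_near
    (CompactSpace.uniformContinuous_of_continuous hg) hnear
  obtain ⟨w, hw⟩ := hX.exists_isStem fun h =>
    hvp (eq_of_iterate_eq_of_mem_chainReachableSet hX hg hp hno (n := 1) hvT h)
  have hmaps : MapsTo g (chainReachableSet g p ∩ branch p (g v)) (branch p (g v)) :=
    fun x hx => hX.mem_branch_trans (iterate_mem_branch hX hg hp hno hx.1 hgvT hx.2 1)
      (hidem v hvT hvp)
  exact hno (hw.hasArcHorseshoe_of_pull_of_push hX.toIsRTree hg hp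
    isClosed_chainReachableSet.isCompact ((metricSeg_left_subset hw.mem).trans
      (metricSeg_subset_chainReachableSet hX.toIsRTree hg hp hgvT)) hmaps
    (fun s hs hsw => exists_dist_map_le_of_chainReaches hX.toIsRTree hg
      isClosed_chainReachableSet.isCompact mapsTo_chainReachableSet hmaps hpT hgvT
      (ChainReaches.restrict hg hp (x := ⟨_, hgvT⟩) (y := ⟨_, hpT⟩) hgvp) hs
      (hsw.trans (dist_le_of_mem_metricSeg hw.mem)))
    fun s hs hsw => hw.exists_dist_lt_dist_map hX.toIsRTree hg hp hidem
      (fun δ hδ => let ⟨y, _, h⟩ := hnear δ hδ; ⟨y, h⟩) hs hsw)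

theorem hasArcHorseshoe_of_not_equicontinuous (hX : IsFiniteRTree X) (hg : Continuous g)
    (hp : p ∈ periodicPts g) {ε : ℝ} (hε : 0 < ε)
    (hbad : ∀ δ > 0, ∃ y ∈ chainRecurrentSet g, dist y p < δ ∧
      ∃ n, ε ≤ dist (g^[n] y) (g^[n] p)) : HasArcHorseshoe g := by
  by_contra hno
  obtain ⟨m, hm, hpm⟩ := hp
  obtain ⟨K, hK, hidem⟩ := exists_iterate_mem_branch hX (hg.iterate m) hpm
    fun h => hno (h.of_iterate hm)
  obtain ⟨ε', hε', hdiv⟩ :=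
    exists_forall_dist_iterate_div hg (Nat.mul_pos hm hK) (hpm.mul_const K) hε
  refine hno (HasArcHorseshoe.of_iterate (k := m * K)
    (hasArcHorseshoe_of_mem_branch_of_escape hX (hg.iterate _) (hpm.mul_const K) ?_ hε' ?_)
    (Nat.mul_pos hm hK))
  · intro x hx hxp
    rw [iterate_mul] at hx ⊢
    exact hidem x (ChainReaches.of_iterate hx hK) hxp
  · intro δ hδ
    obtain ⟨y, hy, hyp, n, hn⟩ := hbad δ hδ
    exact ⟨y, mem_chainRecurrentSet_iterate (CompactSpace.uniformContinuous_of_continuous hg) hy _,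
      hyp, n / (m * K), not_lt.mp fun h => (hdiv y n h).not_ge hn⟩

end Instability

/-! ### Entropy of horseshoes -/

section Horseshoe

/-- Some iterate of `f` stretches each of two disjoint closed sets over both of them. -/
def HasHorseshoe {X : Type*} [TopologicalSpace X] (f : X → X) : Prop :=
  ∃ n, 1 ≤ n ∧ ∃ P Q : Set X, IsClosed P ∧ IsClosed Q ∧ Disjoint P Q ∧ P.Nonempty ∧
    SurjOn f^[n] P (P ∪ Q) ∧ SurjOn f^[n] Q (P ∪ Q)

section TopologicalSpace

variable {X : Type*} [TopologicalSpace X] {f g : X → X} {A J K L : Set X} {u : X} {k : ℕ}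

lemma HasHorseshoe.of_iterate (h : HasHorseshoe f^[k]) (hk : 1 ≤ k) : HasHorseshoe f := by
  obtain ⟨n, hn, P, Q, h⟩ := h
  rw [← iterate_mul] at h
  exact ⟨k * n, Nat.mul_pos hk hn, P, Q, h⟩

lemma hasHorseshoe_of_map_notMem (hg : Continuous g) (hJ : IsClosed J) (hK : IsClosed K)
    (hL : IsClosed L) (hLne : L.Nonempty) (hJA : J ⊆ A) (hKA : K ⊆ A) (hLA : L ⊆ A)
    (hgJ : SurjOn g J A) (hgK : SurjOn g K A) (hgL : SurjOn g L A) (hJK : J ∩ K ⊆ {u})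
    (hu : g u ∉ L) : HasHorseshoe g := by
  have hJL : SurjOn g (J ∩ g ⁻¹' L) L := fun y hy =>
    let ⟨x, hx, hxy⟩ := hgJ (hLA hy)
    ⟨x, ⟨hx, by rwa [mem_preimage, hxy]⟩, hxy⟩
  have hunion : J ∩ g ⁻¹' L ∪ K ⊆ A := union_subset (inter_subset_left.trans hJA) hKA
  refine ⟨2, one_le_two, J ∩ g ⁻¹' L, K, hJ.inter (hL.preimage hg), hK, ?_, ?_, ?_, ?_⟩
  · rw [Set.disjoint_left]
    intro y hy hyK
    rw [hJK ⟨hy.1, hyK⟩] at hy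
    exact hu hy.2
  · obtain ⟨y, hy⟩ := hLne
    obtain ⟨x, hx, -⟩ := hJL hy
    exact ⟨x, hx⟩
  · exact (hgL.comp hJL).mono subset_rfl hunion
  · exact (hgK.comp (hgK.mono subset_rfl hKA)).mono subset_rfl hunion

lemma exists_forall_iterate_mem {α : Type*} {g : α → α} {A : ℕ → Set α}
    (hg : ∀ i, SurjOn g (A i) (A (i + 1))) (hne : ∀ i, (A i).Nonempty) (k : ℕ) :
    ∃ x, ∀ i ≤ k, g^[i] x ∈ A i := by
  induction k generalizing A with
  | zero =>
    obtain ⟨x, hx⟩ := hne 0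
    exact ⟨x, fun i hi => by rwa [Nat.le_zero.mp hi]⟩
  | succ k ih =>
    obtain ⟨y, hy⟩ := ih (fun i => hg (i + 1)) fun i => hne (i + 1)
    obtain ⟨x, hx, rfl⟩ := hg 0 (hy 0 k.zero_le)
    refine ⟨x, fun i hi => ?_⟩
    rcases i with _ | i
    · exact hx
    · exact hy i (by omega)

lemma exists_seqCover {Y : Set X} {𝒰 : Finset (Set X)} (h : IsOpenCoverOn Y 𝒰)
    (hY : MapsTo f Y Y) (a : ℕ → ℕ) (n : ℕ) :
    { m | ∃ c : Fin m → Fin n → Set X, (∀ j i, c j i ∈ 𝒰) ∧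
      Y ⊆ ⋃ j, ⋂ i, f^[a i.1] ⁻¹' c j i }.Nonempty := by
  classical
  let e := Fintype.equivFin (Fin n → 𝒰)
  refine ⟨_, fun j i => (e.symm j i).1, fun j i => (e.symm j i).2, fun x hx => ?_⟩
  choose U hU hxU using fun i : Fin n => h.2 (hY.iterate (a i) hx)
  refine mem_iUnion.mpr ⟨e fun i => ⟨U i, hU i⟩, mem_iInter.mpr fun i => ?_⟩
  change f^[a i] x ∈ (e.symm (e _) i).1
  rw [e.symm_apply_apply]
  exact hxU i

lemma topEntropy_pos_of_pow_le_seqCoverCountOn {𝒰 : Finset (Set X)} {b N : ℕ} (hb : 1 < b)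
    (hN : 0 < N) (h𝒰 : IsOpenCoverOn univ 𝒰)
    (h : ∀ k, b ^ k ≤ seqCoverCountOn f univ id 𝒰 (N * k)) : 0 < topEntropy f := by
  have hN' : (0 : ℝ) < N := by exact_mod_cast hN
  have hlogb : 0 < Real.log b := Real.log_pos (by exact_mod_cast hb)
  refine (ENNReal.ofReal_pos.mpr (div_pos hlogb hN')).trans_le (le_trans ?_ (le_iSup₂
    (f := fun (𝒰 : Finset (Set X)) (_ : IsOpenCoverOn univ 𝒰) => limsup (fun n : ℕ =>
      ENNReal.ofReal (Real.log (seqCoverCountOn f univ id 𝒰 n) / n)) atTop) 𝒰 h𝒰))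
  refine le_limsup_of_frequently_le (frequently_atTop.mpr fun n => ?_) (by isBoundedDefault)
  refine ⟨N * (n + 1), by nlinarith, ENNReal.ofReal_le_ofReal ?_⟩
  have hpow : (b : ℝ) ^ (n + 1) ≤ seqCoverCountOn f univ id 𝒰 (N * (n + 1)) := by
    exact_mod_cast h (n + 1)
  have hlog := Real.log_le_log (by positivity) hpow
  rw [Real.log_pow] at hlog
  rw [div_le_div_iff₀ hN' (by positivity)]
  push_cast at hlog ⊢
  nlinarith

lemma two_pow_le_seqCoverCountOn {P Q : Set X} {N : ℕ} (hP : IsClosed P) (hQ : IsClosed Q)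
    (hPQ : Disjoint P Q) (hne : P.Nonempty) (hN : 0 < N) (hfP : SurjOn f^[N] P (P ∪ Q))
    (hfQ : SurjOn f^[N] Q (P ∪ Q)) : ∃ 𝒰, IsOpenCoverOn univ 𝒰 ∧
      ∀ k, 2 ^ k ≤ seqCoverCountOn f univ id 𝒰 (N * k) := by
  classical
  let A : Bool → Set X := fun b => cond b P Q
  have hA : ∀ b b', SurjOn f^[N] (A b) (A b') := by
    rintro (_ | _) (_ | _)
    exacts [hfQ.mono subset_rfl subset_union_right, hfQ.mono subset_rfl subset_union_left,
      hfP.mono subset_rfl subset_union_right, hfP.mono subset_rfl subset_union_left]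
  have hAne : ∀ b, (A b).Nonempty := fun b =>
    let ⟨_, hy⟩ := hne
    let ⟨x, hx, _⟩ := hA b true hy
    ⟨x, hx⟩
  have h𝒰 : IsOpenCoverOn univ (Finset.univ.image fun b => (A b)ᶜ) := by
    refine ⟨by simp [A, hP, hQ], ?_⟩
    simpa [A, ← compl_inter, ← disjoint_iff_inter_eq_empty] using hPQ
  refine ⟨_, h𝒰, fun k => le_csInf (exists_seqCover h𝒰 (mapsTo_univ _ _) _ _) ?_⟩
  rintro m ⟨c, hc, hcover⟩
  choose x hx using fun w : Fin k → Bool => exists_forall_iterate_mem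
    (A := fun i => A (if h : i < k then w ⟨i, h⟩ else true)) (fun _ => hA _ _) (fun _ => hAne _) k
  choose j hj using fun w => mem_iUnion.mp (hcover (mem_univ (x w)))
  have hinj : Injective j := by
    intro w w' hww'
    funext i
    obtain ⟨b, -, hb⟩ := Finset.mem_image.mp (hc (j w) ⟨N * i, Nat.mul_lt_mul_of_pos_left i.2 hN⟩)
    have hne : ∀ v, j v = j w → v i ≠ b := by
      rintro v hv rfl
      have hvA := hx v i i.2.le
      have hvc := mem_iInter.mp (hj v) ⟨N * i, Nat.mul_lt_mul_of_pos_left i.2 hN⟩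
      rw [hv, ← hb, id, iterate_mul] at hvc
      rw [dif_pos i.2] at hvA
      exact hvc hvA
    rw [Bool.eq_not_of_ne (hne w rfl), Bool.eq_not_of_ne (hne w' hww'.symm)]
  simpa using Fintype.card_le_of_injective j hinj

lemma HasHorseshoe.topEntropy_pos (h : HasHorseshoe f) : 0 < topEntropy f := by
  obtain ⟨N, hN, P, Q, hP, hQ, hPQ, hne, hfP, hfQ⟩ := h
  obtain ⟨𝒰, h𝒰, hcount⟩ := two_pow_le_seqCoverCountOn hP hQ hPQ hne hN hfP hfQ
  exact topEntropy_pos_of_pow_le_seqCoverCountOn one_lt_two hN h𝒰 hcount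

end TopologicalSpace

section Arc

variable {X : Type*} [MetricSpace X] {f g : X → X} {a u x : X}

lemma metricSeg_inter_subset (h : u ∈ metricSeg a x) :
    metricSeg a u ∩ metricSeg u x ⊆ {u} := by
  rintro y ⟨hau, hux⟩
  rw [mem_metricSeg] at *
  exact dist_le_zero.mp (by linarith [dist_triangle a y x, dist_comm u y])

lemma hasHorseshoe_of_isFixedPt (hX : IsRTree X) (hg : Continuous g) (hu : u ∈ metricSeg a x)
    (hua : u ≠ a) (hux : u ≠ x) (hgu : IsFixedPt g u)
    (hleft : SurjOn g (metricSeg a u) (metricSeg a x))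
    (hright : SurjOn g (metricSeg u x) (metricSeg a x)) : HasHorseshoe g := by
  obtain ⟨c, hc, hcx⟩ := hleft (right_mem_metricSeg a x)
  obtain ⟨c', hc', hca⟩ := hleft (left_mem_metricSeg a x)
  have hcu : c ≠ u := by rintro rfl; exact hux (hgu.eq.symm.trans hcx)
  have hcu' : c' ≠ u := by rintro rfl; exact hua (hgu.eq.symm.trans hca)
  have hucc' : u ∉ metricSeg c c' := by
    intro hu'
    rw [mem_metricSeg, hX.dist_eq_abs_sub hc hc'] at hu'
    have hc₀ := dist_pos.mpr hcu
    have hc₀' := dist_pos.mpr hcu'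
    rw [mem_metricSeg] at hc hc'
    rcases abs_cases (dist a c - dist a c') with h | h <;> linarith [dist_comm u c']
  have hcc' : metricSeg c c' ⊆ metricSeg a u :=
    hX.metricSeg_subset _ (hX.isPreconnected_metricSeg a u) c hc c' hc'
  have hunion : metricSeg c c' ∪ metricSeg u x ⊆ metricSeg a x :=
    union_subset (hcc'.trans (metricSeg_left_subset hu)) (metricSeg_right_subset hu)
  refine ⟨1, le_rfl, metricSeg c c', metricSeg u x, isClosed_metricSeg _ _, isClosed_metricSeg _ _,
    ?_, ⟨c, left_mem_metricSeg _ _⟩, ?_, hright.mono subset_rfl hunion⟩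
  · rw [Set.disjoint_left]
    intro y hy hyu
    rw [metricSeg_inter_subset hu ⟨hcc' hy, hyu⟩] at hy
    exact hucc' hy
  · have := hX.metricSeg_subset_image_metricSeg hg c c'
    rw [hcx, hca, metricSeg_comm] at this
    exact hunion.trans this

lemma HasArcHorseshoe.hasHorseshoe (hX : IsRTree X) (hf : Continuous f) (h : HasArcHorseshoe f) :
    HasHorseshoe f := by
  obtain ⟨n, hn, a, u, x, hu, hua, hux, hleft, hright⟩ := h
  refine HasHorseshoe.of_iterate ?_ hn
  have hmiss : ∀ L, IsClosed L → L.Nonempty → L ⊆ metricSeg a x →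
      SurjOn f^[n] L (metricSeg a x) → f^[n] u ∉ L → HasHorseshoe f^[n] :=
    fun L hL hne hLs hfL => hasHorseshoe_of_map_notMem (hf.iterate n) (isClosed_metricSeg a u)
      (isClosed_metricSeg u x) hL hne (metricSeg_left_subset hu) (metricSeg_right_subset hu) hLs
      hleft hright hfL (metricSeg_inter_subset hu)
  by_cases hfl : f^[n] u ∈ metricSeg a u
  · by_cases hfr : f^[n] u ∈ metricSeg u x
    · exact hasHorseshoe_of_isFixedPt hX (hf.iterate n) hu hua hux
        (metricSeg_inter_subset hu ⟨hfl, hfr⟩) hleft hright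
    · exact hmiss _ (isClosed_metricSeg _ _) ⟨u, left_mem_metricSeg _ _⟩
        (metricSeg_right_subset hu) hright hfr
  · exact hmiss _ (isClosed_metricSeg _ _) ⟨u, right_mem_metricSeg _ _⟩
      (metricSeg_left_subset hu) hleft hfl

end Arc

end Horseshoe

/-! ### ℝ-tree metrics on trees -/

section ArcParam

variable {X Y : Type*} [TopologicalSpace X] [TopologicalSpace Y]

/-- `Φ`, restricted to `[0,1]`, parametrizes the arc `A` injectively. -/
structure IsArcParam (A : Set X) (Φ : ℝ → X) : Prop where
  continuous : Continuous Φ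
  injOn : InjOn Φ (Icc 0 1)
  image_eq : Φ '' Icc 0 1 = A

lemma exists_isArcParam_of_homeomorph {A : Set X} (e : A ≃ₜ Icc (0 : ℝ) 1) :
    ∃ Φ, IsArcParam A Φ ∧ ∀ x : A, Φ (e x) = x := by
  have hΦ : ∀ x : A, (e.symm (projIcc 0 1 zero_le_one (e x : ℝ)) : X) = x := fun x => by
    rw [projIcc_val, e.symm_apply_apply]
  refine ⟨fun t => e.symm (projIcc 0 1 zero_le_one t), ⟨?_, fun s hs t ht hst => ?_, ?_⟩, hΦ⟩
  · exact continuous_subtype_val.comp (e.symm.continuous.comp continuous_projIcc)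
  · have h := e.symm.injective (Subtype.ext hst)
    rw [projIcc_of_mem _ hs, projIcc_of_mem _ ht] at h
    exact congrArg Subtype.val h
  · refine Subset.antisymm ?_ fun x hx => ⟨e ⟨x, hx⟩, (e ⟨x, hx⟩).2, hΦ ⟨x, hx⟩⟩
    rintro _ ⟨t, -, rfl⟩
    exact Subtype.coe_prop _

lemma exists_isArcParam {A : Set X} (hA : IsArc A) : ∃ Φ, IsArcParam A Φ := by
  obtain ⟨e⟩ := hA
  obtain ⟨Φ, hΦ, -⟩ := exists_isArcParam_of_homeomorph e
  exact ⟨Φ, hΦ⟩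

namespace IsArcParam

variable {A : Set X} {Φ : ℝ → X} (h : IsArcParam A Φ)
include h

lemma mem {t : ℝ} (ht : t ∈ Icc (0 : ℝ) 1) : Φ t ∈ A :=
  h.image_eq ▸ mem_image_of_mem Φ ht

lemma isCompact : IsCompact A :=
  h.image_eq ▸ isCompact_Icc.image h.continuous

lemma image {j : X → Y} (hj : Continuous j) (hinj : Injective j) :
    IsArcParam (j '' A) (j ∘ Φ) where
  continuous := hj.comp h.continuous
  injOn := hinj.injOn.comp h.injOn (mapsTo_univ _ _)
  image_eq := by rw [image_comp, h.image_eq]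

lemma symm : IsArcParam A fun t => Φ (1 - t) where
  continuous := h.continuous.comp (by fun_prop)
  injOn s hs t ht hst :=
    sub_right_injective (h.injOn (Icc.one_sub_mem hs)
      (Icc.one_sub_mem ht) hst)
  image_eq := by
    rw [← h.image_eq, ← image_image Φ fun t => 1 - t]
    simp

lemma isArcEndpoint_zero : IsArcEndpoint A (Φ 0) := by
  have h0 : (0 : ℝ) ∈ Icc 0 1 := by simp
  refine ⟨h.mem h0, ?_⟩
  rw [← h.image_eq, ← image_singleton, ← h.injOn.image_sdiff_subset (singleton_subset_iff.mpr h0),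
    Icc_sdiff_left]
  exact (isConnected_Ioc zero_lt_one).image _ h.continuous.continuousOn

lemma eq_zero_or_one_of_isArcEndpoint [T2Space X] {t : ℝ} (ht : t ∈ Icc (0 : ℝ) 1)
    (he : IsArcEndpoint A (Φ t)) : t = 0 ∨ t = 1 := by
  by_contra! hne
  have hclosed : ∀ a b, IsClosed (Φ '' Icc a b) := fun a b =>
    (isCompact_Icc.image h.continuous).isClosed
  have hcover : A \ {Φ t} ⊆ Φ '' Icc 0 t ∪ Φ '' Icc t 1 := by
    rw [← image_union, Icc_union_Icc_eq_Icc ht.1 ht.2, h.image_eq]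
    exact sdiff_subset
  have hmem : ∀ s ∈ Icc (0 : ℝ) 1, s ≠ t → Φ s ∈ A \ {Φ t} := fun s hs hst =>
    ⟨h.mem hs, fun hΦ => hst (h.injOn hs ht hΦ)⟩
  obtain ⟨x, hx, ⟨s, hs, rfl⟩, s', hs', hss'⟩ :=
    isPreconnected_closed_iff.mp he.2.isPreconnected _ _ (hclosed 0 t) (hclosed t 1) hcover
      ⟨Φ 0, hmem 0 (by simp) hne.1.symm, mem_image_of_mem _ ⟨le_rfl, ht.1⟩⟩
      ⟨Φ 1, hmem 1 (by simp) hne.2.symm, mem_image_of_mem _ ⟨ht.2, le_rfl⟩⟩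
  have : s' = s := h.injOn ⟨ht.1.trans hs'.1, hs'.2⟩ ⟨hs.1, hs.2.trans ht.2⟩ hss'
  exact hx.2 (congrArg Φ (le_antisymm hs.2 (this ▸ hs'.1)))

end IsArcParam

lemma exists_isSimpleClosedCurve_of_injOn_Ico [T2Space X] {T : ℝ} (hT : 0 < T) {c : ℝ → X}
    (hc : Continuous c) (hcT : c 0 = c T) (hinj : InjOn c (Ico 0 T)) :
    ∃ S : Set X, IsSimpleClosedCurve S := by
  have : Fact (0 < T) := ⟨hT⟩
  let C := AddCircle.liftIco T 0 c
  have hcont : Continuous C :=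
    AddCircle.liftIco_continuous (by rwa [zero_add]) hc.continuousOn
  have hCinj : Injective C := by
    rw [← zero_add T] at hinj
    exact (injOn_iff_injective.mp hinj).comp (AddCircle.equivIco T 0).injective
  exact ⟨range C, ⟨(hcont.isClosedEmbedding hCinj).isEmbedding.toHomeomorph.symm.trans
    (AddCircle.homeomorphCircle hT.ne')⟩⟩

lemma exists_isSimpleClosedCurve_of_isArcParam [T2Space X] {A B : Set X} {Φ Ψ : ℝ → X}
    (hΦ : IsArcParam A Φ) (hΨ : IsArcParam B Ψ) (h1 : Φ 1 = Ψ 0) (h0 : Ψ 1 = Φ 0)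
    (hAB : ∀ t ∈ Icc (0 : ℝ) 1, Φ t ∈ B → t = 0 ∨ t = 1) :
    ∃ S : Set X, IsSimpleClosedCurve S := by
  let c : ℝ → X := fun t => if t ≤ 1 then Φ t else Ψ (t - 1)
  have hcont : Continuous c :=
    hΦ.continuous.if_le (hΨ.continuous.comp (by fun_prop)) continuous_id continuous_const
      fun t ht => by
        obtain rfl : t = 1 := ht
        simpa using h1
  have hcross : ∀ s ∈ Icc (0 : ℝ) 1, ∀ t ∈ Ioo (0 : ℝ) 1, Φ s ≠ Ψ t := by
    intro s hs t ht hst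
    have ht' : t ∈ Icc (0 : ℝ) 1 := Ioo_subset_Icc_self ht
    rcases hAB s hs (hst ▸ hΨ.mem ht') with rfl | rfl
    · exact ht.2.ne' (hΨ.injOn (by simp) ht' (h0.trans hst))
    · exact ht.1.ne (hΨ.injOn (by simp) ht' (h1.symm.trans hst))
  refine exists_isSimpleClosedCurve_of_injOn_Ico two_pos hcont ?_ fun s hs t ht hst => ?_
  · have : ¬(2 : ℝ) ≤ 1 := by norm_num
    simp only [c, zero_le_one, if_true, this, if_false]
    norm_num [h0]
  · have hIoo : ∀ u ∈ Ico (0 : ℝ) 2, ¬u ≤ 1 → u - 1 ∈ Ioo (0 : ℝ) 1 := fun u hu hu1 =>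
      ⟨by linarith, by linarith [hu.2]⟩
    simp only [c] at hst
    split_ifs at hst with hs1 ht1 ht1
    · exact hΦ.injOn ⟨hs.1, hs1⟩ ⟨ht.1, ht1⟩ hst
    · exact absurd hst (hcross s ⟨hs.1, hs1⟩ _ (hIoo t ht ht1))
    · exact absurd hst.symm (hcross t ⟨ht.1, ht1⟩ _ (hIoo s hs hs1))
    · exact sub_left_injective (hΨ.injOn (Ioo_subset_Icc_self (hIoo s hs hs1))
        (Ioo_subset_Icc_self (hIoo t ht ht1)) hst)

lemma IsRTree.exists_isArcParam_metricSeg {Z : Type*} [MetricSpace Z] (hZ : IsRTree Z) {a b : Z}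
    (hab : a ≠ b) : ∃ γ, IsArcParam (metricSeg a b) γ ∧ γ 0 = a ∧ γ 1 = b := by
  have hd : 0 < dist a b := dist_pos.mpr hab
  let g : metricSeg a b → Icc (0 : ℝ) 1 := fun z =>
    ⟨dist a z / dist a b, by positivity, (div_le_one hd).mpr (dist_le_of_mem_metricSeg z.2)⟩
  have hg : Continuous g := Continuous.subtype_mk (by fun_prop) _
  have hbij : Bijective g := by
    refine ⟨fun z w h => Subtype.ext (hZ.eq_of_dist_eq z.2 w.2 ?_), fun t => ?_⟩
    · exact (div_left_inj' hd.ne').mp (congrArg Subtype.val h)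
    · obtain ⟨z, hz, hzt⟩ := hZ.exists_mem_metricSeg_dist_eq (x := a) (y := b)
        (mul_nonneg t.2.1 hd.le) (mul_le_of_le_one_left hd.le t.2.2)
      exact ⟨⟨z, hz⟩, Subtype.ext ((div_eq_iff hd.ne').mpr hzt)⟩
  have : CompactSpace (metricSeg a b) :=
    isCompact_iff_compactSpace.mp (hZ.isCompact_metricSeg a b)
  let e := Continuous.homeoOfEquivCompactToT2 (f := Equiv.ofBijective g hbij) hg
  obtain ⟨γ, hγ, hγe⟩ := exists_isArcParam_of_homeomorph e
  refine ⟨γ, hγ, ?_, ?_⟩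
  · convert hγe ⟨a, left_mem_metricSeg a b⟩
    change (0 : ℝ) = dist a a / dist a b
    simp
  · convert hγe ⟨b, right_mem_metricSeg a b⟩
    exact (div_self hd.ne').symm

lemma IsRTree.exists_isSimpleClosedCurve {Z : Type*} [MetricSpace Z] [T2Space X]
    (hZ : IsRTree Z) {j : Z → X} (hj : Continuous j) (hinj : Injective j) {A : Set X} {Φ : ℝ → X}
    (hΦ : IsArcParam A Φ) (hA : ∀ t ∈ Icc (0 : ℝ) 1, Φ t ∈ range j → t = 0 ∨ t = 1)
    (h0 : Φ 0 ∈ range j) (h1 : Φ 1 ∈ range j) : ∃ S : Set X, IsSimpleClosedCurve S := by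
  obtain ⟨a, ha⟩ := h0
  obtain ⟨b, hb⟩ := h1
  have hba : b ≠ a := by
    rintro rfl
    exact zero_ne_one (hΦ.injOn (by simp) (by simp) (ha.symm.trans hb))
  obtain ⟨γ, hγ, hγ0, hγ1⟩ := hZ.exists_isArcParam_metricSeg hba
  exact exists_isSimpleClosedCurve_of_isArcParam hΦ (hγ.image hj hinj)
    (by rw [comp_apply, hγ0, hb]) (by rw [comp_apply, hγ1, ha])
    fun t ht hmem => hA t ht (image_subset_range _ _ hmem)

end ArcParam

section Wedge

variable {Y Z : Type*}

/-- The wedge of `Y` and `Z` at the points `y₀` and `z₀`, realized as the union of the two axes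
through `(y₀, z₀)` in the `ℓ¹` product, whose metric it inherits. -/
def wedge (y₀ : Y) (z₀ : Z) : Set (WithLp 1 (Y × Z)) := {w | w.snd = z₀ ∨ w.fst = y₀}

namespace wedge

variable {y₀ : Y} {z₀ : Z}

/-- The inclusion of the first summand of a wedge. -/
def inl (y₀ : Y) (z₀ : Z) (y : Y) : wedge y₀ z₀ := ⟨WithLp.toLp 1 (y, z₀), Or.inl rfl⟩

/-- The inclusion of the second summand of a wedge. -/
def inr (y₀ : Y) (z₀ : Z) (z : Z) : wedge y₀ z₀ := ⟨WithLp.toLp 1 (y₀, z), Or.inr rfl⟩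

/-- The retraction of a wedge onto its first summand. -/
def fst (w : wedge y₀ z₀) : Y := (w : WithLp 1 (Y × Z)).fst

/-- The retraction of a wedge onto its second summand. -/
def snd (w : wedge y₀ z₀) : Z := (w : WithLp 1 (Y × Z)).snd

@[simp] lemma fst_inl (y : Y) : fst (inl y₀ z₀ y) = y := rfl

@[simp] lemma snd_inl (y : Y) : snd (inl y₀ z₀ y) = z₀ := rfl

@[simp] lemma fst_inr (z : Z) : fst (inr y₀ z₀ z) = y₀ := rfl

@[simp] lemma snd_inr (z : Z) : snd (inr y₀ z₀ z) = z := rfl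

lemma inl_eq_inr : inl y₀ z₀ y₀ = inr y₀ z₀ z₀ := rfl

lemma snd_eq_or_fst_eq (w : wedge y₀ z₀) : snd w = z₀ ∨ fst w = y₀ := w.2

lemma ext {v w : wedge y₀ z₀} (h1 : fst v = fst w) (h2 : snd v = snd w) : v = w :=
  Subtype.ext ((WithLp.equiv 1 _).injective (Prod.ext h1 h2))

lemma inl_fst {w : wedge y₀ z₀} (h : snd w = z₀) : inl y₀ z₀ (fst w) = w := ext rfl h.symm

lemma inr_snd {w : wedge y₀ z₀} (h : fst w = y₀) : inr y₀ z₀ (snd w) = w := ext h.symm rfl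

lemma exists_inl_or_inr (w : wedge y₀ z₀) : (∃ y, inl y₀ z₀ y = w) ∨ ∃ z, inr y₀ z₀ z = w :=
  (snd_eq_or_fst_eq w).imp (fun h => ⟨_, inl_fst h⟩) fun h => ⟨_, inr_snd h⟩

lemma range_inl_union_range_inr : range (inl y₀ z₀) ∪ range (inr y₀ z₀) = univ :=
  eq_univ_of_forall exists_inl_or_inr

section Desc

open Classical in
/-- The map out of a wedge induced by maps `j` and `k` out of the summands; it extends `k` only
when `j y₀ = k z₀`. -/
noncomputable def desc {X : Type*} (y₀ : Y) (z₀ : Z) (j : Y → X) (k : Z → X)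
    (w : wedge y₀ z₀) : X :=
  if snd w = z₀ then j (fst w) else k (snd w)

variable {X : Type*} {j : Y → X} {k : Z → X}

@[simp] lemma desc_inl (y : Y) : desc y₀ z₀ j k (inl y₀ z₀ y) = j y := if_pos rfl

lemma desc_inr (hjk : j y₀ = k z₀) (z : Z) : desc y₀ z₀ j k (inr y₀ z₀ z) = k z := by
  by_cases hz : z = z₀
  · rw [hz, ← inl_eq_inr, desc_inl, hjk]
  · exact if_neg hz

lemma range_desc (hjk : j y₀ = k z₀) : range (desc y₀ z₀ j k) = range j ∪ range k := by
  rw [← image_univ, ← range_inl_union_range_inr, image_union, ← range_comp, ← range_comp]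
  congr 2
  exacts [funext desc_inl, funext (desc_inr hjk)]

lemma injective_desc (hjk : j y₀ = k z₀) (hj : Injective j) (hk : Injective k)
    (hmeet : ∀ y z, j y = k z → z = z₀) : Injective (desc y₀ z₀ j k) := by
  have hmixed : ∀ y z, j y = k z → inl y₀ z₀ y = inr y₀ z₀ z := fun y z h => by
    obtain rfl := hmeet y z h
    rw [hj (h.trans hjk.symm), inl_eq_inr]
  intro u v huv
  rcases exists_inl_or_inr u with ⟨a, rfl⟩ | ⟨a, rfl⟩ <;>
    rcases exists_inl_or_inr v with ⟨b, rfl⟩ | ⟨b, rfl⟩ <;>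
    simp only [desc_inl, desc_inr hjk] at huv
  · rw [hj huv]
  · exact hmixed a b huv
  · exact (hmixed b a huv.symm).symm
  · rw [hk huv]

end Desc

variable [MetricSpace Y] [MetricSpace Z]

lemma dist_eq (v w : wedge y₀ z₀) :
    dist v w = dist (fst v) (fst w) + dist (snd v) (snd w) := by
  rw [Subtype.dist_eq, WithLp.prod_dist_eq_add (by norm_num)]
  simp [fst, snd]

@[fun_prop]
lemma continuous_fst : Continuous (fst : wedge y₀ z₀ → Y) :=
  (LipschitzWith.of_dist_le' (K := 1) fun v w => by simp [dist_eq v w]).continuous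

@[fun_prop]
lemma continuous_snd : Continuous (snd : wedge y₀ z₀ → Z) :=
  (LipschitzWith.of_dist_le' (K := 1) fun v w => by simp [dist_eq v w]).continuous

@[fun_prop]
lemma continuous_inl : Continuous (inl y₀ z₀) :=
  (Isometry.of_dist_eq fun x y => by simp [dist_eq]).continuous

@[fun_prop]
lemma continuous_inr : Continuous (inr y₀ z₀) :=
  (Isometry.of_dist_eq fun x y => by simp [dist_eq]).continuous

lemma continuous_desc {X : Type*} [TopologicalSpace X] {j : Y → X} {k : Z → X}
    (hjk : j y₀ = k z₀) (hj : Continuous j) (hk : Continuous k) :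
    Continuous (desc y₀ z₀ j k) := by
  have hclosed : IsClosed {w : wedge y₀ z₀ | snd w = z₀} :=
    isClosed_eq continuous_snd continuous_const
  have hclosed' : IsClosed {w : wedge y₀ z₀ | fst w = y₀} :=
    isClosed_eq continuous_fst continuous_const
  have hcover : {w : wedge y₀ z₀ | snd w = z₀} ∪ {w | fst w = y₀} = univ :=
    eq_univ_of_forall snd_eq_or_fst_eq
  rw [← continuousOn_univ, ← hcover]
  refine ContinuousOn.union_of_isClosed ?_ ?_ hclosed hclosed'
  · refine (hj.comp continuous_fst).continuousOn.congr fun w hw => ?_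
    rw [← inl_fst hw, desc_inl, comp_apply, fst_inl]
  · refine (hk.comp continuous_snd).continuousOn.congr fun w hw => ?_
    rw [← inr_snd hw, desc_inr hjk, comp_apply, snd_inr]

instance [CompactSpace Y] [CompactSpace Z] : CompactSpace (wedge y₀ z₀) where
  isCompact_univ := by
    rw [← range_inl_union_range_inr]
    exact (isCompact_range continuous_inl).union (isCompact_range continuous_inr)

lemma mem_metricSeg_iff {u v w : wedge y₀ z₀} : w ∈ metricSeg u v ↔
    fst w ∈ metricSeg (fst u) (fst v) ∧ snd w ∈ metricSeg (snd u) (snd v) := by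
  simp only [mem_metricSeg, dist_eq]
  have h1 := dist_triangle (fst u) (fst w) (fst v)
  have h2 := dist_triangle (snd u) (snd w) (snd v)
  exact ⟨fun h => ⟨by linarith, by linarith⟩, fun h => by linarith [h.1, h.2]⟩

lemma metricSeg_inl_inl (a b : Y) :
    metricSeg (inl y₀ z₀ a) (inl y₀ z₀ b) = inl y₀ z₀ '' metricSeg a b := by
  ext w
  rw [mem_metricSeg_iff]
  constructor
  · rintro ⟨h1, h2⟩
    exact ⟨_, h1, inl_fst (eq_of_mem_metricSeg_self h2)⟩
  · rintro ⟨c, hc, rfl⟩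
    exact ⟨hc, left_mem_metricSeg _ _⟩

lemma metricSeg_inr_inr (a b : Z) :
    metricSeg (inr y₀ z₀ a) (inr y₀ z₀ b) = inr y₀ z₀ '' metricSeg a b := by
  ext w
  rw [mem_metricSeg_iff]
  constructor
  · rintro ⟨h1, h2⟩
    exact ⟨_, h2, inr_snd (eq_of_mem_metricSeg_self h1)⟩
  · rintro ⟨c, hc, rfl⟩
    exact ⟨left_mem_metricSeg _ _, hc⟩

lemma metricSeg_inl_inr (a : Y) (b : Z) : metricSeg (inl y₀ z₀ a) (inr y₀ z₀ b) =
    inl y₀ z₀ '' metricSeg a y₀ ∪ inr y₀ z₀ '' metricSeg z₀ b := by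
  ext w
  rw [mem_metricSeg_iff]
  constructor
  · rintro ⟨h1, h2⟩
    exact (snd_eq_or_fst_eq w).imp (fun h => ⟨_, h1, inl_fst h⟩) fun h => ⟨_, h2, inr_snd h⟩
  · rintro (⟨c, hc, rfl⟩ | ⟨c, hc, rfl⟩)
    · exact ⟨hc, left_mem_metricSeg _ _⟩
    · exact ⟨right_mem_metricSeg _ _, hc⟩

lemma isPreconnected_metricSeg (hY : IsRTree Y) (hZ : IsRTree Z) (u v : wedge y₀ z₀) :
    IsPreconnected (metricSeg u v) := by
  have hmixed : ∀ a b, IsPreconnected (metricSeg (inl y₀ z₀ a) (inr y₀ z₀ b)) := fun a b => by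
    rw [metricSeg_inl_inr]
    exact IsPreconnected.union (inl y₀ z₀ y₀) ⟨_, right_mem_metricSeg _ _, rfl⟩
      ⟨_, left_mem_metricSeg _ _, inl_eq_inr.symm⟩
      ((hY.isPreconnected_metricSeg _ _).image _ continuous_inl.continuousOn)
      ((hZ.isPreconnected_metricSeg _ _).image _ continuous_inr.continuousOn)
  rcases exists_inl_or_inr u with ⟨a, rfl⟩ | ⟨a, rfl⟩ <;>
    rcases exists_inl_or_inr v with ⟨b, rfl⟩ | ⟨b, rfl⟩
  · rw [metricSeg_inl_inl]
    exact (hY.isPreconnected_metricSeg _ _).image _ continuous_inl.continuousOn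
  · exact hmixed a b
  · rw [metricSeg_comm]
    exact hmixed b a
  · rw [metricSeg_inr_inr]
    exact (hZ.isPreconnected_metricSeg _ _).image _ continuous_inr.continuousOn

lemma mem_of_fst_mem_of_snd_mem {S : Set (wedge y₀ z₀)} (hS : IsPreconnected S)
    {w : wedge y₀ z₀} (h1 : fst w ∈ fst '' S) (h2 : snd w ∈ snd '' S) : w ∈ S := by
  obtain ⟨u, hu, huw⟩ := h1
  obtain ⟨v, hv, hvw⟩ := h2
  by_cases hw1 : fst w = y₀
  · by_cases hw2 : snd w = z₀
    · by_contra hw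
      have hdisj : Disjoint {v : wedge y₀ z₀ | fst v ≠ y₀} {v | snd v ≠ z₀} :=
        disjoint_left.mpr fun v h1 h2 => (snd_eq_or_fst_eq v).elim h2 h1
      have hcover : S ⊆ {v | fst v ≠ y₀} ∪ {v | snd v ≠ z₀} := fun v hv => by
        by_contra! hnot
        simp only [mem_union, mem_ofPred_eq, not_or, not_not] at hnot
        exact hw (ext (hw1.trans hnot.1.symm) (hw2.trans hnot.2.symm) ▸ hv)
      rcases hS.subset_or_subset (isOpen_ne_fun continuous_fst continuous_const)
        (isOpen_ne_fun continuous_snd continuous_const) hdisj hcover with h | h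
      · exact h hu (huw.trans hw1)
      · exact h hv (hvw.trans hw2)
    · have : fst v = y₀ := (snd_eq_or_fst_eq v).resolve_left (hvw ▸ hw2)
      exact ext (this.trans hw1.symm) hvw ▸ hv
  · have hsw : snd w = z₀ := (snd_eq_or_fst_eq w).resolve_right hw1
    have : snd u = z₀ := (snd_eq_or_fst_eq u).resolve_right (huw ▸ hw1)
    exact ext huw (this.trans hsw.symm) ▸ hu

theorem isRTree (hY : IsRTree Y) (hZ : IsRTree Z) : IsRTree (wedge y₀ z₀) where
  isPreconnected_metricSeg := isPreconnected_metricSeg hY hZ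
  metricSeg_subset S hS u hu v hv w hw := by
    obtain ⟨h1, h2⟩ := mem_metricSeg_iff.mp hw
    exact mem_of_fst_mem_of_snd_mem hS
      (hY.metricSeg_subset_image hS continuous_fst.continuousOn hu hv h1)
      (hZ.metricSeg_subset_image hS continuous_snd.continuousOn hu hv h2)

theorem isFiniteRTree (hY : IsFiniteRTree Y) (hZ : IsFiniteRTree Z) :
    IsFiniteRTree (wedge y₀ z₀) where
  toIsRTree := isRTree hY.toIsRTree hZ.toIsRTree
  exists_ends := by
    classical
    obtain ⟨V, hV⟩ := hY.exists_ends
    obtain ⟨W, hW⟩ := hZ.exists_ends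
    refine ⟨V.image (inl y₀ z₀) ∪ W.image (inr y₀ z₀), fun p x => ?_⟩
    rcases exists_inl_or_inr x with ⟨a, rfl⟩ | ⟨a, rfl⟩
    · obtain ⟨v, hv, hav⟩ := hV (fst p) a
      exact ⟨inl y₀ z₀ v, Finset.mem_union_left _ (Finset.mem_image_of_mem _ hv),
        mem_metricSeg_iff.mpr ⟨hav, right_mem_metricSeg _ _⟩⟩
    · obtain ⟨v, hv, hav⟩ := hW (snd p) a
      exact ⟨inr y₀ z₀ v, Finset.mem_union_right _ (Finset.mem_image_of_mem _ hv),
        mem_metricSeg_iff.mpr ⟨right_mem_metricSeg _ _, hav⟩⟩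

end wedge

end Wedge

section Models

lemma metricSeg_real (a b : ℝ) : metricSeg a b = uIcc a b := by
  ext c
  rw [mem_metricSeg, dist_add_dist_eq_iff, ← mem_segment_iff_wbtw, segment_eq_uIcc]

lemma isRTree_real : IsRTree ℝ where
  isPreconnected_metricSeg a b := metricSeg_real a b ▸ isPreconnected_uIcc
  metricSeg_subset _ hS _ hx _ hy := metricSeg_real _ _ ▸ hS.ordConnected.uIcc_subset hx hy

lemma isFiniteRTree_unitInterval : IsFiniteRTree unitInterval where
  toIsRTree := isRTree_real.subtype isPreconnected_Icc
  exists_ends := by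
    classical
    refine ⟨{0, 1}, fun p x => ?_⟩
    have hmem : ∀ v : unitInterval, (x : ℝ) ∈ uIcc (p : ℝ) v → x ∈ metricSeg p v := fun v hv => by
      rwa [← metricSeg_real] at hv
    rcases le_total x p with h | h
    · exact ⟨0, by simp, hmem 0 (mem_uIcc_of_ge x.2.1 h)⟩
    · exact ⟨1, by simp, hmem 1 (mem_uIcc_of_le h x.2.2)⟩

lemma IsFiniteRTree.of_unique {Y : Type*} [MetricSpace Y] [Unique Y] : IsFiniteRTree Y where
  isPreconnected_metricSeg _ _ := subsingleton_of_subsingleton.isPreconnected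
  metricSeg_subset _ _ x hx _ _ z _ := Subsingleton.elim x z ▸ hx
  exists_ends := ⟨{default}, fun p x =>
    ⟨default, by simp, Subsingleton.elim default x ▸ right_mem_metricSeg _ _⟩⟩

end Models

section Edges

variable {X Y ι : Type*} [TopologicalSpace X] [TopologicalSpace Y]

/-- `φ` parametrizes an edge of `X` by `[0,1]`, and `r` is the retraction of `X` onto this edge,
expressed in the parameter; points off the edge are retracted to its ends. -/
structure IsEdge (φ : ℝ → X) (r : X → ℝ) : Prop where
  continuous_param : Continuous φ
  continuous_coord : Continuous r
  coord_mem : ∀ x, r x ∈ Icc (0 : ℝ) 1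
  coord_param : ∀ t ∈ Icc (0 : ℝ) 1, r (φ t) = t
  param_coord : ∀ x, r x ∈ Ioo (0 : ℝ) 1 → φ (r x) = x

/-- A family of edges of `X` that cover `X` and meet only at their ends. -/
structure IsEdgeSystem (φ : ι → ℝ → X) (r : ι → X → ℝ) : Prop where
  isEdge : ∀ i, IsEdge (φ i) (r i)
  exists_eq : ∀ x, ∃ i, ∃ t ∈ Icc (0 : ℝ) 1, φ i t = x
  eq_zero_or_one : ∀ i i', i ≠ i' → ∀ t ∈ Icc (0 : ℝ) 1, ∀ t' ∈ Icc (0 : ℝ) 1,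
    φ i t = φ i' t' → t = 0 ∨ t = 1

lemma IsEdge.isArcParam {φ : ℝ → X} {r : X → ℝ} (h : IsEdge φ r) :
    IsArcParam (φ '' Icc 0 1) φ where
  continuous := h.continuous_param
  injOn := LeftInvOn.injOn (f₁' := r) h.coord_param
  image_eq := rfl

lemma IsEdge.map_homeomorph {φ : ℝ → Y} {r : Y → ℝ} (h : IsEdge φ r) (e : Y ≃ₜ X) :
    IsEdge (e ∘ φ) (r ∘ e.symm) where
  continuous_param := e.continuous.comp h.continuous_param
  continuous_coord := h.continuous_coord.comp e.symm.continuous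
  coord_mem _ := h.coord_mem _
  coord_param t ht := by simp [h.coord_param t ht]
  param_coord x hx := by simp [h.param_coord _ hx]

end Edges

section WedgeEdges

open scoped unitInterval

variable {Y Z : Type*} [MetricSpace Y] [MetricSpace Z] {y₀ : Y} {z₀ : Z}

lemma IsEdge.inl {φ : ℝ → Y} {r : Y → ℝ} (h : IsEdge φ r) (hy₀ : r y₀ ∉ Ioo (0 : ℝ) 1) :
    IsEdge (wedge.inl y₀ z₀ ∘ φ) (r ∘ wedge.fst) where
  continuous_param := wedge.continuous_inl.comp h.continuous_param
  continuous_coord := h.continuous_coord.comp wedge.continuous_fst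
  coord_mem _ := h.coord_mem _
  coord_param t ht := h.coord_param t ht
  param_coord w hw := by
    have hne : wedge.fst w ≠ y₀ := fun h0 => hy₀ (h0 ▸ hw)
    rw [comp_apply, comp_apply, h.param_coord _ hw,
      wedge.inl_fst ((wedge.snd_eq_or_fst_eq w).resolve_right hne)]

lemma isEdge_inr : IsEdge (fun t => wedge.inr y₀ (0 : I) (projIcc 0 1 zero_le_one t))
    (fun w => ((wedge.snd w : I) : ℝ)) where
  continuous_param := wedge.continuous_inr.comp continuous_projIcc
  continuous_coord := continuous_subtype_val.comp wedge.continuous_snd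
  coord_mem w := (wedge.snd w).2
  coord_param t ht := by rw [wedge.snd_inr, projIcc_of_mem _ ht]
  param_coord w hw := by
    have hne : wedge.snd w ≠ 0 := fun h0 => hw.1.ne' (congrArg Subtype.val h0)
    rw [projIcc_val, wedge.inr_snd ((wedge.snd_eq_or_fst_eq w).resolve_left hne)]

end WedgeEdges

section Models

open scoped unitInterval

universe u

/-- `j` identifies the finite ℝ-tree `Y` with the union of the point `v₀` and of the arcs in `ℬ`,
and each arc `A ∈ ℬ` is an edge of `Y`, with parametrization `φ A` and retraction `r A`. -/
structure IsRTreeModel {X Y : Type*} [TopologicalSpace X] [MetricSpace Y] (ℬ : Set (Set X))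
    (v₀ : X) (j : Y → X) (φ : Set X → ℝ → Y) (r : Set X → Y → ℝ) : Prop where
  isFiniteRTree : IsFiniteRTree Y
  continuous : Continuous j
  injective : Injective j
  range_eq : range j = insert v₀ (⋃₀ ℬ)
  isEdge : ∀ A ∈ ℬ, IsEdge (φ A) (r A)
  image_eq : ∀ A ∈ ℬ, j ∘ φ A '' Icc 0 1 = A

/-- The union of the point `v₀` and of the arcs in `ℬ` carries a compact ℝ-tree metric. -/
def HasRTreeModel {X : Type u} [TopologicalSpace X] (ℬ : Set (Set X)) (v₀ : X) : Prop :=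
  ∃ (Y : Type u) (_ : MetricSpace Y) (_ : CompactSpace Y) (j : Y → X) (φ : Set X → ℝ → Y)
    (r : Set X → Y → ℝ), IsRTreeModel ℬ v₀ j φ r

variable {X : Type u} [TopologicalSpace X] {ℬ : Set (Set X)} {v₀ : X} {A : Set X} {Φ : ℝ → X}

lemma IsRTreeModel.isArcParam {Y : Type*} [MetricSpace Y] {j : Y → X} {φ : Set X → ℝ → Y}
    {r : Set X → Y → ℝ} (h : IsRTreeModel ℬ v₀ j φ r) (hA : A ∈ ℬ) :
    IsArcParam A (j ∘ φ A) := by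
  have := (h.isEdge A hA).isArcParam.image h.continuous h.injective
  rwa [← image_comp, h.image_eq A hA] at this

lemma IsRTreeModel.coord_notMem_Ioo [T2Space X] {Y : Type*} [MetricSpace Y] {j : Y → X}
    {φ : Set X → ℝ → Y} {r : Set X → Y → ℝ} (h : IsRTreeModel ℬ v₀ j φ r) (hA : A ∈ ℬ) {y : Y}
    (hy : j y ∈ A → IsArcEndpoint A (j y)) : r A y ∉ Ioo (0 : ℝ) 1 := by
  intro hr
  have hparam := h.isArcParam hA
  have hjy : (j ∘ φ A) (r A y) = j y := congrArg j ((h.isEdge A hA).param_coord y hr)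
  have hend := hy (hjy ▸ hparam.mem (Ioo_subset_Icc_self hr))
  rw [← hjy] at hend
  exact (hparam.eq_zero_or_one_of_isArcEndpoint (Ioo_subset_Icc_self hr) hend).elim
    hr.1.ne' hr.2.ne

lemma hasRTreeModel_empty (v₀ : X) : HasRTreeModel ∅ v₀ :=
  ⟨PUnit, inferInstance, inferInstance, fun _ => v₀, fun _ _ => PUnit.unit, fun _ _ => 0,
    .of_unique, continuous_const, injective_of_subsingleton _, by simp, by simp, by simp⟩

open Classical in
lemma IsRTreeModel.glue [T2Space X] {Y : Type*} [MetricSpace Y] {j : Y → X} {φ : Set X → ℝ → Y}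
    {r : Set X → Y → ℝ} (h : IsRTreeModel ℬ v₀ j φ r) (hA : A ∉ ℬ) (hΦ : IsArcParam A Φ) {y₀ : Y}
    (hy₀ : j y₀ = Φ 0) (hmeet : ∀ t ∈ Icc (0 : ℝ) 1, Φ t ∈ range j → t = 0)
    (hend : ∀ B ∈ ℬ, Φ 0 ∈ B → IsArcEndpoint B (Φ 0)) :
    IsRTreeModel (insert A ℬ) v₀ (wedge.desc y₀ (0 : I) j fun t => Φ t)
      (update (fun B => wedge.inl y₀ 0 ∘ φ B) A
        fun t => wedge.inr y₀ 0 (projIcc 0 1 zero_le_one t))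
      (update (fun B => r B ∘ wedge.fst) A fun w => ((wedge.snd w : I) : ℝ)) where
  isFiniteRTree := wedge.isFiniteRTree h.isFiniteRTree isFiniteRTree_unitInterval
  continuous := wedge.continuous_desc hy₀ h.continuous
    (hΦ.continuous.comp continuous_subtype_val)
  injective := wedge.injective_desc hy₀ h.injective (injOn_iff_injective.mp hΦ.injOn)
    fun y t hyt => Subtype.ext (hmeet t t.2 ⟨y, hyt⟩)
  range_eq := by
    have : range (fun t : I => Φ t) = A := by rw [← hΦ.image_eq, image_eq_range]
    rw [wedge.range_desc (k := fun t : I => Φ t) hy₀, h.range_eq, this, sUnion_insert,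
      insert_union, union_comm]
  isEdge B hB := by
    rcases eq_or_ne B A with rfl | hBA
    · simpa only [update_self] using isEdge_inr
    · have hB' := hB.resolve_left hBA
      rw [update_of_ne hBA, update_of_ne hBA]
      exact (h.isEdge B hB').inl (h.coord_notMem_Ioo hB' (hy₀ ▸ hend B hB'))
  image_eq B hB := by
    rcases eq_or_ne B A with rfl | hBA
    · rw [update_self, ← hΦ.image_eq]
      exact image_congr fun t ht => by
        rw [comp_apply, wedge.desc_inr (k := fun t : I => Φ t) hy₀, projIcc_of_mem _ ht]
    · rw [update_of_ne hBA]
      exact (image_congr fun t _ => wedge.desc_inl _).trans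
        (h.image_eq B (hB.resolve_left hBA))

lemma HasRTreeModel.insert_arc [T2Space X] (h : HasRTreeModel ℬ v₀)
    (hno : ∀ S : Set X, ¬ IsSimpleClosedCurve S) (hA : A ∉ ℬ) (hΦ : IsArcParam A Φ)
    (h0 : Φ 0 ∈ insert v₀ (⋃₀ ℬ))
    (hmeet : ∀ t ∈ Icc (0 : ℝ) 1, Φ t ∈ insert v₀ (⋃₀ ℬ) → t = 0 ∨ t = 1)
    (hend : ∀ B ∈ ℬ, Φ 0 ∈ B → IsArcEndpoint B (Φ 0)) : HasRTreeModel (insert A ℬ) v₀ := by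
  obtain ⟨Y, _, _, j, φ, r, hj⟩ := h
  rw [← hj.range_eq] at h0 hmeet
  have h1 : Φ 1 ∉ range j := fun h1 =>
    (hj.isFiniteRTree.exists_isSimpleClosedCurve hj.continuous hj.injective hΦ hmeet h0 h1).elim
      hno
  obtain ⟨y₀, hy₀⟩ := h0
  refine ⟨_, inferInstance, inferInstance, _, _, _, hj.glue hA hΦ hy₀ (fun t ht hmem => ?_) hend⟩
  exact (hmeet t ht hmem).resolve_right fun ht1 => h1 (ht1 ▸ hmem)

end Models

section Trees

universe u

/-- A decomposition of `X` into arcs that meet only at their endpoints. -/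
structure IsArcDecomposition {X : Type*} [TopologicalSpace X] (𝒜 : Set (Set X)) : Prop where
  isArc : ∀ A ∈ 𝒜, IsArc A
  sUnion_eq : ⋃₀ 𝒜 = univ
  isArcEndpoint : ∀ A ∈ 𝒜, ∀ B ∈ 𝒜, A ≠ B → ∀ x ∈ A, x ∈ B → IsArcEndpoint A x

namespace IsArcDecomposition

variable {X : Type u} [TopologicalSpace X] {𝒜 ℬ : Set (Set X)} {v₀ : X}
  (h : IsArcDecomposition 𝒜)
include h

lemma exists_vertex [Nonempty X] : ∃ v₀, ∀ A ∈ 𝒜, v₀ ∈ A → IsArcEndpoint A v₀ := by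
  obtain ⟨x⟩ := ‹Nonempty X›
  obtain ⟨B, hB, -⟩ := h.sUnion_eq.ge (mem_univ x)
  obtain ⟨Φ, hΦ⟩ := exists_isArcParam (h.isArc B hB)
  refine ⟨Φ 0, fun A hA h0 => ?_⟩
  rcases eq_or_ne A B with rfl | hAB
  · exact hΦ.isArcEndpoint_zero
  · exact h.isArcEndpoint A hA B hB hAB _ h0 (hΦ.mem (by simp))

variable [T2Space X]

lemma exists_adjacent_arc [PreconnectedSpace X] (hfin : 𝒜.Finite) (hℬ : ℬ ⊂ 𝒜) (v₀ : X) :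
    ∃ A ∈ 𝒜 \ ℬ, (A ∩ insert v₀ (⋃₀ ℬ)).Nonempty := by
  have hclosed : ∀ 𝒞 ⊆ 𝒜, IsClosed (⋃₀ 𝒞) := fun 𝒞 h𝒞 => by
    rw [sUnion_eq_biUnion]
    refine (hfin.subset h𝒞).isClosed_biUnion fun A hA => ?_
    obtain ⟨Φ, hΦ⟩ := exists_isArcParam (h.isArc A (h𝒞 hA))
    exact hΦ.isCompact.isClosed
  obtain ⟨A, hA, hAℬ⟩ := exists_of_ssubset hℬ
  obtain ⟨Φ, hΦ⟩ := exists_isArcParam (h.isArc A hA)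
  have hcover : univ ⊆ insert v₀ (⋃₀ ℬ) ∪ ⋃₀ (𝒜 \ ℬ) := by
    rw [insert_union, ← sUnion_union, union_sdiff_cancel hℬ.1, h.sUnion_eq]
    exact subset_insert _ _
  obtain ⟨x, -, hx, B, hB, hxB⟩ := isPreconnected_closed_iff.mp isPreconnected_univ _ _
    (isClosed_singleton.union (hclosed ℬ hℬ.1)) (hclosed _ sdiff_subset) hcover
    ⟨v₀, mem_univ _, mem_insert _ _⟩ ⟨Φ 0, mem_univ _, A, ⟨hA, hAℬ⟩, hΦ.mem (by simp)⟩
  exact ⟨B, hB, x, hxB, hx⟩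

lemma exists_larger_hasRTreeModel [PreconnectedSpace X] (hfin : 𝒜.Finite)
    (hno : ∀ S : Set X, ¬ IsSimpleClosedCurve S) (hv₀ : ∀ A ∈ 𝒜, v₀ ∈ A → IsArcEndpoint A v₀)
    (hℬ : ℬ ⊂ 𝒜) (hmodel : HasRTreeModel ℬ v₀) :
    ∃ A ∈ 𝒜 \ ℬ, HasRTreeModel (insert A ℬ) v₀ := by
  obtain ⟨A, ⟨hA, hAℬ⟩, x, hxA, hx⟩ := h.exists_adjacent_arc hfin hℬ v₀
  refine ⟨A, ⟨hA, hAℬ⟩, ?_⟩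
  have hne : ∀ B ∈ ℬ, A ≠ B := fun B hB hAB => hAℬ (hAB ▸ hB)
  have hmeet : ∀ Φ, IsArcParam A Φ → ∀ t ∈ Icc (0 : ℝ) 1, Φ t ∈ insert v₀ (⋃₀ ℬ) →
      t = 0 ∨ t = 1 := fun Φ hΦ t ht htℬ =>
    hΦ.eq_zero_or_one_of_isArcEndpoint ht <| htℬ.elim (fun h0 => h0 ▸ hv₀ A hA (h0 ▸ hΦ.mem ht))
      fun ⟨B, hB, htB⟩ => h.isArcEndpoint A hA B (hℬ.1 hB) (hne B hB) _ (hΦ.mem ht) htB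
  have hglue : ∀ Φ, IsArcParam A Φ → Φ 0 ∈ insert v₀ (⋃₀ ℬ) →
      HasRTreeModel (insert A ℬ) v₀ := fun Φ hΦ h0 =>
    hmodel.insert_arc hno hAℬ hΦ h0 (hmeet Φ hΦ) fun B hB h0B =>
      h.isArcEndpoint B (hℬ.1 hB) A hA (hne B hB).symm _ h0B (hΦ.mem (by simp))
  obtain ⟨Φ, hΦ⟩ := exists_isArcParam (h.isArc A hA)
  obtain ⟨t, ht, rfl⟩ := hΦ.image_eq.ge hxA
  rcases hmeet Φ hΦ t ht hx with rfl | rfl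
  · exact hglue Φ hΦ hx
  · exact hglue _ hΦ.symm (by rwa [sub_zero])

lemma exists_hasRTreeModel [ConnectedSpace X] (hfin : 𝒜.Finite)
    (hno : ∀ S : Set X, ¬ IsSimpleClosedCurve S) : ∃ v₀, HasRTreeModel 𝒜 v₀ := by
  obtain ⟨v₀, hv₀⟩ := h.exists_vertex
  obtain ⟨ℬ, ⟨hℬ, hmodel⟩, hmax⟩ :=
    (hfin.finite_subsets.subset fun ℬ (hℬ : ℬ ⊆ 𝒜 ∧ HasRTreeModel ℬ v₀) => hℬ.1).exists_maximal
      ⟨∅, empty_subset _, hasRTreeModel_empty v₀⟩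
  rcases hℬ.eq_or_ssubset with rfl | hssub
  · exact ⟨v₀, hmodel⟩
  · obtain ⟨A, ⟨hA, hAℬ⟩, hA'⟩ := h.exists_larger_hasRTreeModel hfin hno hv₀ hssub hmodel
    exact absurd (hmax ⟨insert_subset hA hℬ, hA'⟩ (subset_insert _ _) (mem_insert _ _)) hAℬ

lemma isEdgeSystem {Y : Type*} [MetricSpace Y] {e : Y ≃ₜ X} {φ : Set X → ℝ → Y}
    {r : Set X → Y → ℝ} (he : IsRTreeModel 𝒜 v₀ e φ r) :
    IsEdgeSystem (fun A : 𝒜 => e ∘ φ A) (fun A => r A ∘ e.symm) where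
  isEdge A := (he.isEdge A A.2).map_homeomorph e
  exists_eq x := by
    obtain ⟨A, hA, hxA⟩ := h.sUnion_eq.ge (mem_univ x)
    obtain ⟨t, ht, htx⟩ := (he.image_eq A hA).ge hxA
    exact ⟨⟨A, hA⟩, t, ht, htx⟩
  eq_zero_or_one A B hAB t ht t' ht' htt' :=
    (he.isArcParam A.2).eq_zero_or_one_of_isArcEndpoint ht <|
      h.isArcEndpoint A A.2 B B.2 (Subtype.coe_ne_coe.mpr hAB) _ ((he.isArcParam A.2).mem ht)
        (htt' ▸ (he.isArcParam B.2).mem ht')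

end IsArcDecomposition

theorem IsTree.exists_isFiniteRTree_isEdgeSystem {X : Type u} [MetricSpace X] (hX : IsTree X) :
    ∃ (Y : Type u) (_ : MetricSpace Y) (_ : Y ≃ₜ X) (ι : Type u) (_ : Finite ι)
      (φ : ι → ℝ → X) (r : ι → X → ℝ), IsFiniteRTree Y ∧ IsEdgeSystem φ r := by
  obtain ⟨-, hconn, ⟨𝒜, harc, hcover, hend⟩, hno⟩ := hX
  have h𝒜 : IsArcDecomposition (𝒜 : Set (Set X)) :=
    ⟨harc, hcover, fun A hA B hB hAB x hxA hxB => (hend A hA B hB hAB x ⟨hxA, hxB⟩).1⟩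
  obtain ⟨v₀, Y, _, _, j, φ, r, hj⟩ := h𝒜.exists_hasRTreeModel 𝒜.finite_toSet hno
  have hsurj : Surjective j := by
    rw [← range_eq_univ, hj.range_eq, h𝒜.sUnion_eq, insert_eq_of_mem (mem_univ _)]
  let e : Y ≃ₜ X := Continuous.homeoOfEquivCompactToT2
    (f := Equiv.ofBijective j ⟨hj.injective, hsurj⟩) hj.continuous
  exact ⟨Y, inferInstance, e, 𝒜, inferInstance, _, _, hj.isFiniteRTree,
    h𝒜.isEdgeSystem (e := e) hj⟩

end Trees

universe u

section Semiconj

variable {X Y : Type*} {f : X → X} {g : Y → Y}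

lemma mem_chainRecurrentSet_of_semiconj [MetricSpace X] [MetricSpace Y] {h : X → Y}
    (hc : UniformContinuous h) (hfg : Semiconj h f g) {x : X} (hx : x ∈ chainRecurrentSet f) :
    h x ∈ chainRecurrentSet g := by
  intro η hη
  obtain ⟨δ, hδ, hδη⟩ := Metric.uniformContinuous_iff.mp hc η hη
  obtain ⟨n, hn, c, h0, hnx, hstep⟩ := hx δ hδ
  refine ⟨n, hn, h ∘ c, congrArg h h0, congrArg h hnx, fun i hi => ?_⟩
  rw [comp_apply, ← hfg.eq (c i)]
  exact hδη (hstep i hi)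

lemma HasHorseshoe.of_homeomorph [TopologicalSpace X] [TopologicalSpace Y] (e : Y ≃ₜ X)
    (he : Semiconj e g f) (h : HasHorseshoe g) : HasHorseshoe f := by
  obtain ⟨n, hn, P, Q, hP, hQ, hPQ, hne, hsP, hsQ⟩ := h
  have image_surjOn {S : Set Y} (hS : SurjOn g^[n] S (P ∪ Q)) :
      SurjOn f^[n] (e '' S) (e '' P ∪ e '' Q) := by
    rw [← image_union]
    rintro _ ⟨y, hy, rfl⟩
    obtain ⟨z, hz, rfl⟩ := hS hy
    exact ⟨e z, mem_image_of_mem e hz, ((he.iterate_right n).eq z).symm⟩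
  exact ⟨n, hn, e '' P, e '' Q, e.isClosed_image.mpr hP, e.isClosed_image.mpr hQ,
    (disjoint_image_iff e.injective).mpr hPQ, hne.image e, image_surjOn hsP, image_surjOn hsQ⟩

end Semiconj

theorem IsTree.hasHorseshoe_of_not_equicontinuous {X : Type u} [MetricSpace X] (hX : IsTree X)
    {f : X → X} (hf : Continuous f) {p : X} (hp : p ∈ periodicPts f) {ε : ℝ} (hε : 0 < ε)
    (hbad : ∀ δ > 0, ∃ y ∈ chainRecurrentSet f, dist y p < δ ∧
      ∃ n, ε ≤ dist (f^[n] y) (f^[n] p)) : HasHorseshoe f := by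
  have : CompactSpace X := hX.1
  obtain ⟨Y, _, e, _, _, _, _, hY, _⟩ :=
    IsTree.exists_isFiniteRTree_isEdgeSystem hX
  have : CompactSpace Y := e.symm.compactSpace
  set g : Y → Y := e.symm ∘ f ∘ e
  have hg : Continuous g := e.symm.continuous.comp (hf.comp e.continuous)
  have he : Semiconj e g f := fun y => e.apply_symm_apply (f (e y))
  have he' : Semiconj e.symm f g := fun x => by simp only [g, comp_apply, e.apply_symm_apply]
  have huc : UniformContinuous e.symm :=
    CompactSpace.uniformContinuous_of_continuous e.symm.continuous
  obtain ⟨ε', hε', hεε'⟩ := Metric.uniformContinuous_iff.mp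
    (CompactSpace.uniformContinuous_of_continuous e.continuous) ε hε
  refine (hasArcHorseshoe_of_not_equicontinuous hY hg (p := e.symm p) ?_ hε'
    fun δ hδ => ?_).hasHorseshoe hY.toIsRTree hg |>.of_homeomorph e he
  · obtain ⟨n, hn, hnp⟩ := hp
    exact ⟨n, hn, hnp.map he'⟩
  · obtain ⟨η, hη, hηδ⟩ := Metric.uniformContinuous_iff.mp huc δ hδ
    obtain ⟨y, hy, hyp, n, hn⟩ := hbad η hη
    refine ⟨e.symm y, mem_chainRecurrentSet_of_semiconj huc he' hy, hηδ hyp, n, ?_⟩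
    by_contra! hlt
    refine (hεε' hlt).not_ge ?_
    rwa [(he.iterate_right n).eq, (he.iterate_right n).eq, e.apply_symm_apply, e.apply_symm_apply]

/-! ### Counting itineraries -/

section Words

variable {σ κ : Type*} {step : σ → κ → σ} {full : κ → σ} {ok : σ → Prop}
  {F : Finset κ} {s : σ} {j : κ} {w : List κ} {c n : ℕ}

variable (step full ok) in
/-- Every state visited when the word `w` is read from the state `s` satisfies `ok`, and the state
`full j` is reached by reading the letter `j` only if `j ∈ F`. -/
def IsAdmissible (F : Finset κ) : σ → List κ → Prop
  | _, [] => True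
  | s, j :: w => ok (step s j) ∧ (step s j = full j → j ∈ F) ∧ IsAdmissible F (step s j) w

variable (step full) in
/-- The word `x`, read from the state `full j`, is empty or ends by reading `j` and returning to
`full j`. -/
def IsReturnWord (j : κ) (x : List κ) : Prop :=
  x = [] ∨ ∃ y, x = y ++ [j] ∧ x.foldl step (full j) = full j

variable (step full) in
/-- Return words are determined by their letter and their length. -/
def HasUniqueReturns : Prop :=
  ∀ j x x', x.length = x'.length → IsReturnWord step full j x → IsReturnWord step full j x' →
    x = x'

lemma IsAdmissible.empty_or_exists_append_cons (h : IsAdmissible step full ok F s w) :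
    IsAdmissible step full ok ∅ s w ∨ ∃ u, ∃ j ∈ F, ∃ v, w = u ++ j :: v ∧
      IsAdmissible step full ok ∅ s u ∧ IsAdmissible step full ok F (full j) v := by
  induction w generalizing s with
  | nil => exact .inl trivial
  | cons i w ih =>
    obtain ⟨hok, hfull, hw⟩ := h
    by_cases hi : step s i = full i
    · exact .inr ⟨[], i, hfull hi, w, rfl, trivial, hi ▸ hw⟩
    · have hi' : step s i = full i → i ∈ (∅ : Finset κ) := fun h => absurd h hi
      rcases ih hw with hw | ⟨u, j, hj, v, rfl, hu, hv⟩
      · exact .inl ⟨hok, hi', hw⟩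
      · exact .inr ⟨i :: u, j, hj, v, rfl, ⟨hok, hi', hu⟩, hv⟩

lemma IsAdmissible.erase_or_exists_append [DecidableEq κ] (h : IsAdmissible step full ok F s w) :
    IsAdmissible step full ok (F.erase j) s w ∨ ∃ x y, w = (x ++ [j]) ++ y ∧
      (x ++ [j]).foldl step s = full j ∧ IsAdmissible step full ok (F.erase j) (full j) y := by
  induction w generalizing s with
  | nil => exact .inl trivial
  | cons i w ih =>
    obtain ⟨hok, hfull, hw⟩ := h
    rcases ih hw with hw | ⟨x, y, rfl, hx, hy⟩
    · by_cases hi : step s i = full i ∧ i = j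
      · obtain ⟨hi, rfl⟩ := hi
        exact .inr ⟨[], w, rfl, hi, hi ▸ hw⟩
      · exact .inl ⟨hok, fun h => Finset.mem_erase.mpr ⟨fun hij => hi ⟨h, hij⟩, hfull h⟩, hw⟩
    · exact .inr ⟨i :: x, y, rfl, hx, hy⟩

lemma IsAdmissible.exists_isReturnWord_append [DecidableEq κ]
    (h : IsAdmissible step full ok F (full j) w) :
    ∃ x y, w = x ++ y ∧ IsReturnWord step full j x ∧
      IsAdmissible step full ok (F.erase j) (full j) y := by
  rcases h.erase_or_exists_append (j := j) with h | ⟨x, y, rfl, hx, hy⟩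
  · exact ⟨[], w, rfl, .inl rfl, h⟩
  · exact ⟨x ++ [j], y, rfl, .inr ⟨x, rfl, hx⟩, hy⟩

lemma HasUniqueReturns.exists_forall_eq (h : HasUniqueReturns step full) (j : κ) (a : ℕ) :
    ∃ l, ∀ x, IsReturnWord step full j x → x.length = a → x = l := by
  by_cases hex : ∃ l, IsReturnWord step full j l ∧ l.length = a
  · obtain ⟨l, hl, rfl⟩ := hex
    exact ⟨l, fun x hx hxl => h j x l hxl hx hl⟩
  · exact ⟨[], fun x hx hxa => absurd ⟨x, hx, hxa⟩ hex⟩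

section Count

variable [Finite κ]

variable (step full ok) in
/-- The admissible words of length `n`. -/
noncomputable def admissibleWords (F : Finset κ) (s : σ) (n : ℕ) : Finset (List κ) :=
  ((List.finite_length_eq κ n).inter_of_left {w | IsAdmissible step full ok F s w}).toFinset

lemma mem_admissibleWords :
    w ∈ admissibleWords step full ok F s n ↔ w.length = n ∧ IsAdmissible step full ok F s w := by
  simp only [admissibleWords, Finite.mem_toFinset, mem_inter_iff, mem_ofPred_eq]

lemma card_admissibleWords_empty_le
    (hc : ∀ s, ok s → {j | ok (step s j) ∧ step s j ≠ full j}.ncard ≤ c) (hs : ok s) (n : ℕ) :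
    (admissibleWords step full ok ∅ s n).card ≤ c ^ n := by
  classical
  induction n generalizing s with
  | zero =>
    refine (Finset.card_le_card (t := {[]}) fun w hw => ?_).trans (Finset.card_singleton _).le
    exact Finset.mem_singleton.mpr (List.length_eq_zero_iff.mp (mem_admissibleWords.mp hw).1)
  | succ n ih =>
    set T := (toFinite {j | ok (step s j) ∧ step s j ≠ full j}).toFinset with hT
    have hsub : admissibleWords step full ok ∅ s (n + 1) ⊆
        T.biUnion fun j => (admissibleWords step full ok ∅ (step s j) n).image (List.cons j) := by
      intro w hw
      obtain ⟨hlen, hadm⟩ := mem_admissibleWords.mp hw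
      obtain ⟨j, w, rfl⟩ := List.exists_cons_of_length_eq_add_one hlen
      obtain ⟨hok, hfull, hadm⟩ := hadm
      exact Finset.mem_biUnion.mpr ⟨j, by simpa [hT, hok] using hfull, Finset.mem_image_of_mem _
        (mem_admissibleWords.mpr ⟨Nat.succ_injective hlen, hadm⟩)⟩
    calc (admissibleWords step full ok ∅ s (n + 1)).card ≤ T.card * c ^ n :=
          (Finset.card_le_card hsub).trans <| Finset.card_biUnion_le_card_mul _ _ _ fun j hj =>
            Finset.card_image_le.trans (ih ((Finite.mem_toFinset _).mp hj).1)
      _ ≤ c * c ^ n := Nat.mul_le_mul_right _ (ncard_eq_toFinset_card _ _ ▸ hc s hs)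
      _ = c ^ (n + 1) := (pow_succ' c n).symm

/-- An admissible word is a word without full visits, or splits at its first full visit and at the
last full visit with the same letter `j`; the middle part is a return word, so that it only
contributes its length. -/
lemma admissibleWords_subset [DecidableEq κ] {ret : κ → ℕ → List κ}
    (hret : ∀ j a x, IsReturnWord step full j x → x.length = a → x = ret j a) :
    admissibleWords step full ok F s n ⊆ admissibleWords step full ok ∅ s n ∪
      (F ×ˢ Finset.range n ×ˢ Finset.range (n + 1)).biUnion fun q =>
        Finset.image₂ (fun u y => u ++ q.1 :: (ret q.1 q.2.2 ++ y))
          (admissibleWords step full ok ∅ s q.2.1)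
          (admissibleWords step full ok (F.erase q.1) (full q.1) (n - 1 - q.2.1 - q.2.2)) := by
  intro w hw
  obtain ⟨hlen, hadm⟩ := mem_admissibleWords.mp hw
  rw [Finset.mem_union]
  rcases hadm.empty_or_exists_append_cons with hadm | ⟨u, j, hj, v, rfl, hu, hv⟩
  · exact .inl (mem_admissibleWords.mpr ⟨hlen, hadm⟩)
  obtain ⟨x, y, rfl, hx, hy⟩ := hv.exists_isReturnWord_append
  simp only [List.length_append, List.length_cons] at hlen
  refine .inr (Finset.mem_biUnion.mpr ⟨(j, u.length, x.length), ?_, ?_⟩)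
  · simp only [Finset.mem_product, Finset.mem_range]
    exact ⟨hj, by omega, by omega⟩
  · have hy' : y ∈ admissibleWords step full ok (F.erase j) (full j)
        (n - 1 - u.length - x.length) := mem_admissibleWords.mpr ⟨by omega, hy⟩
    refine Finset.mem_image₂.mpr ⟨u, mem_admissibleWords.mpr ⟨rfl, hu⟩, y, hy', ?_⟩
    rw [← hret j x.length x hx rfl]

theorem card_admissibleWords_le (hfull : ∀ j, ok (full j)) (hc1 : 1 ≤ c)
    (hc : ∀ s, ok s → {j | ok (step s j) ∧ step s j ≠ full j}.ncard ≤ c)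
    (hret : HasUniqueReturns step full) (F : Finset κ) (hs : ok s) (n : ℕ) :
    (admissibleWords step full ok F s n).card ≤ (1 + F.card * (n + 1) ^ 2) ^ F.card * c ^ n := by
  classical
  choose ret hret using hret.exists_forall_eq
  induction hk : F.card generalizing F s n with
  | zero =>
    rw [Finset.card_eq_zero.mp hk]
    simpa using card_admissibleWords_empty_le hc hs n
  | succ k ih =>
    set P := (1 + (k + 1) * (n + 1) ^ 2) ^ k with hP
    have hcard : ∀ q ∈ F ×ˢ Finset.range n ×ˢ Finset.range (n + 1),
        (Finset.image₂ (fun u y => u ++ q.1 :: (ret q.1 q.2.2 ++ y))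
          (admissibleWords step full ok ∅ s q.2.1)
          (admissibleWords step full ok (F.erase q.1) (full q.1) (n - 1 - q.2.1 - q.2.2))).card ≤
            P * c ^ n := by
      rintro ⟨j, m, a⟩ hq
      simp only [Finset.mem_product, Finset.mem_range] at hq
      set l := n - 1 - m - a
      calc _ ≤ c ^ m * ((1 + k * (l + 1) ^ 2) ^ k * c ^ l) :=
            (Finset.card_image₂_le _ _ _).trans <| Nat.mul_le_mul
              (card_admissibleWords_empty_le hc hs m)
              (ih _ (hfull j) l (by rw [Finset.card_erase_of_mem hq.1, hk, Nat.add_sub_cancel]))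
        _ = (1 + k * (l + 1) ^ 2) ^ k * c ^ (m + l) := by ring
        _ ≤ P * c ^ n := by
          gcongr
          · exact Nat.pow_le_pow_left (by gcongr <;> omega) k
          · omega
    calc (admissibleWords step full ok F s n).card
        ≤ c ^ n + (k + 1) * (n * (n + 1)) * (P * c ^ n) := by
          refine (Finset.card_le_card (admissibleWords_subset hret)).trans <|
            (Finset.card_union_le _ _).trans <|
              Nat.add_le_add (card_admissibleWords_empty_le hc hs n) ?_
          refine (Finset.card_biUnion_le_card_mul _ _ _ hcard).trans_eq ?_
          simp only [Finset.card_product, Finset.card_range, hk]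
      _ ≤ P * c ^ n + (k + 1) * (n + 1) ^ 2 * (P * c ^ n) := by
          have hP1 : 1 ≤ P := Nat.one_le_pow _ _ (by omega)
          gcongr ?_ + ?_ * _
          · exact Nat.le_mul_of_pos_left _ hP1
          · gcongr; nlinarith
      _ = (1 + (k + 1) * (n + 1) ^ 2) ^ (k + 1) * c ^ n := by rw [pow_succ (1 + _), ← hP]; ring

end Count

end Words

/-- Intersections of connected subsets of `X` are connected or empty. -/
def HasPreconnectedInter (X : Type*) [TopologicalSpace X] : Prop :=
  ∀ S T : Set X, IsPreconnected S → IsPreconnected T → IsPreconnected (S ∩ T)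

lemma HasPreconnectedInter.of_homeomorph {X Y : Type*} [TopologicalSpace X] [TopologicalSpace Y]
    (e : X ≃ₜ Y) (hY : HasPreconnectedInter Y) : HasPreconnectedInter X := by
  intro S T hS hT
  rw [← e.isPreconnected_image, image_inter e.injective]
  exact hY _ _ (e.isPreconnected_image.mpr hS) (e.isPreconnected_image.mpr hT)

section Grid

variable {N : ℕ} {l : Fin N}

/-- The `l`-th of the `N` intervals of length `1 / N` into which `[0,1]` is divided. -/
def gridIcc (l : Fin N) : Set ℝ :=
  Icc ((l : ℝ) / N) (((l : ℝ) + 1) / N)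

lemma natCast_pos_of_fin (l : Fin N) : (0 : ℝ) < N :=
  Nat.cast_pos.mpr (Fin.pos l)

lemma gridIcc_subset (l : Fin N) : gridIcc l ⊆ Icc 0 1 := by
  have hN := natCast_pos_of_fin l
  refine Icc_subset_Icc (by positivity) ((div_le_one hN).mpr ?_)
  exact_mod_cast l.2

lemma grid_lt (l : Fin N) : (l : ℝ) / N < ((l : ℝ) + 1) / N :=
  div_lt_div_of_pos_right (lt_add_one _) (natCast_pos_of_fin l)

lemma grid_le_of_lt {l l' : Fin N} (h : l < l') : ((l : ℝ) + 1) / N ≤ (l' : ℝ) / N :=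
  div_le_div_of_nonneg_right (by exact_mod_cast h) (natCast_pos_of_fin l).le

lemma exists_mem_gridIcc (hN : N ≠ 0) {t : ℝ} (ht : t ∈ Icc (0 : ℝ) 1) :
    ∃ l : Fin N, t ∈ gridIcc l := by
  have hN' : (0 : ℝ) < N := Nat.cast_pos.mpr (Nat.pos_of_ne_zero hN)
  rcases ht.2.eq_or_lt with rfl | ht1
  · have hlast : ((N - 1 : ℕ) : ℝ) + 1 = N := by exact_mod_cast Nat.succ_pred hN
    refine ⟨⟨N - 1, by omega⟩, (div_le_one hN').mpr (by linarith), ?_⟩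
    simp only [hlast, div_self hN'.ne', le_refl]
  · have h0 : 0 ≤ t * N := mul_nonneg ht.1 hN'.le
    refine ⟨⟨⌊t * N⌋₊, (Nat.floor_lt h0).mpr (by nlinarith)⟩, ?_, ?_⟩
    · exact (div_le_iff₀ hN').mpr (Nat.floor_le h0)
    · exact (le_div_iff₀ hN').mpr (Nat.lt_floor_add_one _).le

lemma eventually_forall_gridIcc_mapsTo {X : Type*} [TopologicalSpace X] {h : ℝ → X}
    (hh : Continuous h) {𝒰 : Finset (Set X)} (h𝒰 : IsOpenCoverOn univ 𝒰) :
    ∀ᶠ N : ℕ in atTop, ∀ l : Fin N, ∃ U ∈ 𝒰, MapsTo h (gridIcc l) U := by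
  obtain ⟨δ, hδ, hball⟩ := lebesgue_number_lemma_of_metric (s := Icc (0 : ℝ) 1) isCompact_Icc
    (c := fun U : 𝒰 => h ⁻¹' U) (fun U => (h𝒰.1 U U.2).preimage hh) fun t _ => by
      obtain ⟨U, hU, ht⟩ := h𝒰.2 (mem_univ (h t))
      exact mem_iUnion.mpr ⟨⟨U, hU⟩, ht⟩
  filter_upwards [tendsto_one_div_atTop_nhds_zero_nat.eventually (gt_mem_nhds hδ)] with N hN l
  obtain ⟨U, hU⟩ := hball _ (gridIcc_subset l (left_mem_Icc.mpr (grid_lt l).le))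
  refine ⟨U, U.2, fun t ht => hU ?_⟩
  have ht2 := ht.2
  rw [add_div] at ht2
  rw [Metric.mem_ball, Real.dist_eq, abs_of_nonneg (sub_nonneg.mpr ht.1)]
  linarith

end Grid

lemma card_le_two_of_forall_not_lt_lt {α β : Type*} [LinearOrder β] {T : Finset α} {v : α → β}
    (hv : InjOn v T) (h : ∀ a ∈ T, ∀ b ∈ T, ∀ c ∈ T, v a < v b → ¬ v b < v c) : T.card ≤ 2 := by
  classical
  rcases T.eq_empty_or_nonempty with rfl | hne
  · simp
  obtain ⟨a, ha, hmin⟩ := T.exists_min_image v hne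
  obtain ⟨c, hc, hmax⟩ := T.exists_max_image v hne
  refine (Finset.card_le_card fun b hb => ?_).trans (Finset.card_le_two (a := a) (b := c))
  rw [Finset.mem_insert, Finset.mem_singleton]
  by_contra! hne
  exact h a ha b hb c hc ((hmin b hb).lt_of_ne fun he => hne.1 (hv hb ha he.symm))
    ((hmax b hb).lt_of_ne fun he => hne.2 (hv hb hc he))

section Cells

variable {X ι : Type*} {φ : ι → ℝ → X} {N : ℕ}

/-- The piece of the edge `j.1` with parameters in the grid interval `j.2`. -/
def edgeCell (φ : ι → ℝ → X) (N : ℕ) (j : ι × Fin N) : Set X :=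
  φ j.1 '' gridIcc j.2

/-- The part of the cell `j` covered by `g '' C`: the transition of the automaton whose words are
the itineraries of `g`. -/
def cellStep (φ : ι → ℝ → X) (N : ℕ) (g : X → X) (C : Set X) (j : ι × Fin N) : Set X :=
  g '' C ∩ edgeCell φ N j

lemma edgeCell_nonempty (j : ι × Fin N) : (edgeCell φ N j).Nonempty :=
  (nonempty_Icc.mpr (grid_lt j.2).le).image _

variable [TopologicalSpace X] {r : ι → X → ℝ} {g : X → X} {C D : Set X}

lemma IsEdge.ordConnected_setOf_mem {φ : ℝ → X} {r : X → ℝ} (h : IsEdge φ r)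
    (hX : HasPreconnectedInter X) (hD : IsPreconnected D) :
    OrdConnected {t : ℝ | t ∈ Icc (0 : ℝ) 1 ∧ φ t ∈ D} := by
  have himage : {t : ℝ | t ∈ Icc (0 : ℝ) 1 ∧ φ t ∈ D} = r '' (D ∩ φ '' Icc 0 1) := by
    ext t
    constructor
    · rintro ⟨ht, htD⟩
      exact ⟨φ t, ⟨htD, mem_image_of_mem φ ht⟩, h.coord_param t ht⟩
    · rintro ⟨_, ⟨hxD, s, hs, rfl⟩, rfl⟩
      rw [h.coord_param s hs]
      exact ⟨hs, hxD⟩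
  rw [himage]
  have hedge : IsPreconnected (φ '' Icc 0 1) :=
    isPreconnected_Icc.image φ h.continuous_param.continuousOn
  exact ((hX _ _ hD hedge).image r h.continuous_coord.continuousOn).ordConnected

lemma isPreconnected_edgeCell (hφ : ∀ i, Continuous (φ i)) (j : ι × Fin N) :
    IsPreconnected (edgeCell φ N j) :=
  isPreconnected_Icc.image _ (hφ j.1).continuousOn

lemma isPreconnected_cellStep (hX : HasPreconnectedInter X) (hφ : ∀ i, Continuous (φ i))
    (hg : Continuous g) (hC : IsPreconnected C) (j : ι × Fin N) :
    IsPreconnected (cellStep φ N g C j) :=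
  hX _ _ (hC.image g hg.continuousOn) (isPreconnected_edgeCell hφ j)

lemma exists_mem_edgeCell (hE : IsEdgeSystem φ r) (hN : N ≠ 0) (x : X) :
    ∃ j, x ∈ edgeCell φ N j := by
  obtain ⟨i, t, ht, rfl⟩ := hE.exists_eq x
  obtain ⟨l, hl⟩ := exists_mem_gridIcc hN ht
  exact ⟨(i, l), mem_image_of_mem _ hl⟩

lemma ncard_setOf_partial_cell_le [Finite ι] (hE : ∀ i, IsEdge (φ i) (r i))
    (hX : HasPreconnectedInter X) (hD : IsPreconnected D) :
    {j | (D ∩ edgeCell φ N j).Nonempty ∧ D ∩ edgeCell φ N j ≠ edgeCell φ N j}.ncard ≤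
      2 * Nat.card ι := by
  classical
  have := Fintype.ofFinite ι
  set S := {j | (D ∩ edgeCell φ N j).Nonempty ∧ D ∩ edgeCell φ N j ≠ edgeCell φ N j}
  rw [ncard_eq_toFinset_card S, Nat.card_eq_fintype_card]
  refine (Finset.card_le_mul_card_image (f := Prod.fst) _ 2 fun i _ => ?_).trans
    (Nat.mul_le_mul_left _ (Finset.card_le_univ _))
  refine card_le_two_of_forall_not_lt_lt (v := Prod.snd) ?_ ?_
  · exact fun j₁ h₁ j₂ h₂ h =>
      Prod.ext ((Finset.mem_filter.mp h₁).2.trans (Finset.mem_filter.mp h₂).2.symm) h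
  · rintro ⟨i₁, a⟩ ha ⟨i₂, b⟩ hb ⟨i₃, c⟩ hc hab hbc
    simp only [Finset.mem_filter, Finite.mem_toFinset] at ha hb hc
    obtain ⟨⟨⟨_, hxa, t, ht, rfl⟩, -⟩, rfl⟩ := ha
    obtain ⟨⟨-, hb⟩, rfl⟩ := hb
    obtain ⟨⟨⟨_, hxc, t', ht', rfl⟩, -⟩, rfl⟩ := hc
    refine hb (inter_eq_right.mpr ?_)
    rintro _ ⟨τ, hτ, rfl⟩
    exact (((hE _).ordConnected_setOf_mem hX hD).out ⟨gridIcc_subset a ht, hxa⟩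
      ⟨gridIcc_subset c ht', hxc⟩ ⟨ht.2.trans ((grid_le_of_lt hab).trans hτ.1),
        hτ.2.trans ((grid_le_of_lt hbc).trans ht'.1)⟩).2

lemma exists_edgeCell_mapsTo [Finite ι] (hφ : ∀ i, Continuous (φ i)) {f : X → X}
    (hf : Continuous f) {𝒰 : Finset (Set X)} (h𝒰 : IsOpenCoverOn univ 𝒰) (m : ℕ) :
    ∃ N ≠ 0, ∀ (j : ι × Fin N) (k : Fin m), ∃ U ∈ 𝒰, MapsTo f^[k] (edgeCell φ N j) U := by
  have hfine : ∀ᶠ N : ℕ in atTop, ∀ (q : ι × Fin m) (l : Fin N),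
      ∃ U ∈ 𝒰, MapsTo (f^[q.2] ∘ φ q.1) (gridIcc l) U :=
    eventually_all.mpr fun q =>
      eventually_forall_gridIcc_mapsTo ((hf.iterate q.2).comp (hφ q.1)) h𝒰
  obtain ⟨N, hN, hN0⟩ := (hfine.and (eventually_ne_atTop 0)).exists
  refine ⟨N, hN0, fun j k => ?_⟩
  obtain ⟨U, hU, hmaps⟩ := hN (j.1, k) j.2
  exact ⟨U, hU, mapsTo_image_iff.mpr hmaps⟩

lemma isAdmissible_itinerary [Fintype ι] (hX : HasPreconnectedInter X)
    (hφ : ∀ i, Continuous (φ i)) (hg : Continuous g) {x : X} {it : ℕ → ι × Fin N}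
    (hit : ∀ i, g^[i] x ∈ edgeCell φ N (it i)) (n a : ℕ) (hC : IsPreconnected C)
    (hxC : g^[a] x ∈ C) :
    IsAdmissible (cellStep φ N g) (edgeCell φ N) IsConnected Finset.univ C
      ((List.range' (a + 1) n).map it) := by
  induction n generalizing a C with
  | zero => trivial
  | succ n ih =>
    have hx : g^[a + 1] x ∈ cellStep φ N g C (it (a + 1)) :=
      ⟨⟨_, hxC, (iterate_succ_apply' g a x).symm⟩, hit _⟩
    have hC' := isPreconnected_cellStep hX hφ hg hC (it (a + 1))
    exact ⟨⟨⟨_, hx⟩, hC'⟩, fun _ => Finset.mem_univ _, ih (a + 1) hC' hx⟩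

end Cells

lemma seqCoverCountOn_le_ncard {X α : Type*} {f : X → X} {Y : Set X} {a : ℕ → ℕ}
    {𝒰 : Finset (Set X)} {n : ℕ} {code : X → α} (hfin : (code '' Y).Finite)
    (hcode : ∀ x ∈ Y, ∀ i < n, ∃ U ∈ 𝒰, ∀ y ∈ Y, code y = code x → f^[a i] y ∈ U) :
    seqCoverCountOn f Y a 𝒰 n ≤ (code '' Y).ncard := by
  have : Finite (code '' Y) := hfin
  choose U hU hmem using hcode
  choose x hxY hx using fun s : code '' Y => s.2
  let e := Finite.equivFin (code '' Y)
  refine Nat.sInf_le ⟨fun k i => U _ (hxY (e.symm k)) i i.2, fun _ _ => hU _ _ _ _, ?_⟩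
  intro y hy
  let s : code '' Y := ⟨code y, mem_image_of_mem code hy⟩
  refine mem_iUnion.mpr ⟨e s, mem_iInter.mpr fun i => hmem _ _ _ i.2 y hy ?_⟩
  rw [hx, e.symm_apply_apply]

section ItineraryCount

variable {X ι : Type*} [TopologicalSpace X] {φ : ι → ℝ → X} {r : ι → X → ℝ} {N m : ℕ}
  {f g : X → X}

lemma card_admissibleWords_cellStep_le [Fintype ι] (hE : ∀ i, IsEdge (φ i) (r i))
    (hX : HasPreconnectedInter X) (hg : Continuous g)
    (hret : HasUniqueReturns (cellStep φ N g) (edgeCell φ N)) (j : ι × Fin N)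
    (n : ℕ) :
    (admissibleWords (cellStep φ N g) (edgeCell φ N) IsConnected Finset.univ
      (edgeCell φ N j) n).card ≤
    (1 + Nat.card (ι × Fin N) * (n + 1) ^ 2) ^ Nat.card (ι × Fin N) *
      (2 * Nat.card ι + 1) ^ n := by
  have hcell (j : ι × Fin N) : IsConnected (edgeCell φ N j) :=
    ⟨edgeCell_nonempty j, isPreconnected_edgeCell (fun i => (hE i).continuous_param) j⟩
  have hbranch (C : Set X) (hC : IsConnected C) : {j | IsConnected (cellStep φ N g C j) ∧
      cellStep φ N g C j ≠ edgeCell φ N j}.ncard ≤ 2 * Nat.card ι + 1 :=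
    (ncard_le_ncard (fun _ hj => hj.imp_left IsConnected.nonempty) (toFinite _)).trans
      ((ncard_setOf_partial_cell_le hE hX (hC.isPreconnected.image g hg.continuousOn)).trans
        (Nat.le_succ _))
  simpa only [Finset.card_univ, Nat.card_eq_fintype_card] using
    card_admissibleWords_le hcell (Nat.le_add_left 1 _) hbranch hret Finset.univ (hcell j) n

theorem exists_forall_seqCoverCountOn_le [Finite ι] (hE : IsEdgeSystem φ r)
    (hX : HasPreconnectedInter X) (hf : Continuous f) (hm : 0 < m)
    (hret : ∀ N, HasUniqueReturns (cellStep φ N f^[m]) (edgeCell φ N))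
    {𝒰 : Finset (Set X)} (h𝒰 : IsOpenCoverOn univ 𝒰) :
    ∃ K : ℕ, ∀ n, seqCoverCountOn f univ id 𝒰 n ≤
      K * ((1 + K * (n + 1) ^ 2) ^ K * (2 * Nat.card ι + 1) ^ (n / m)) := by
  have := Fintype.ofFinite ι
  have hφ (i : ι) : Continuous (φ i) := (hE.isEdge i).continuous_param
  obtain ⟨N, hN, hfine⟩ := exists_edgeCell_mapsTo hφ hf h𝒰 m
  refine ⟨Nat.card (ι × Fin N), fun n => ?_⟩
  choose it hit using fun (x : X) (i : ℕ) => exists_mem_edgeCell hE hN ((f^[m])^[i] x)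
  let code (x : X) : (_ : ι × Fin N) × List (ι × Fin N) :=
    ⟨it x 0, (List.range' 1 (n / m)).map (it x)⟩
  let S := Finset.univ.sigma fun j => admissibleWords (cellStep φ N f^[m]) (edgeCell φ N)
    IsConnected Finset.univ (edgeCell φ N j) (n / m)
  have hcode_mem : code '' univ ⊆ S := by
    rintro _ ⟨x, -, rfl⟩
    refine Finset.mem_sigma.mpr ⟨Finset.mem_univ _, mem_admissibleWords.mpr ⟨by simp [code], ?_⟩⟩
    exact isAdmissible_itinerary hX hφ (hf.iterate m) (hit x) _ 0 (isPreconnected_edgeCell hφ _)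
      (hit x 0)
  have hcode_inj {x y : X} (h : code y = code x) {k : ℕ} (hk : k ≤ n / m) : it y k = it x k := by
    obtain ⟨h0, hw⟩ := Sigma.mk.inj_iff.mp h
    rcases k.eq_zero_or_pos with rfl | hk0
    · exact h0
    · exact List.map_inj_left.mp (eq_of_heq hw) k (List.mem_range'_1.mpr ⟨hk0, by omega⟩)
  calc seqCoverCountOn f univ id 𝒰 n
    _ ≤ (code '' univ).ncard := by
      refine seqCoverCountOn_le_ncard (S.finite_toSet.subset hcode_mem) fun x _ i hi => ?_
      obtain ⟨U, hU, hmaps⟩ := hfine (it x (i / m)) ⟨i % m, Nat.mod_lt i hm⟩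
      refine ⟨U, hU, fun y _ hy => ?_⟩
      rw [id, ← Nat.mod_add_div i m, iterate_add_apply, iterate_mul]
      exact hmaps (hcode_inj hy (Nat.div_le_div_right hi.le) ▸ hit y (i / m))
    _ ≤ S.card := by
      simpa only [ncard_coe_finset] using ncard_le_ncard hcode_mem S.finite_toSet
    _ ≤ Nat.card (ι × Fin N) * ((1 + Nat.card (ι × Fin N) * (n / m + 1) ^ 2) ^
          Nat.card (ι × Fin N) * (2 * Nat.card ι + 1) ^ (n / m)) := by
      rw [Finset.card_sigma, Nat.card_eq_fintype_card (α := ι × Fin N), ← Finset.card_univ,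
        ← smul_eq_mul (Finset.univ.card)]
      refine Finset.sum_le_card_nsmul _ _ _ fun j _ => ?_
      simpa only [Finset.card_univ, Nat.card_eq_fintype_card] using
        card_admissibleWords_cellStep_le hE.isEdge hX (hf.iterate m) (hret N) j (n / m)
    _ ≤ _ := by gcongr; exact Nat.div_le_self n m

end ItineraryCount

lemma log_le_of_le_mul_pow {a K c n m : ℕ} (hc : 1 ≤ c) (hn : n ≠ 0)
    (h : a ≤ K * ((1 + K * (n + 1) ^ 2) ^ K * c ^ (n / m))) :
    Real.log a ≤ (Real.log (K + 1) + K * (Real.log (K + 1) + 2 * Real.log 2)) +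
      2 * K * Real.log n + n * (Real.log c / m) := by
  have hn1 : 1 ≤ n := Nat.one_le_iff_ne_zero.mpr hn
  set b : ℕ := (K + 1) * (((K + 1) * (2 * n) ^ 2) ^ K * c ^ (n / m)) with hb
  have hab : a ≤ b := by
    refine h.trans ?_
    have hbase : 1 + K * (n + 1) ^ 2 ≤ (K + 1) * (2 * n) ^ 2 := by
      calc 1 + K * (n + 1) ^ 2
        _ ≤ (2 * n) ^ 2 + K * (2 * n) ^ 2 := by gcongr <;> nlinarith
        _ = (K + 1) * (2 * n) ^ 2 := by ring
    rw [hb]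
    gcongr
    omega
  have hn0 : (n : ℝ) ≠ 0 := Nat.cast_ne_zero.mpr hn
  have hlogb : Real.log b = (Real.log (K + 1) + K * (Real.log (K + 1) + 2 * Real.log 2)) +
      2 * K * Real.log n + (n / m : ℕ) * Real.log c := by
    rw [hb]
    push_cast
    rw [Real.log_mul (by positivity) (by positivity), Real.log_mul (by positivity) (by positivity),
      Real.log_pow, Real.log_mul (by positivity) (by positivity), Real.log_pow,
      Real.log_mul two_ne_zero hn0, Real.log_pow]
    push_cast
    ring
  calc Real.log a
    _ ≤ Real.log b := by
      rcases a.eq_zero_or_pos with rfl | ha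
      · simpa only [Nat.cast_zero, Real.log_zero] using Real.log_natCast_nonneg b
      · exact Real.log_le_log (Nat.cast_pos.mpr ha) (Nat.cast_le.mpr hab)
    _ ≤ _ := by
      rw [hlogb, mul_div_left_comm, mul_comm (Real.log c)]
      gcongr
      exact Nat.cast_div_le

lemma limsup_ofReal_log_div_le {a : ℕ → ℕ} {K c m : ℕ} (hc : 1 ≤ c)
    (h : ∀ n, a n ≤ K * ((1 + K * (n + 1) ^ 2) ^ K * c ^ (n / m))) :
    limsup (fun n : ℕ => ENNReal.ofReal (Real.log (a n) / n)) atTop ≤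
      ENNReal.ofReal (Real.log c / m) := by
  set A : ℝ := Real.log (K + 1) + K * (Real.log (K + 1) + 2 * Real.log 2)
  have hlog : Tendsto (fun n : ℕ => Real.log n / n) atTop (𝓝 0) :=
    Real.isLittleO_log_id_atTop.tendsto_div_nhds_zero.comp tendsto_natCast_atTop_atTop
  have hlim : Tendsto (fun n : ℕ => A / n + 2 * K * (Real.log n / n) + Real.log c / m) atTop
      (𝓝 (Real.log c / m)) := by
    simpa only [mul_zero, zero_add] using
      ((tendsto_const_div_atTop_nhds_zero_nat A).add (hlog.const_mul (2 * K : ℝ))).add_const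
        (Real.log c / m)
  refine (limsup_le_limsup ?_).trans_eq (ENNReal.tendsto_ofReal hlim).limsup_eq
  filter_upwards [eventually_ne_atTop 0] with n hn
  have hn0 : (0 : ℝ) < n := Nat.cast_pos.mpr (Nat.pos_of_ne_zero hn)
  refine ENNReal.ofReal_le_ofReal ((div_le_iff₀ hn0).mpr ?_)
  calc Real.log (a n)
    _ ≤ A + 2 * K * Real.log n + n * (Real.log c / m) := log_le_of_le_mul_pow hc hn (h n)
    _ = (A / n + 2 * K * (Real.log n / n) + Real.log c / m) * n := by field_simp

theorem topEntropy_eq_zero_of_hasUniqueReturns {X ι : Type*} [TopologicalSpace X] [Finite ι]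
    {φ : ι → ℝ → X} {r : ι → X → ℝ} {f : X → X} (hE : IsEdgeSystem φ r)
    (hX : HasPreconnectedInter X) (hf : Continuous f)
    (hret : ∀ m N, 0 < m → HasUniqueReturns (cellStep φ N f^[m]) (edgeCell φ N)) :
    topEntropy f = 0 := by
  have hbound (m : ℕ) : topEntropy f ≤
      ENNReal.ofReal (Real.log (2 * Nat.card ι + 1 : ℕ) / (m + 1 : ℕ)) := by
    refine iSup₂_le fun 𝒰 h𝒰 => ?_
    obtain ⟨K, hK⟩ := exists_forall_seqCoverCountOn_le hE hX hf m.succ_pos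
      (fun N => hret _ N m.succ_pos) h𝒰
    exact limsup_ofReal_log_div_le (Nat.le_add_left 1 _) hK
  have hlim : Tendsto (fun m : ℕ => ENNReal.ofReal
      (Real.log (2 * Nat.card ι + 1 : ℕ) / (m + 1 : ℕ))) atTop (𝓝 0) := by
    simpa only [ENNReal.ofReal_zero, comp_apply] using ENNReal.tendsto_ofReal
      ((tendsto_const_div_atTop_nhds_zero_nat _).comp (tendsto_add_atTop_nat 1))
  exact nonpos_iff_eq_zero.mp (ge_of_tendsto' hlim hbound)

/-! ### Homoclinic cycles -/

section FullBranch

/-- `h` maps `[a, b]` onto `[s, t]`, with either orientation, sending ends to ends and interior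
points to interior points. -/
structure IsFullBranch (h : ℝ → ℝ) (a b s t : ℝ) : Prop where
  lt : a < b
  ends : h a = s ∧ h b = t ∨ h a = t ∧ h b = s
  mapsTo_Ioo : MapsTo h (Ioo a b) (Ioo s t)

variable {h g : ℝ → ℝ} {a b c d s t : ℝ}

lemma IsFullBranch.mapsTo_Icc (hh : IsFullBranch h a b s t) (hst : s ≤ t) :
    MapsTo h (Icc a b) (Icc s t) := by
  have hends : h a ∈ Icc s t ∧ h b ∈ Icc s t := by
    rcases hh.ends with ⟨ha, hb⟩ | ⟨ha, hb⟩ <;> simp only [ha, hb, left_mem_Icc, right_mem_Icc, hst,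
      and_self]
  intro x hx
  rcases hx.1.eq_or_lt with rfl | hax
  · exact hends.1
  rcases hx.2.eq_or_lt with rfl | hxb
  · exact hends.2
  · exact Ioo_subset_Icc_self (hh.mapsTo_Ioo ⟨hax, hxb⟩)

lemma IsFullBranch.surjOn (hh : IsFullBranch h a b s t) (hc : Continuous h) :
    SurjOn h (Icc a b) (Icc s t) := by
  rcases hh.ends with ⟨rfl, rfl⟩ | ⟨rfl, rfl⟩
  · exact intermediate_value_Icc hh.lt.le hc.continuousOn
  · exact intermediate_value_Icc' hh.lt.le hc.continuousOn

lemma IsFullBranch.congr (hh : IsFullBranch h a b s t) (hg : EqOn h g (Icc a b)) :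
    IsFullBranch g a b s t where
  lt := hh.lt
  ends := by
    rw [← hg (left_mem_Icc.mpr hh.lt.le), ← hg (right_mem_Icc.mpr hh.lt.le)]
    exact hh.ends
  mapsTo_Ioo := hh.mapsTo_Ioo.congr (hg.mono Ioo_subset_Icc_self)

lemma IsFullBranch.comp (hg : IsFullBranch g c d s t) (hh : IsFullBranch h a b c d) :
    IsFullBranch (g ∘ h) a b s t where
  lt := hh.lt
  ends := by
    rcases hh.ends with ⟨ha, hb⟩ | ⟨ha, hb⟩ <;> rw [comp_apply, comp_apply, ha, hb]
    · exact hg.ends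
    · exact hg.ends.symm.imp And.symm And.symm
  mapsTo_Ioo := hg.mapsTo_Ioo.comp hh.mapsTo_Ioo

lemma IsFullBranch.neg (hh : IsFullBranch h a b s t) :
    IsFullBranch (fun x => -h x) a b (-t) (-s) where
  lt := hh.lt
  ends := by simpa only [neg_inj] using hh.ends.symm
  mapsTo_Ioo _ hx := ⟨neg_lt_neg (hh.mapsTo_Ioo hx).2, neg_lt_neg (hh.mapsTo_Ioo hx).1⟩

lemma IsFullBranch.comp_neg (hh : IsFullBranch h a b s t) :
    IsFullBranch (fun x => h (-x)) (-b) (-a) s t where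
  lt := neg_lt_neg hh.lt
  ends := by simpa only [neg_neg] using hh.ends.symm.imp And.symm And.symm
  mapsTo_Ioo _ hx := hh.mapsTo_Ioo ⟨lt_neg.mp hx.2, neg_lt.mp hx.1⟩

lemma exists_isFullBranch_of_le_of_le (hc : Continuous h) (hab : a ≤ b) (hst : s < t)
    (ha : h a ≤ s) (hb : t ≤ h b) :
    ∃ α β, Icc α β ⊆ Icc a b ∧ IsFullBranch h α β s t ∧ h α = s ∧ h β = t := by
  have isCompact_fiber (x y : ℝ) : IsCompact (Icc a x ∩ h ⁻¹' {y}) :=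
    isCompact_Icc.inter_right (isClosed_singleton.preimage hc)
  obtain ⟨β, ⟨hβ, hhβ : h β = t⟩, hβ_least⟩ := (isCompact_fiber b t).exists_isLeast
    (intermediate_value_Icc hab hc.continuousOn ⟨ha.trans hst.le, hb⟩)
  obtain ⟨α, ⟨hα, hhα : h α = s⟩, hα_greatest⟩ := (isCompact_fiber β s).exists_isGreatest
    (intermediate_value_Icc hβ.1 hc.continuousOn ⟨ha, hst.le.trans_eq hhβ.symm⟩)
  have hαβ : α < β := hα.2.lt_of_ne (by rintro rfl; exact hst.ne (hhα.symm.trans hhβ))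
  refine ⟨α, β, Icc_subset_Icc hα.1 hβ.2, ⟨hαβ, .inl ⟨hhα, hhβ⟩, fun x hx => ⟨?_, ?_⟩⟩, hhα, hhβ⟩
  · by_contra! hxs
    obtain ⟨z, hz, hhz⟩ := intermediate_value_Icc hx.2.le hc.continuousOn
      ⟨hxs, hst.le.trans_eq hhβ.symm⟩
    exact (hx.1.trans_le hz.1).not_ge
      (hα_greatest ⟨⟨hα.1.trans (hx.1.le.trans hz.1), hz.2⟩, hhz⟩)
  · by_contra! htx
    obtain ⟨z, hz, hhz⟩ := intermediate_value_Icc (hα.1.trans hx.1.le) hc.continuousOn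
      ⟨ha.trans hst.le, htx⟩
    exact (hz.2.trans_lt hx.2).not_ge
      (hβ_least ⟨⟨hz.1, hz.2.trans (hx.2.le.trans hβ.2)⟩, hhz⟩)

lemma exists_isFullBranch_of_ge_of_ge (hc : Continuous h) (hab : a ≤ b) (hst : s < t)
    (ha : t ≤ h a) (hb : h b ≤ s) :
    ∃ α β, Icc α β ⊆ Icc a b ∧ IsFullBranch h α β s t ∧ h α = t ∧ h β = s := by
  obtain ⟨α, β, hsub, hbr, hα, hβ⟩ := exists_isFullBranch_of_le_of_le hc.neg hab
    (neg_lt_neg hst) (neg_le_neg ha) (neg_le_neg hb)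
  exact ⟨α, β, hsub, by simpa only [Pi.neg_apply, neg_neg] using hbr.neg, neg_injective hα,
    neg_injective hβ⟩

lemma exists_isFullBranch_of_eq (hc : Continuous h) (hst : s < t) (ha : h a = s) (hb : h b = t) :
    ∃ α β, Icc α β ⊆ uIcc a b ∧ IsFullBranch h α β s t := by
  rcases le_total a b with hab | hba
  · obtain ⟨α, β, hsub, hbr, -⟩ := exists_isFullBranch_of_le_of_le hc hab hst ha.le hb.ge
    exact ⟨α, β, by rwa [uIcc_of_le hab], hbr⟩
  · obtain ⟨α, β, hsub, hbr, -⟩ := exists_isFullBranch_of_ge_of_ge hc hba hst hb.ge ha.le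
    exact ⟨α, β, by rwa [uIcc_of_ge hba], hbr⟩

lemma IsFullBranch.exists_subbranch (hh : IsFullBranch h a b s t) (hc : Continuous h)
    (hcd : c < d) (hsub : Icc c d ⊆ Icc s t) :
    ∃ α β, Icc α β ⊆ Icc a b ∧ IsFullBranch h α β c d := by
  obtain ⟨x, hx, hhx⟩ := hh.surjOn hc (hsub (left_mem_Icc.mpr hcd.le))
  obtain ⟨y, hy, hhy⟩ := hh.surjOn hc (hsub (right_mem_Icc.mpr hcd.le))
  obtain ⟨α, β, hαβ, hbr⟩ := exists_isFullBranch_of_eq hc hcd hhx hhy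
  exact ⟨α, β, hαβ.trans (uIcc_subset_Icc hx hy), hbr⟩

lemma IsFullBranch.exists_increasing_comp_self (hh : IsFullBranch h a b s t) (hc : Continuous h)
    (hsub : Icc a b ⊆ Icc s t) :
    ∃ α β, Icc α β ⊆ Icc a b ∧ IsFullBranch h α β a b ∧ h (h α) = s ∧ h (h β) = t := by
  have hsa : s ≤ a := (hsub (left_mem_Icc.mpr hh.lt.le)).1
  have hbt : b ≤ t := (hsub (right_mem_Icc.mpr hh.lt.le)).2
  rcases hh.ends with ⟨ha, hb⟩ | ⟨ha, hb⟩
  · obtain ⟨α, β, hαβ, hbr, hα, hβ⟩ := exists_isFullBranch_of_le_of_le hc hh.lt.le hh.lt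
      (ha.trans_le hsa) (hbt.trans_eq hb.symm)
    exact ⟨α, β, hαβ, hbr, by rw [hα, ha], by rw [hβ, hb]⟩
  · obtain ⟨α, β, hαβ, hbr, hα, hβ⟩ := exists_isFullBranch_of_ge_of_ge hc hh.lt.le hh.lt
      (hbt.trans_eq ha.symm) (hb.trans_le hsa)
    exact ⟨α, β, hαβ, hbr, by rw [hα, hb], by rw [hβ, ha]⟩

end FullBranch

section EscapingCycles

variable {X Y : Type*} [MetricSpace X] [MetricSpace Y] {u : X → X} {G : Set X} {p : X}

/-- Cycles of `u` with all points in `G` start arbitrarily near `p`, while the distance from `p` to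
the last point of the cycle before it closes up is bounded below. -/
def HasEscapingCycles (u : X → X) (G : Set X) (p : X) : Prop :=
  ∃ η > 0, ∀ δ > 0, ∃ y K, dist y p < δ ∧ u^[K + 1] y = y ∧ (∀ i ≤ K, u^[i] y ∈ G) ∧
    η ≤ dist (u^[K] y) p

lemma HasEscapingCycles.mono {G' : Set X} (h : HasEscapingCycles u G p) (hG : G ⊆ G') :
    HasEscapingCycles u G' p := by
  obtain ⟨η, hη, h⟩ := h
  refine ⟨η, hη, fun δ hδ => ?_⟩
  obtain ⟨y, K, hy, hK, hmem, hfar⟩ := h δ hδ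
  exact ⟨y, K, hy, hK, fun i hi => hG (hmem i hi), hfar⟩

lemma iterate_apply_of_forall_mem {X Y : Type*} {u : X → X} {W : Y → Y} {φ : X → Y} {G : Set X}
    (hW : ∀ x ∈ G, W (φ x) = φ (u x)) {x : X} {n : ℕ} (hx : ∀ i < n, u^[i] x ∈ G) :
    W^[n] (φ x) = φ (u^[n] x) := by
  induction n with
  | zero => rfl
  | succ n ih =>
    rw [iterate_succ_apply', ih fun i hi => hx i (hi.trans n.lt_succ_self),
      hW _ (hx n n.lt_succ_self), iterate_succ_apply']

lemma HasEscapingCycles.map (h : HasEscapingCycles u G p) (hp : p ∈ G) {W : Y → Y} {φ : X → Y}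
    {r : Y → X} (hφ : ContinuousAt φ p) (hr : ContinuousAt r (φ p)) (hrφ : LeftInvOn r φ G)
    (hW : ∀ x ∈ G, W (φ x) = φ (u x)) : HasEscapingCycles W (φ '' G) (φ p) := by
  obtain ⟨η, hη, h⟩ := h
  obtain ⟨ε, hε, hrε⟩ := Metric.continuousAt_iff.mp hr η hη
  refine ⟨ε, hε, fun δ hδ => ?_⟩
  obtain ⟨δ', hδ', hφδ⟩ := Metric.continuousAt_iff.mp hφ δ hδ
  obtain ⟨y, K, hy, hcycle, hmem, hfar⟩ := h δ' hδ'
  have hiter : ∀ i ≤ K + 1, W^[i] (φ y) = φ (u^[i] y) := fun i hi =>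
    iterate_apply_of_forall_mem hW fun j hj => hmem j (by omega)
  refine ⟨φ y, K, hφδ hy, by rw [hiter _ le_rfl, hcycle], fun i hi => ?_, ?_⟩
  · rw [hiter i (hi.trans K.le_succ)]
    exact mem_image_of_mem φ (hmem i hi)
  · rw [hiter K K.le_succ]
    by_contra! hlt
    have hclose := hrε hlt
    rw [hrφ (hmem K le_rfl), hrφ hp] at hclose
    exact hclose.not_ge hfar

lemma mem_chainRecurrentSet_of_mem_periodicPts {f : X → X} {x : X} (hx : x ∈ periodicPts f) :
    x ∈ chainRecurrentSet f := by
  obtain ⟨n, hn, hx⟩ := hx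
  refine fun ε hε => ⟨n, hn, fun i => f^[i] x, rfl, hx, fun i _ => ?_⟩
  simpa only [iterate_succ_apply', dist_self] using hε

lemma HasEscapingCycles.exists_forall_exists_le_dist_iterate {f : X → X} {M : ℕ}
    (h : HasEscapingCycles f^[M] G p) (hM : 0 < M) (hp : f^[M] p = p) :
    ∃ ε > 0, ∀ δ > 0, ∃ y ∈ chainRecurrentSet f, dist y p < δ ∧
      ∃ n, ε ≤ dist (f^[n] y) (f^[n] p) := by
  obtain ⟨ε, hε, h⟩ := h
  refine ⟨ε, hε, fun δ hδ => ?_⟩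
  obtain ⟨y, K, hy, hcycle, -, hfar⟩ := h δ hδ
  rw [← iterate_mul] at hcycle
  refine ⟨y, mem_chainRecurrentSet_of_mem_periodicPts ⟨_, Nat.mul_pos hM K.succ_pos, hcycle⟩, hy,
    M * K, ?_⟩
  rwa [iterate_mul, iterate_fixed hp]

end EscapingCycles

section Homoclinic

variable {u v h : ℝ → ℝ} {a a' b b' c d p s t x α β : ℝ}

lemma exists_lt_iterate_of_forall_lt (hu : Continuous u) (hlt : ∀ x ∈ Icc a b, x < u x) :
    ∃ k, b < u^[k] a := by
  by_contra! hle
  have hab : a ≤ b := hle 0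
  have hmem (k : ℕ) : u^[k] a ∈ Icc a b := by
    induction k with
    | zero => exact left_mem_Icc.mpr hab
    | succ k ih =>
      refine ⟨?_, hle _⟩
      rw [iterate_succ_apply']
      exact ih.1.trans (hlt _ ih).le
  have hmono : Monotone fun k => u^[k] a := monotone_nat_of_le_succ fun k => by
    rw [iterate_succ_apply']
    exact (hlt _ (hmem k)).le
  have hlim := tendsto_atTop_ciSup hmono ⟨b, forall_mem_range.mpr hle⟩
  exact (hlt _ (isClosed_Icc.mem_of_tendsto hlim (.of_forall hmem))).ne'
    (isFixedPt_of_tendsto_iterate hlim hu.continuousAt)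

lemma exists_isFixedPt_forall_Ioc_lt (hu : Continuous u) (hαβ : α ≤ β) (hα : u α ≤ α)
    (hβ : β < u β) : ∃ p ∈ Ico α β, u p = p ∧ ∀ x ∈ Ioc p β, x < u x := by
  have exists_fixed {x : ℝ} (hxβ : x ≤ β) (hx : u x ≤ x) : ∃ z ∈ Icc x β, u z = z := by
    obtain ⟨z, hz, hfix⟩ := intermediate_value_Icc hxβ (hu.sub continuous_id).continuousOn
      ⟨sub_nonpos.mpr hx, sub_nonneg.mpr hβ.le⟩
    exact ⟨z, hz, sub_eq_zero.mp hfix⟩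
  obtain ⟨p, ⟨hp, hfix⟩, hgreatest⟩ := (isCompact_Icc.inter_right
    (isClosed_eq hu continuous_id) : IsCompact (Icc α β ∩ {x | u x = x})).exists_isGreatest
    (exists_fixed hαβ hα)
  refine ⟨p, ⟨hp.1, hp.2.lt_of_ne ?_⟩, hfix, fun x hx => ?_⟩
  · rintro rfl
    exact hβ.ne' hfix
  · by_contra! hux
    obtain ⟨z, hz, hzfix⟩ := exists_fixed hx.2 hux
    exact (hx.1.trans_le hz.1).not_ge
      (hgreatest ⟨⟨hp.1.trans (hx.1.le.trans hz.1), hz.2⟩, hzfix⟩)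

lemma exists_continuous_eqOn_Icc_eq_of_ge (hu : Continuous u) (hpβ : p ≤ β)
    (hge : ∀ x ∈ Icc p β, x ≤ u x) :
    ∃ v, Continuous v ∧ EqOn u v (Icc p β) ∧ (∀ x, β ≤ x → v x = u β) ∧ ∀ x, p ≤ v x := by
  refine ⟨fun x => u (projIcc p β hpβ x), hu.comp continuous_projIcc.subtype_val, fun x hx => ?_,
    fun x hx => ?_, fun x => (projIcc p β hpβ x).2.1.trans (hge _ (projIcc p β hpβ x).2)⟩
  · simp only [projIcc_of_mem hpβ hx]
  · simp only [projIcc_of_right_le hpβ hx]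

lemma iterate_lt_of_iterate_ne (hv : ∀ x, β ≤ x → v x = t) (hβ : β ≤ t) {n i : ℕ}
    (hn : v^[n] x ≠ t) (hi : i < n) : v^[i] x < β := by
  by_contra! hle
  refine hn ?_
  obtain ⟨k, rfl⟩ := Nat.exists_eq_add_of_lt hi
  rw [show i + k + 1 = k + (i + 1) by ring, iterate_add_apply, iterate_succ_apply', hv _ hle]
  exact iterate_fixed (hv t hβ) k

lemma exists_apply_iterate_eq (hu : Continuous u) (hv : Continuous v) (hp : v p = p) (hpx : p ≤ x)
    {n : ℕ} (hn : d ≤ v^[n] x) (hbr : IsFullBranch u c d s t) (hpc : p < c) (hsp : s ≤ p)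
    (hxt : x ≤ t) : ∃ y ∈ Ioc p x, u (v^[n] y) = y ∧ v^[n] y ∈ Icc c d := by
  have hpn : v^[n] p = p := iterate_fixed hp n
  obtain ⟨l, m, hlm, hbrv, -⟩ := exists_isFullBranch_of_le_of_le (hv.iterate n) hpx hbr.lt
    (hpn.trans_le hpc.le) hn
  have hcont : Continuous (u ∘ v^[n]) := hu.comp (hv.iterate n)
  obtain ⟨y, hy, hyfix⟩ := exists_mem_Icc_isFixedPt_of_surjOn hcont.continuousOn hbrv.lt.le <|
    ((hbr.comp hbrv).surjOn hcont).mono subset_rfl (hlm.trans (Icc_subset_Icc hsp hxt))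
  have hvy : v^[n] y ∈ Icc c d := hbrv.mapsTo_Icc hbr.lt.le hy
  refine ⟨y, ⟨(hlm hy).1.lt_of_ne ?_, (hlm hy).2⟩, hyfix, hvy⟩
  rintro rfl
  exact (hpc.trans_le hvy.1).ne hpn.symm

/-- Replacing `u` by the constant `u β` to the right of `β` makes every orbit which leaves `[p, β]`
halt at the fixed point `u β`, so that an orbit with another end must have stayed in `[p, β]`. -/
lemma exists_cycle_of_forall_Ioc_lt (hu : Continuous u) (hp : u p = p)
    (hlt : ∀ x ∈ Ioc p β, x < u x) (hsp : s ≤ p) (hβc : β ≤ c) (hbr : IsFullBranch u c d s (u β))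
    (hd : d ≤ u β) (hx : x ∈ Ioc p β) :
    ∃ y ∈ Ioc p x, ∃ K, u^[K + 1] y = y ∧ (∀ i < K, u^[i] y ∈ Icc p β) ∧ u^[K] y ∈ Icc c d := by
  have hpβ : p < β := hx.1.trans_le hx.2
  have hβ : β < u β := hlt β (right_mem_Ioc.mpr hpβ)
  obtain ⟨v, hv, huv, hvβ, hpv⟩ := exists_continuous_eqOn_Icc_eq_of_ge hu hpβ.le fun z hz => by
    rcases hz.1.eq_or_lt with rfl | hpz
    exacts [hp.ge, (hlt z ⟨hpz, hz.2⟩).le]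
  have hvp : v p = p := by rw [← huv (left_mem_Icc.mpr hpβ.le), hp]
  obtain ⟨k, hk⟩ := exists_lt_iterate_of_forall_lt hv (a := x) (b := β) fun z hz => by
    rw [← huv ⟨hx.1.le.trans hz.1, hz.2⟩]
    exact hlt z ⟨hx.1.trans_le hz.1, hz.2⟩
  have hvx : v^[k + 1] x = u β := by rw [iterate_succ_apply', hvβ _ hk.le]
  obtain ⟨y, hy, hyfix, hvy⟩ := exists_apply_iterate_eq hu hv hvp hx.1.le (hd.trans_eq hvx.symm) hbr
    (hpβ.trans_le hβc) hsp (hx.2.trans hβ.le)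
  have hne : v^[k + 1] y ≠ u β := fun h => by
    rw [h] at hvy hyfix
    rw [hd.antisymm hvy.2] at hbr
    rcases hbr.ends with ⟨-, hend⟩ | ⟨-, hend⟩ <;> linarith [hy.1, hy.2, hx.2]
  have hmem : ∀ i < k + 1, v^[i] y ∈ Icc p β := fun i hi => by
    refine ⟨?_, (iterate_lt_of_iterate_ne hvβ hβ.le hne hi).le⟩
    cases i with
    | zero => exact hy.1.le
    | succ i => exact (iterate_succ_apply' v i y).symm ▸ hpv _
  have hiter : ∀ i ≤ k + 1, u^[i] y = v^[i] y := fun i hi =>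
    iterate_apply_of_forall_mem (φ := id) (fun z hz => huv hz) fun j hj => hmem j (hj.trans_le hi)
  refine ⟨y, hy, k + 1, ?_, fun i hi => hiter i hi.le ▸ hmem i hi, ?_⟩
  · rw [iterate_succ_apply', hiter _ le_rfl, hyfix]
  · rwa [hiter _ le_rfl]

lemma exists_hasEscapingCycles_of_le (hu : Continuous u) (hsα : s ≤ α) (hαβ : α < β) (hβc : β ≤ c)
    (hα : u α = s) (hβ : u β = t) (hbr : IsFullBranch u c d s t) (hdt : d ≤ t) :
    ∃ p ∈ Icc α β, u p = p ∧ HasEscapingCycles u (Icc α β ∪ Icc c d) p := by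
  subst hβ
  obtain ⟨p, hp, hfix, hlt⟩ := exists_isFixedPt_forall_Ioc_lt hu hαβ.le (hα.trans_le hsα)
    (hβc.trans_lt (hbr.lt.trans_le hdt))
  have hsub : Icc p β ⊆ Icc α β := Icc_subset_Icc_left hp.1
  refine ⟨p, Ico_subset_Icc_self hp, hfix, β - p, sub_pos.mpr hp.2, fun δ hδ => ?_⟩
  obtain ⟨x, hpx, hx⟩ := exists_between (lt_min hp.2 (lt_add_of_pos_right p hδ))
  obtain ⟨hxβ, hxδ⟩ := lt_min_iff.mp hx
  obtain ⟨y, hy, K, hcycle, hmem, hK⟩ := exists_cycle_of_forall_Ioc_lt hu hfix hlt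
    (hsα.trans hp.1) hβc hbr hdt ⟨hpx, hxβ.le⟩
  refine ⟨y, K, ?_, hcycle, fun i hi => ?_, ?_⟩
  · rw [Real.dist_eq, abs_of_pos (sub_pos.mpr hy.1)]
    linarith [hy.2]
  · rcases hi.lt_or_eq with hi | rfl
    exacts [.inl (hsub (hmem i hi)), .inr hK]
  · exact (sub_le_sub_right (hβc.trans hK.1) p).trans (le_abs_self _)

lemma exists_hasEscapingCycles_of_ge (hu : Continuous u) (hβt : β ≤ t) (hαβ : α < β) (hdα : d ≤ α)
    (hα : u α = s) (hβ : u β = t) (hbr : IsFullBranch u c d s t) (hsc : s ≤ c) :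
    ∃ p ∈ Icc α β, u p = p ∧ HasEscapingCycles u (Icc α β ∪ Icc c d) p := by
  obtain ⟨p, hp, hfix, hesc⟩ := exists_hasEscapingCycles_of_le (u := fun x => -u (-x))
    (hu.comp continuous_neg).neg (neg_le_neg hβt) (neg_lt_neg hαβ) (neg_le_neg hdα)
    (by rw [neg_neg, hβ]) (by rw [neg_neg, hα]) hbr.comp_neg.neg (neg_le_neg hsc)
  have hp' : -p ∈ Icc α β := ⟨le_neg.mp hp.2, neg_le.mp hp.1⟩
  refine ⟨-p, hp', neg_eq_iff_eq_neg.mp hfix, ?_⟩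
  have himage := hesc.map (.inl hp) continuousAt_neg continuousAt_neg
    (fun x _ => neg_neg x) (W := u) (fun x _ => (neg_neg _).symm)
  simpa only [image_union, image_neg_Icc, neg_neg] using himage

theorem exists_hasEscapingCycles_comp_self (hh : Continuous h) (hbr : IsFullBranch h a b s t)
    (hbr' : IsFullBranch h a' b' s t) (hsub : Icc a b ⊆ Icc s t) (hsub' : Icc a' b' ⊆ Icc s t)
    (hdisj : Disjoint (Ioo a b) (Ioo a' b')) :
    ∃ p ∈ Icc a b ∩ h ⁻¹' (Icc a b ∪ Icc a' b'), h (h p) = p ∧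
      HasEscapingCycles (h ∘ h) (Icc a b ∩ h ⁻¹' (Icc a b ∪ Icc a' b')) p := by
  obtain ⟨α, β, hαβ, hinc, hα, hβ⟩ := hbr.exists_increasing_comp_self hh hsub
  obtain ⟨c, d, hcd, hbrcd⟩ := hbr.exists_subbranch hh hbr'.lt hsub'
  have hbr2 : IsFullBranch (h ∘ h) c d s t := hbr'.comp hbrcd
  have hG : Icc α β ⊆ Icc a b ∩ h ⁻¹' (Icc a b ∪ Icc a' b') := fun x hx =>
    ⟨hαβ hx, .inl (hinc.mapsTo_Icc hbr.lt.le hx)⟩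
  have hG' : Icc c d ⊆ Icc a b ∩ h ⁻¹' (Icc a b ∪ Icc a' b') := fun x hx =>
    ⟨hcd hx, .inr (hbrcd.mapsTo_Icc hbr'.lt.le hx)⟩
  have hst := hαβ.trans hsub
  have hst' := hcd.trans hsub
  have hdisj' : β ≤ c ∨ d ≤ α := by
    by_contra! hover
    obtain ⟨x, hx, hx'⟩ := exists_between
      (max_lt (lt_min hinc.lt hover.2) (lt_min hover.1 hbrcd.lt))
    rw [max_lt_iff] at hx
    rw [lt_min_iff] at hx'
    exact hdisj.le_bot
      ⟨hinc.mapsTo_Ioo ⟨hx.1, hx'.1⟩, hbrcd.mapsTo_Ioo ⟨hx.2, hx'.2⟩⟩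
  rcases hdisj' with hle | hge
  · obtain ⟨p, hp, hfix, hesc⟩ := exists_hasEscapingCycles_of_le (hh.comp hh)
      (hst (left_mem_Icc.mpr hinc.lt.le)).1 hinc.lt hle hα hβ hbr2
      (hst' (right_mem_Icc.mpr hbrcd.lt.le)).2
    exact ⟨p, hG hp, hfix, hesc.mono (union_subset hG hG')⟩
  · obtain ⟨p, hp, hfix, hesc⟩ := exists_hasEscapingCycles_of_ge (hh.comp hh)
      (hst (right_mem_Icc.mpr hinc.lt.le)).2 hinc.lt hge hα hβ hbr2
      (hst' (left_mem_Icc.mpr hbrcd.lt.le)).1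
    exact ⟨p, hG hp, hfix, hesc.mono (union_subset hG hG')⟩

end Homoclinic

section EdgeBranch

variable {X : Type*} {φ ψ χ : ℝ → X} {r r' r'' : X → ℝ} {F g g' : X → X} {C : Set X}
  {a a' b b' c d s t : ℝ}

/-- `g` maps the piece `φ '' [a, b]` of the edge `φ` onto the piece `ψ '' [s, t]` of the edge `ψ`
with coordinate `r`, and is a full branch in the parameters. -/
structure IsEdgeBranch (φ ψ : ℝ → X) (r : X → ℝ) (g : X → X) (a b s t : ℝ) : Prop where
  isFullBranch : IsFullBranch (fun σ => r (g (φ σ))) a b s t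
  apply_eq : ∀ σ ∈ Icc a b, g (φ σ) = ψ (r (g (φ σ)))

lemma IsEdgeBranch.comp (hg' : IsEdgeBranch ψ χ r' g' c d s t) (hg : IsEdgeBranch φ ψ r g a b c d) :
    IsEdgeBranch φ χ r' (g' ∘ g) a b s t where
  isFullBranch := (hg'.isFullBranch.comp hg.isFullBranch).congr fun σ hσ =>
    congrArg (r' ∘ g') (hg.apply_eq σ hσ).symm
  apply_eq σ hσ := by
    have hmem := hg.isFullBranch.mapsTo_Icc hg'.isFullBranch.lt.le hσ
    rw [comp_apply, hg.apply_eq σ hσ]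
    exact hg'.apply_eq _ hmem

lemma IsEdge.exists_hasEscapingCycles {X : Type*} [MetricSpace X] {φ : ℝ → X} {r : X → ℝ}
    {F : X → X} (hφ : IsEdge φ r) (hF : Continuous F) (hbr : IsEdgeBranch φ φ r F a b s t)
    (hbr' : IsEdgeBranch φ φ r F a' b' s t) (hsub : Icc a b ⊆ Icc s t)
    (hsub' : Icc a' b' ⊆ Icc s t) (hst : Icc s t ⊆ Icc 0 1)
    (hdisj : Disjoint (Ioo a b) (Ioo a' b')) :
    ∃ p G, F (F p) = p ∧ HasEscapingCycles (F ∘ F) G p := by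
  obtain ⟨p, hp, hfix, hesc⟩ := exists_hasEscapingCycles_comp_self
    (hφ.continuous_coord.comp (hF.comp hφ.continuous_param)) hbr.isFullBranch hbr'.isFullBranch
    hsub hsub' hdisj
  set h : ℝ → ℝ := r ∘ F ∘ φ
  have hFh : ∀ σ ∈ Icc a b ∪ Icc a' b', F (φ σ) = φ (h σ) := by
    rintro σ (hσ | hσ)
    exacts [hbr.apply_eq σ hσ, hbr'.apply_eq σ hσ]
  have hFFh : ∀ σ ∈ Icc a b ∩ h ⁻¹' (Icc a b ∪ Icc a' b'), (F ∘ F) (φ σ) = φ ((h ∘ h) σ) :=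
    fun σ hσ => by rw [comp_apply, hFh σ (.inl hσ.1), hFh _ hσ.2, comp_apply]
  refine ⟨φ p, _, (hFFh p hp).trans (congrArg φ hfix), hesc.map hp hφ.continuous_param.continuousAt
    hφ.continuous_coord.continuousAt (fun σ hσ => hφ.coord_param σ (hst (hsub hσ.1))) hFFh⟩

variable [TopologicalSpace X]

lemma IsEdge.exists_isEdgeBranch [T2Space X] (hφ : IsEdge φ r) (hψ : IsEdge ψ r')
    (hX : HasPreconnectedInter X) (hg : Continuous g) (hC : IsPreconnected C)
    (hCφ : C ⊆ φ '' Icc 0 1) (hst : s < t) (hsub : Icc s t ⊆ Icc 0 1)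
    (hs : ψ s ∈ g '' C) (ht : ψ t ∈ g '' C) :
    ∃ a b, Icc a b ⊆ {σ | σ ∈ Icc 0 1 ∧ φ σ ∈ C} ∧ IsEdgeBranch φ ψ r' g a b s t := by
  obtain ⟨_, hxC, hx⟩ := hs
  obtain ⟨_, hyC, hy⟩ := ht
  obtain ⟨x, hx01, rfl⟩ := hCφ hxC
  obtain ⟨y, hy01, rfl⟩ := hCφ hyC
  have hgφ : Continuous fun σ => g (φ σ) := hg.comp hφ.continuous_param
  have hh : Continuous fun σ => r' (g (φ σ)) := hψ.continuous_coord.comp hgφ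
  obtain ⟨a, b, hab, hbr⟩ := exists_isFullBranch_of_eq hh hst
    (by rw [hx, hψ.coord_param s (hsub (left_mem_Icc.mpr hst.le))])
    (by rw [hy, hψ.coord_param t (hsub (right_mem_Icc.mpr hst.le))])
  have hord := hφ.ordConnected_setOf_mem hX hC
  refine ⟨a, b, hab.trans (hord.uIcc_subset ⟨hx01, hxC⟩ ⟨hy01, hyC⟩), hbr, ?_⟩
  have hsub' : Ioo s t ⊆ Ioo 0 1 :=
    Ioo_subset_Ioo (hsub (left_mem_Icc.mpr hst.le)).1 (hsub (right_mem_Icc.mpr hst.le)).2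
  have hEqOn : EqOn (fun σ => g (φ σ)) (fun σ => ψ (r' (g (φ σ)))) (Ioo a b) := fun σ hσ =>
    (hψ.param_coord _ (hsub' (hbr.mapsTo_Ioo hσ))).symm
  rw [← closure_Ioo hbr.lt.ne]
  exact hEqOn.closure hgφ (hψ.continuous_param.comp hh)

end EdgeBranch

section Itineraries

variable {X ι : Type*} {φ : ι → ℝ → X} {r : ι → X → ℝ} {N : ℕ} {g : X → X} {C : Set X}
  {w w' : List (ι × Fin N)} {x : X} {j : ι × Fin N} {k : ι} {s t : ℝ}

/-- The points of the cell `j` with parameter in the interior of the grid interval `j.2`. -/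
def openEdgeCell (r : ι → X → ℝ) (N : ℕ) (j : ι × Fin N) : Set X :=
  r j.1 ⁻¹' Ioo ((j.2 : ℝ) / N) (((j.2 : ℝ) + 1) / N)

/-- The orbit `g x, g (g x), …` passes through the interiors of the cells listed in the word. -/
def IsOpenItinerary (r : ι → X → ℝ) (N : ℕ) (g : X → X) : List (ι × Fin N) → X → Prop
  | [], _ => True
  | j :: w, x => g x ∈ openEdgeCell r N j ∧ IsOpenItinerary r N g w (g x)

lemma edgeCell_subset_image_Icc (φ : ι → ℝ → X) (j : ι × Fin N) :
    edgeCell φ N j ⊆ φ j.1 '' Icc 0 1 :=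
  image_mono (gridIcc_subset j.2)

variable [TopologicalSpace X]

lemma IsEdgeSystem.eq_of_mem_openEdgeCell (hE : IsEdgeSystem φ r) {i j : ι × Fin N}
    (hi : x ∈ openEdgeCell r N i) (hj : x ∈ openEdgeCell r N j) : i = j := by
  have mem_Ioo {j : ι × Fin N} (hj : x ∈ openEdgeCell r N j) : r j.1 x ∈ Ioo (0 : ℝ) 1 :=
    Ioo_subset_Ioo (gridIcc_subset j.2 (left_mem_Icc.mpr (grid_lt j.2).le)).1
      (gridIcc_subset j.2 (right_mem_Icc.mpr (grid_lt j.2).le)).2 hj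
  have hedge : i.1 = j.1 := by
    by_contra hne
    have hends := hE.eq_zero_or_one i.1 j.1 hne _ (Ioo_subset_Icc_self (mem_Ioo hi)) _
      (Ioo_subset_Icc_self (mem_Ioo hj))
      (((hE.isEdge i.1).param_coord x (mem_Ioo hi)).trans
        ((hE.isEdge j.1).param_coord x (mem_Ioo hj)).symm)
    exact hends.elim (mem_Ioo hi).1.ne' (mem_Ioo hi).2.ne
  refine Prod.ext hedge (le_antisymm ?_ ?_) <;> by_contra! hlt
  · rw [openEdgeCell, mem_preimage, ← hedge] at hj
    exact (hi.1.trans hj.2).not_ge (grid_le_of_lt hlt)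
  · rw [openEdgeCell, mem_preimage, ← hedge] at hj
    exact (hj.1.trans hi.2).not_ge (grid_le_of_lt hlt)

lemma IsEdgeSystem.eq_of_isOpenItinerary (hE : IsEdgeSystem φ r) (hlen : w.length = w'.length)
    (hw : IsOpenItinerary r N g w x) (hw' : IsOpenItinerary r N g w' x) : w = w' := by
  induction w generalizing w' x with
  | nil => exact (List.length_eq_zero_iff.mp hlen.symm).symm
  | cons i w ih =>
    obtain ⟨j, w', rfl⟩ := List.exists_cons_of_length_eq_add_one hlen.symm
    rw [hE.eq_of_mem_openEdgeCell hw.1 hw'.1, ih (Nat.succ_injective hlen) hw.2 hw'.2]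

lemma IsEdge.mem_gridIcc_of_mem_edgeCell (hφ : IsEdge (φ j.1) (r j.1)) {σ : ℝ}
    (hσ : σ ∈ Icc (0 : ℝ) 1) (hmem : φ j.1 σ ∈ edgeCell φ N j) : σ ∈ gridIcc j.2 := by
  obtain ⟨τ, hτ, hτσ⟩ := hmem
  rwa [← hφ.coord_param σ hσ, ← hτσ, hφ.coord_param τ (gridIcc_subset j.2 hτ)]

lemma exists_isEdgeBranch_of_mem_foldl [T2Space X] (hE : ∀ i, IsEdge (φ i) (r i))
    (hX : HasPreconnectedInter X) (hg : Continuous g) (hst : s < t) (hsub : Icc s t ⊆ Icc 0 1)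
    (hC : IsPreconnected C)
    (hCk : C ⊆ φ k '' Icc 0 1) (hs : φ j.1 s ∈ (w ++ [j]).foldl (cellStep φ N g) C)
    (ht : φ j.1 t ∈ (w ++ [j]).foldl (cellStep φ N g) C) :
    ∃ a b, Icc a b ⊆ {σ | σ ∈ Icc 0 1 ∧ φ k σ ∈ C} ∧
      IsEdgeBranch (φ k) (φ j.1) (r j.1) g^[w.length + 1] a b s t ∧
      ∀ σ ∈ Ioo a b, IsOpenItinerary r N g w (φ k σ) := by
  induction w generalizing k C with
  | nil =>
    obtain ⟨a, b, hab, hbr⟩ := (hE k).exists_isEdgeBranch (hE j.1) hX hg hC hCk hst hsub hs.1 ht.1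
    exact ⟨a, b, hab, hbr, fun _ _ => trivial⟩
  | cons i w ih =>
    obtain ⟨c, d, hcd, hbr, hit⟩ := ih
      (isPreconnected_cellStep hX (fun i => (hE i).continuous_param) hg hC i)
      (inter_subset_right.trans (edgeCell_subset_image_Icc φ i)) hs ht
    have hlt := hbr.isFullBranch.lt
    obtain ⟨a, b, hab, hbr'⟩ := (hE k).exists_isEdgeBranch (hE i.1) hX hg hC hCk hlt
      (fun σ hσ => (hcd hσ).1) (hcd (left_mem_Icc.mpr hlt.le)).2.1
      (hcd (right_mem_Icc.mpr hlt.le)).2.1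
    refine ⟨a, b, hab, hbr.comp hbr', fun σ hσ => ?_⟩
    have hmem : r i.1 (g (φ k σ)) ∈ Ioo c d := hbr'.isFullBranch.mapsTo_Ioo hσ
    have hgrid : Icc c d ⊆ gridIcc i.2 := fun τ hτ =>
      (hE i.1).mem_gridIcc_of_mem_edgeCell (hcd hτ).1 (hcd hτ).2.2
    refine ⟨⟨(hgrid (left_mem_Icc.mpr hlt.le)).1.trans_lt hmem.1,
      hmem.2.trans_le (hgrid (right_mem_Icc.mpr hlt.le)).2⟩, ?_⟩
    rw [hbr'.apply_eq σ (Ioo_subset_Icc_self hσ)]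
    exact hit _ hmem

lemma exists_isEdgeBranch_of_foldl_eq [T2Space X] (hE : ∀ i, IsEdge (φ i) (r i))
    (hX : HasPreconnectedInter X) (hg : Continuous g)
    (hw : (w ++ [j]).foldl (cellStep φ N g) (edgeCell φ N j) = edgeCell φ N j) :
    ∃ a b, Icc a b ⊆ gridIcc j.2 ∧ IsEdgeBranch (φ j.1) (φ j.1) (r j.1) g^[w.length + 1] a b
        ((j.2 : ℝ) / N) (((j.2 : ℝ) + 1) / N) ∧
      ∀ σ ∈ Ioo a b, IsOpenItinerary r N g w (φ j.1 σ) := by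
  have hlt := grid_lt j.2
  obtain ⟨a, b, hab, hbr, hit⟩ := exists_isEdgeBranch_of_mem_foldl hE hX hg hlt
    (gridIcc_subset j.2) (isPreconnected_edgeCell (fun i => (hE i).continuous_param) j)
    (edgeCell_subset_image_Icc φ j)
    (hw.symm.subset (mem_image_of_mem _ (left_mem_Icc.mpr hlt.le)))
    (hw.symm.subset (mem_image_of_mem _ (right_mem_Icc.mpr hlt.le)))
  exact ⟨a, b, fun σ hσ => (hE j.1).mem_gridIcc_of_mem_edgeCell (hab hσ).1 (hab hσ).2, hbr, hit⟩

theorem exists_hasEscapingCycles_of_not_hasUniqueReturns {X : Type*} [MetricSpace X]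
    {φ : ι → ℝ → X} {r : ι → X → ℝ} {g : X → X} (hE : IsEdgeSystem φ r)
    (hX : HasPreconnectedInter X) (hg : Continuous g)
    (hret : ¬HasUniqueReturns (cellStep φ N g) (edgeCell φ N)) :
    ∃ M > 0, ∃ p G, g^[M] p = p ∧ HasEscapingCycles g^[M] G p := by
  simp only [HasUniqueReturns, not_forall] at hret
  obtain ⟨j, x, x', hlen, hx, hx', hne⟩ := hret
  rcases hx with rfl | ⟨w, rfl, hw⟩
  · exact absurd (List.length_eq_zero_iff.mp hlen.symm).symm hne
  rcases hx' with rfl | ⟨w', rfl, hw'⟩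
  · exact absurd (List.length_eq_zero_iff.mp hlen) hne
  simp only [List.length_append, Nat.add_right_cancel_iff] at hlen
  obtain ⟨a, b, hab, hbr, hit⟩ := exists_isEdgeBranch_of_foldl_eq hE.isEdge hX hg hw
  obtain ⟨a', b', hab', hbr', hit'⟩ := exists_isEdgeBranch_of_foldl_eq hE.isEdge hX hg hw'
  rw [← hlen] at hbr'
  have hdisj : Disjoint (Ioo a b) (Ioo a' b') := disjoint_left.mpr fun σ hσ hσ' =>
    hne (congrArg (· ++ [j]) (hE.eq_of_isOpenItinerary hlen (hit σ hσ) (hit' σ hσ')))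
  obtain ⟨p, G, hfix, hesc⟩ := (hE.isEdge j.1).exists_hasEscapingCycles (hg.iterate _) hbr hbr'
    hab hab' (gridIcc_subset j.2) hdisj
  rw [← iterate_add] at hesc
  exact ⟨_, by positivity, p, G, (iterate_add_apply g _ _ p).trans hfix, hesc⟩

end Itineraries

theorem IsTree.topEntropy_eq_zero_of_equicontinuous {X : Type u} [MetricSpace X] (hX : IsTree X)
    {f : X → X} (hf : Continuous f)
    (heq : ∀ p ∈ periodicPts f, ∀ ε > 0, ∃ δ > 0, ∀ y ∈ chainRecurrentSet f, dist y p < δ →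
      ∀ n : ℕ, dist (f^[n] y) (f^[n] p) < ε) : topEntropy f = 0 := by
  obtain ⟨Y, _, e, ι, _, φ, r, hY, hE⟩ := IsTree.exists_isFiniteRTree_isEdgeSystem hX
  have hinter : HasPreconnectedInter X :=
    .of_homeomorph e.symm fun _ _ => hY.toIsRTree.isPreconnected_inter
  refine topEntropy_eq_zero_of_hasUniqueReturns hE hinter hf fun m N hm => ?_
  by_contra hret
  obtain ⟨M, hM, p, G, hfix, hesc⟩ :=
    exists_hasEscapingCycles_of_not_hasUniqueReturns hE hinter (hf.iterate m) hret
  rw [← iterate_mul] at hfix hesc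
  have hmM := Nat.mul_pos hm hM
  obtain ⟨ε, hε, hbad⟩ := hesc.exists_forall_exists_le_dist_iterate hmM hfix
  obtain ⟨δ, hδ, hgood⟩ := heq p ⟨_, hmM, hfix⟩ ε hε
  obtain ⟨y, hy, hyp, n, hn⟩ := hbad δ hδ
  exact hn.not_gt (hgood y hy hyp n)

end TreeEntropy

/-- A tree map has zero topological entropy iff the restriction
`f|_{CR(f)}` has equicontinuous powers at every periodic point. -/
theorem topEntropy_zero_iff_equicontinuous_at_periodic {X : Type*} [MetricSpace X]
    (hX : IsTree X) (f : X → X) (hf : Continuous f) :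
    topEntropy f = 0 ↔
      ∀ p ∈ Function.periodicPts f, ∀ ε > 0, ∃ δ > 0, ∀ y ∈ chainRecurrentSet f,
        dist y p < δ → ∀ n : ℕ, dist (f^[n] y) (f^[n] p) < ε := by
  refine ⟨fun h0 p hp ε hε => ?_,
    TreeEntropy.IsTree.topEntropy_eq_zero_of_equicontinuous hX hf⟩
  by_contra! hbad
  have hpos : 0 < topEntropy f :=
    (TreeEntropy.IsTree.hasHorseshoe_of_not_equicontinuous hX hf hp hε hbad).topEntropy_pos
  exact hpos.ne' h0
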